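/- arXiv:1301.3370 — 9 statements merged into one kernel-verified Lean document; each statement's English description precedes it below -/
import Mathlib

section
/- Let k ≥ 1 and let C ⊆ ℝ^k_{≥0} be an open cone spanned by finitely many vectors in ℝ^k_{≥0}. Then for any integers s_1, …, s_k with s_i ≥ 2 for all i, the family (n_1^{−s_1} ⋯ n_k^{−s_k})_{n ∈ C ∩ ℤ^k} is summable (with the convention that a factor n_i^{−s_i} equals 1 when n_i = 0); that is, the conical zeta value ζ(C; s_1, …, s_k) is convergent. -/
/-!
Convergence already holds for the sum over the whole lattice `ℤ^k`, so the cone is irrelevant.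
The term factors as a product of functions of the single coordinates. Each factor is absolutely
summable over `ℤ`, being bounded by `1 / n ^ 2` away from `0` (`summable_abs_factor`), and a product
of absolutely summable families in separate variables is absolutely summable
(`summable_abs_prod_pi`). Restricting to the lattice points of the cone preserves summability.
-/

open scoped BigOperators

noncomputable section

/-- The open cone spanned by the vectors `v i`: all strictly positive linear
combinations of the `v i`. -/
def openCone {k m : ℕ} (v : Fin m → (Fin k → ℝ)) : Set (Fin k → ℝ) :=
  {x | ∃ a : Fin m → ℝ, (∀ i, 0 < a i) ∧ x = ∑ i, a i • v i}

/-- The set of integer lattice points lying in a subset `C` of `ℝ^k`. -/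
def latticePoints {k : ℕ} (C : Set (Fin k → ℝ)) : Set (Fin k → ℤ) :=
  {n | (fun i => (n i : ℝ)) ∈ C}

/-- The term `n₁^{-s₁} ⋯ n_k^{-s_k}` of a conical zeta value, with the convention
that a factor equals `1` when `n i = 0`. -/
def zetaTerm {k : ℕ} (s : Fin k → ℤ) (n : Fin k → ℤ) : ℝ :=
  ∏ i, if n i = 0 then 1 else ((n i : ℝ)) ^ (-(s i))

/-- A product of absolutely summable families in separate variables is absolutely summable. -/
theorem summable_abs_prod_pi {k : ℕ} (f : Fin k → ℤ → ℝ)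
    (hf : ∀ i, Summable fun n => |f i n|) :
    Summable fun n : Fin k → ℤ => ∏ i, |f i (n i)| := by
  induction k with
  | zero => exact Summable.of_finite
  | succ k ih =>
    have h := (hf 0).mul_of_nonneg (ih (fun i => f i.succ) fun i => hf i.succ)
      (fun _ => abs_nonneg _) (fun _ => Finset.prod_nonneg fun _ _ => abs_nonneg _)
    rw [← (Fin.consEquiv fun _ : Fin (k + 1) => ℤ).summable_iff]
    refine h.congr fun p => ?_
    simp [Fin.prod_univ_succ, Fin.consEquiv]

theorem summable_abs_factor (s : ℤ) (hs : 2 ≤ s) :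
    Summable fun n : ℤ => |if n = 0 then (1 : ℝ) else (n : ℝ) ^ (-s)| := by
  have h : Summable fun n : ℤ => (if n = 0 then (1 : ℝ) else 0) + 1 / (n : ℝ) ^ 2 :=
    (summable_of_finite_support
      ((Set.finite_singleton (0 : ℤ)).subset fun n hn => by
        by_contra h0
        simp_all)).add
      (Real.summable_one_div_int_pow.mpr one_lt_two)
  refine Summable.of_nonneg_of_le (fun _ => abs_nonneg _) (fun n => ?_) h
  by_cases hn : n = 0
  · simp [hn]
  · have h1 : (1 : ℝ) ≤ |(n : ℝ)| := by exact_mod_cast Int.one_le_abs hn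
    simp only [hn, if_false, zero_add]
    rw [abs_zpow, ← sq_abs, one_div, ← zpow_natCast, ← zpow_neg]
    exact zpow_le_zpow_right₀ h1 (by push_cast; omega)

/-- for an open cone `C ⊆ ℝ^k_{≥0}` (k ≥ 1) spanned by finitely many
vectors of `ℝ^k_{≥0}` and integers `s i ≥ 2`, the conical zeta value `ζ(C; s)` is
convergent, i.e. the family of its terms is summable. -/
theorem statement0 {k : ℕ} (hk : 1 ≤ k) {m : ℕ} (v : Fin m → (Fin k → ℝ))
    (hv : ∀ i j, 0 ≤ v i j) (s : Fin k → ℤ) (hs : ∀ i, 2 ≤ s i) :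
    Summable fun p : latticePoints (openCone v) => zetaTerm s p.1 := by
  have h := summable_abs_prod_pi (fun i n => if n = 0 then (1 : ℝ) else (n : ℝ) ^ (-(s i)))
    fun i => summable_abs_factor (s i) (hs i)
  have h' : Summable (zetaTerm s) := by
    refine Summable.of_abs (h.congr fun n => ?_)
    simp only [zetaTerm, Finset.abs_prod]
  exact h'.subtype _
end
end

section
/- Let n ≥ 1, let 1 ≤ k ≤ n, let σ be a permutation of {1, …, n}, and let C_{k,σ} ⊆ ℝ^n be the open cone spanned by the vectors e_{σ(1)}, e_{σ(1)} + e_{σ(2)}, …, e_{σ(1)} + ⋯ + e_{σ(k)}, where e_1, …, e_n is the standard basis of ℝ^n. Then for integers s_1, …, s_n with s_{σ(1)} ≥ 2 and s_{σ(i)} ≥ 1 for 2 ≤ i ≤ k, one has ζ(C_{k,σ}; s_1, …, s_n) = ζ(s_{σ(1)}, …, s_{σ(k)}), the multiple zeta value. -/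
/-!
A point `x` lies in the open Chen cone exactly when `x_{σ(1)} > ⋯ > x_{σ(k)} > 0` and all other
coordinates vanish (`mem_chenCone_iff`): the coordinate `x_{σ(l)}` of `∑ a_i v_i` is the tail sum
`a_l + ⋯ + a_k`, and conversely the coefficients are recovered as consecutive differences.
Hence restricting to the coordinates `σ(1), …, σ(k)` is a bijection from the lattice points of the
cone to the summation range of the multiple zeta value (`chenEquiv`). It preserves the summands,
because the vanishing coordinates contribute factors `1`. The two sums therefore agree term by
term, and no convergence argument is needed. Everything is stated for an arbitrary injection
`e : Fin k → Fin n`, applied to `e i = σ i`.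
-/

open scoped BigOperators

noncomputable section

/-- The conical zeta value `ζ(C; s)`. -/
def conicalZeta {k : ℕ} (C : Set (Fin k → ℝ)) (s : Fin k → ℤ) : ℝ :=
  ∑' p : latticePoints C, zetaTerm s p.1

/-- The multiple zeta value `ζ(s₁, …, s_k) = ∑_{n₁ > ⋯ > n_k > 0} n₁^{-s₁} ⋯ n_k^{-s_k}`. -/
def mzv {k : ℕ} (s : Fin k → ℤ) : ℝ :=
  ∑' p : {f : Fin k → ℤ // (∀ i j : Fin k, i < j → f j < f i) ∧ ∀ i, 0 < f i},
    ∏ i, ((p.1 i : ℝ)) ^ (-(s i))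

/-- Coordinates of a combination of the partial sums of basis vectors indexed by `e`: at `e l` only
the generators with index at least `l` contribute. -/
lemma chen_comb_apply {n k : ℕ} (e : Fin k → Fin n) (he : Function.Injective e)
    (a : Fin k → ℝ) (l : Fin k) :
    (∑ i, a i • (∑ l ∈ Finset.Iic i, fun j => if j = e l then (1 : ℝ) else 0)) (e l)
      = ∑ i ∈ Finset.Ici l, a i := by
  have h : Finset.Ici l = Finset.univ.filter (fun i => l ≤ i) := by ext; simp
  simp [Finset.sum_apply, he.eq_iff, h, Finset.sum_filter]

lemma chen_comb_apply_of_notMem {n k : ℕ} (e : Fin k → Fin n)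
    (a : Fin k → ℝ) (j : Fin n) (hj : j ∉ Set.range e) :
    (∑ i, a i • (∑ l ∈ Finset.Iic i, fun j => if j = e l then (1 : ℝ) else 0)) j = 0 := by
  have h : ∀ l, j ≠ e l := fun l hl => hj ⟨l, hl.symm⟩
  simp [Finset.sum_apply, h]

/-- A strictly decreasing positive sequence `y` is the sequence of tail sums of the positive
sequence `y i - y (i + 1)`, where `y` is continued by `0` past its last term. -/
lemma exists_tail_sums {k : ℕ} (y : Fin k → ℝ) (hd : ∀ i j, i < j → y j < y i)
    (hp : ∀ i, 0 < y i) :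
    ∃ a : Fin k → ℝ, (∀ i, 0 < a i) ∧ ∀ l, ∑ i ∈ Finset.Ici l, a i = y l := by
  let Y : ℕ → ℝ := fun m => if h : m < k then y ⟨m, h⟩ else 0
  refine ⟨fun i => Y i - Y (i + 1), fun i => ?_, fun l => ?_⟩
  · by_cases h : (i : ℕ) + 1 < k
    · have := hd i ⟨i + 1, h⟩ (by simp [Fin.lt_def])
      simp [Y, h, this]
    · simp [Y, h, hp i]
  · have hm : (Finset.Ici l).map Fin.valEmbedding = Finset.Ico (l : ℕ) k := by
      ext m
      simp only [Finset.mem_map, Finset.mem_Ici, Fin.valEmbedding_apply, Finset.mem_Ico]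
      constructor
      · rintro ⟨i, hi, rfl⟩
        exact ⟨hi, i.2⟩
      · rintro ⟨h1, h2⟩
        exact ⟨⟨m, h2⟩, h1, rfl⟩
    have hs : ∑ i ∈ Finset.Ici l, (Y i - Y (i + 1)) = ∑ m ∈ Finset.Ico (l : ℕ) k, (Y m - Y (m + 1)) := by
      rw [← hm, Finset.sum_map]; rfl
    have ht := Finset.sum_Ico_sub Y l.2.le
    have hneg : ∑ m ∈ Finset.Ico (l : ℕ) k, (Y m - Y (m + 1)) = Y l - Y k := by
      rw [← neg_inj, ← Finset.sum_neg_distrib]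
      simpa using ht
    rw [hs, hneg]
    simp [Y]

/-- The inequalities cutting out the open Chen cone attached to the coordinates `e`. -/
lemma mem_chenCone_iff {n k : ℕ} (e : Fin k → Fin n) (he : Function.Injective e)
    (x : Fin n → ℝ) :
    x ∈ openCone (fun i : Fin k =>
        ∑ l ∈ Finset.Iic i, fun j => if j = e l then (1 : ℝ) else 0) ↔
      ((∀ i j, i < j → x (e j) < x (e i)) ∧ ∀ i, 0 < x (e i)) ∧
        ∀ j ∉ Set.range e, x j = 0 := by
  constructor
  · rintro ⟨a, ha, rfl⟩
    refine ⟨⟨fun i j hij => ?_, fun i => ?_⟩, fun j hj => chen_comb_apply_of_notMem e a j hj⟩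
    · rw [chen_comb_apply e he, chen_comb_apply e he]
      exact Finset.sum_lt_sum_of_subset (Finset.Ici_subset_Ici.2 hij.le) (i := i) (by simp)
        (by simpa using hij) (ha i) (fun m _ _ => (ha m).le)
    · rw [chen_comb_apply e he]
      exact Finset.sum_pos (fun m _ => ha m) ⟨i, by simp⟩
  · rintro ⟨⟨hd, hp⟩, h0⟩
    obtain ⟨a, ha, hs⟩ := exists_tail_sums (fun i => x (e i)) hd hp
    refine ⟨a, ha, funext fun j => ?_⟩
    by_cases hj : j ∈ Set.range e
    · obtain ⟨l, rfl⟩ := hj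
      rw [chen_comb_apply e he, hs]
    · rw [chen_comb_apply_of_notMem e a j hj, h0 j hj]

/-- Restriction to the coordinates `e` identifies the lattice points of the open Chen cone with the
summation range of the multiple zeta value; the inverse extends by zero. -/
def chenEquiv {n k : ℕ} (e : Fin k → Fin n) (he : Function.Injective e) :
    latticePoints (openCone (fun i : Fin k =>
        ∑ l ∈ Finset.Iic i, fun j => if j = e l then (1 : ℝ) else 0)) ≃
      {f : Fin k → ℤ // (∀ i j : Fin k, i < j → f j < f i) ∧ ∀ i, 0 < f i} where
  toFun p := ⟨fun i => p.1 (e i), by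
    have := ((mem_chenCone_iff e he _).1 p.2).1
    exact_mod_cast this⟩
  invFun f := ⟨Function.extend e f.1 0, by
    refine (mem_chenCone_iff e he _).2 ⟨?_, fun j hj => ?_⟩
    · simp only [he.extend_apply]
      exact_mod_cast f.2
    · rw [Function.extend_apply' _ _ _ hj]
      simp⟩
  left_inv p := by
    have h0 := ((mem_chenCone_iff e he _).1 p.2).2
    ext j
    by_cases hj : j ∈ Set.range e
    · obtain ⟨l, rfl⟩ := hj
      simp [he.extend_apply]
    · have : p.1 j = 0 := by exact_mod_cast h0 j hj
      simp [Function.extend_apply' _ _ _ hj, this]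
  right_inv f := by
    ext i
    simp [he.extend_apply]

/-- the conical zeta value of the open Chen cone
`C_{k,σ} = ⟨e_{σ(1)}, e_{σ(1)}+e_{σ(2)}, …, e_{σ(1)}+⋯+e_{σ(k)}⟩^o ⊆ ℝ^n`
at `(s₁, …, s_n)` equals the multiple zeta value `ζ(s_{σ(1)}, …, s_{σ(k)})`,
for integers with `s_{σ(1)} ≥ 2` and `s_{σ(i)} ≥ 1` for `i ≤ k`. -/
theorem statement1 {n : ℕ} (k : ℕ) (hk1 : 1 ≤ k) (hkn : k ≤ n)
    (σ : Equiv.Perm (Fin n)) (s : Fin n → ℤ)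
    (h1 : 2 ≤ s (σ (Fin.castLE hkn ⟨0, hk1⟩)))
    (hi : ∀ i : Fin k, 1 ≤ s (σ (Fin.castLE hkn i))) :
    conicalZeta
      (openCone (fun i : Fin k =>
        ∑ l ∈ Finset.Iic i, fun j => if j = σ (Fin.castLE hkn l) then (1 : ℝ) else 0)) s
      = mzv (fun i : Fin k => s (σ (Fin.castLE hkn i))) := by
  have he : Function.Injective (fun i : Fin k => σ (Fin.castLE hkn i)) :=
    σ.injective.comp (Fin.castLE_injective hkn)
  unfold conicalZeta mzv
  rw [← (chenEquiv _ he).tsum_eq]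
  refine tsum_congr fun p => ?_
  obtain ⟨⟨-, hp⟩, h0⟩ := (mem_chenCone_iff _ he _).1 p.2
  refine (Fintype.prod_of_injective _ he _ _ (fun j hj => ?_) fun i => ?_).symm
  · exact if_pos (by exact_mod_cast h0 j hj)
  · have hne : p.1 (σ (Fin.castLE hkn i)) ≠ 0 := by exact_mod_cast (hp i).ne'
    rw [if_neg hne]
    rfl
end
end

section
/- Let k, ℓ ≥ 1 and let e_1, …, e_{k+ℓ} be the standard basis of ℝ^{k+ℓ}. For (φ, ψ) ∈ St_{k,ℓ} with common target {1, …, m}, set w_j = e_{φ^{−1}(j)} + e_{k+ψ^{−1}(j)} for 1 ≤ j ≤ m, with the convention that e_{φ^{−1}(j)} = 0 if j ∉ im(φ) and e_{k+ψ^{−1}(j)} = 0 if j ∉ im(ψ). Then the open cone spanned by e_1, e_1 + e_2, …, e_1 + ⋯ + e_k, e_{k+1}, e_{k+1} + e_{k+2}, …, e_{k+1} + ⋯ + e_{k+ℓ} equals the union over all (φ, ψ) ∈ St_{k,ℓ} of the open cones spanned by w_1, w_1 + w_2, …, w_1 + ⋯ + w_m, and these open cones are pairwise disjoint. -/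
/-!
In coordinates, the open cone spanned by `v₁, v₁ + v₂, …` consists of the combinations whose
`v_j`-coefficient is a tail sum `∑_{i ≥ j} c i` with `c i > 0`, and such tail sums are exactly the
positive strictly decreasing sequences (`exists_tail_sum_iff`). Hence the left-hand cone is the set
of vectors with two positive strictly decreasing blocks `y ∈ ℝ^k`, `z ∈ ℝ^ℓ`
(`mem_doubleChen_iff`), and the cone of `(φ, ψ)` is the set of those with `y = s ∘ φ`,
`z = s ∘ ψ` for some positive strictly decreasing `s` of length `m` (`mem_stuffleChen_iff`).

Each stuffle cone is therefore contained in the left-hand cone. Conversely, given `y` and `z`, the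
decreasing enumeration `s` of the set of all their entries determines `φ` and `ψ`
(`exists_stuffle`). Since `im φ ∪ im ψ` is everything, the values of `s` are exactly the
coordinates of the vector, so `m`, `s`, and then `φ` and `ψ`, are determined by it
(`stuffle_unique`); this is disjointness.
-/

open scoped BigOperators

noncomputable section

/-- The set `St_{k,ℓ}` of stuffles: pairs of strictly increasing maps
`φ : {1,…,k} → {1,…,m}`, `ψ : {1,…,ℓ} → {1,…,m}` with `im φ ∪ im ψ = {1,…,m}`. -/
def StufflePair (k l : ℕ) : Type :=
  Σ m : ℕ, {p : (Fin k → Fin m) × (Fin l → Fin m) //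
    StrictMono p.1 ∧ StrictMono p.2 ∧ Set.range p.1 ∪ Set.range p.2 = Set.univ}

/-- The vector `w_j = e_{φ⁻¹(j)} + e_{k+ψ⁻¹(j)} ∈ ℝ^{k+ℓ}`, with the convention that
`e_{φ⁻¹(j)} = 0` when `j ∉ im φ` (resp. for `ψ`). -/
def stuffleVec {k l : ℕ} (st : StufflePair k l) (j : Fin st.1) : Fin (k + l) → ℝ :=
  (∑ a ∈ Finset.univ.filter (fun a : Fin k => st.2.1.1 a = j),
    fun t => if t = Fin.castAdd l a then (1 : ℝ) else 0)
  + (∑ b ∈ Finset.univ.filter (fun b : Fin l => st.2.1.2 b = j),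
    fun t => if t = Fin.natAdd k b then (1 : ℝ) else 0)

/-- The generators of the Chen cone attached to a stuffle:
`w₁, w₁ + w₂, …, w₁ + ⋯ + w_m`. -/
def stuffleChen {k l : ℕ} (st : StufflePair k l) : Fin st.1 → (Fin (k + l) → ℝ) :=
  fun i => ∑ x ∈ Finset.Iic i, stuffleVec st x

/-- The generators `e₁, e₁+e₂, …, e₁+⋯+e_k, e_{k+1}, e_{k+1}+e_{k+2}, …, e_{k+1}+⋯+e_{k+ℓ}`
of the product of the two standard Chen cones inside `ℝ^{k+ℓ}`. -/
def doubleChen (k l : ℕ) : Fin (k + l) → (Fin (k + l) → ℝ) := fun i j =>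
  if (j : ℕ) ≤ (i : ℕ) ∧ ((i : ℕ) < k → (j : ℕ) < k) ∧ (k ≤ (i : ℕ) → k ≤ (j : ℕ)) then 1 else 0

/-! ### Tail sums -/

/-- The functions `j ↦ ∑_{i ≥ j} c i` with all `c i > 0` are exactly the positive strictly
decreasing ones; the `c i` are recovered as the consecutive differences. -/
lemma exists_tail_sum_iff {n : ℕ} (s : Fin n → ℝ) :
    (∃ c : Fin n → ℝ, (∀ i, 0 < c i) ∧ ∀ j, s j = ∑ i, if j ≤ i then c i else 0) ↔
      StrictAnti s ∧ ∀ j, 0 < s j := by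
  constructor
  · rintro ⟨c, hc, hs⟩
    refine ⟨fun p q hpq => ?_, fun j => ?_⟩
    · rw [hs, hs]
      refine Finset.sum_lt_sum (fun i _ => ?_) ⟨p, Finset.mem_univ _, ?_⟩
      · have := hc i
        split_ifs with h1 h2 <;>
          first | exact le_rfl | exact this.le | exact absurd (hpq.le.trans h1) h2
      · simp [hpq.not_ge, hc p]
    · rw [hs]
      refine Finset.sum_pos' (fun i _ => ?_) ⟨j, Finset.mem_univ _, ?_⟩
      · split_ifs <;> simp [(hc i).le]
      · simp [hc j]
  · rintro ⟨hs, hpos⟩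
    -- `S` extends `s` by `0`, so that the last difference needs no separate treatment.
    let S : ℕ → ℝ := fun i => if h : i < n then s ⟨i, h⟩ else 0
    have hS : ∀ i : Fin n, S i = s i := fun i => by simp [S]
    refine ⟨fun i => S i - S (i + 1), fun i => ?_, fun j => ?_⟩
    · change 0 < S i - S (i + 1)
      rw [hS, sub_pos]
      by_cases h : (i : ℕ) + 1 < n
      · simp only [S, h, dite_true]
        exact hs (Fin.lt_def.2 (Nat.lt_succ_self _))
      · simp only [S, h, dite_false]
        exact hpos i
    · have h1 : (∑ i : Fin n, if j ≤ i then S i - S (i + 1) else 0) =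
          ∑ i ∈ Finset.range n, if (j : ℕ) ≤ i then S i - S (i + 1) else 0 :=
        Fin.sum_univ_eq_sum_range (fun i => if (j : ℕ) ≤ i then S i - S (i + 1) else 0) n
      have h2 : (Finset.range n).filter (fun i => (j : ℕ) ≤ i) = Finset.Ico (j : ℕ) n := by
        ext i; simp [and_comm]
      have h3 : S n = 0 := by simp [S]
      have h4 := Finset.sum_Ico_sub S j.2.le
      have h5 : ∑ i ∈ Finset.Ico (j : ℕ) n, (S i - S (i + 1)) =
          -∑ i ∈ Finset.Ico (j : ℕ) n, (S (i + 1) - S i) := by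
        rw [← Finset.sum_neg_distrib]
        exact Finset.sum_congr rfl fun i _ => by ring
      rw [h1, ← Finset.sum_filter, h2, h5, h4, h3, hS]
      ring

/-! ### The cones in coordinates -/

lemma funext_add_iff {k l : ℕ} {x y : Fin (k + l) → ℝ} :
    x = y ↔ (∀ a, x (Fin.castAdd l a) = y (Fin.castAdd l a)) ∧
      ∀ b, x (Fin.natAdd k b) = y (Fin.natAdd k b) := by
  refine ⟨by rintro rfl; simp, fun ⟨h1, h2⟩ => funext fun t => ?_⟩
  exact Fin.addCases (motive := fun t => x t = y t) h1 h2 t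

lemma mem_doubleChen_iff {k l : ℕ} (x : Fin (k + l) → ℝ) :
    x ∈ openCone (doubleChen k l) ↔
      (StrictAnti (fun a => x (Fin.castAdd l a)) ∧ ∀ a, 0 < x (Fin.castAdd l a)) ∧
      (StrictAnti (fun b => x (Fin.natAdd k b)) ∧ ∀ b, 0 < x (Fin.natAdd k b)) := by
  have key : ∀ c : Fin (k + l) → ℝ, x = ∑ i, c i • doubleChen k l i ↔
      (∀ a, x (Fin.castAdd l a) = ∑ i, if a ≤ i then c (Fin.castAdd l i) else 0) ∧
      ∀ b, x (Fin.natAdd k b) = ∑ i, if b ≤ i then c (Fin.natAdd k i) else 0 := by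
    intro c
    have hA : ∀ a, (∑ i, c i • doubleChen k l i) (Fin.castAdd l a) =
        ∑ i, if a ≤ i then c (Fin.castAdd l i) else 0 := by
      intro a
      simp [Finset.sum_apply, Fin.sum_univ_add, doubleChen, a.2.not_ge]
    have hB : ∀ b, (∑ i, c i • doubleChen k l i) (Fin.natAdd k b) =
        ∑ i, if b ≤ i then c (Fin.natAdd k i) else 0 := by
      intro b
      have h : ∀ i : Fin k, ¬ k ≤ (i : ℕ) := fun i => i.2.not_ge
      simp [Finset.sum_apply, Fin.sum_univ_add, doubleChen, h]
    rw [funext_add_iff]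
    simp only [hA, hB]
  rw [← exists_tail_sum_iff (fun a => x (Fin.castAdd l a)),
    ← exists_tail_sum_iff (fun b => x (Fin.natAdd k b))]
  constructor
  · rintro ⟨c, hc, hx⟩
    obtain ⟨h1, h2⟩ := (key c).1 hx
    exact ⟨⟨_, fun i => hc _, h1⟩, ⟨_, fun i => hc _, h2⟩⟩
  · rintro ⟨⟨c, hc, h1⟩, ⟨d, hd, h2⟩⟩
    refine ⟨Fin.append c d, fun i => ?_, (key _).2 ⟨?_, ?_⟩⟩
    · exact Fin.addCases (motive := fun i => 0 < Fin.append c d i)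
        (fun i => by simpa using hc i) (fun i => by simpa using hd i) i
    · simpa using h1
    · simpa using h2

lemma stuffleChen_castAdd {k l : ℕ} (st : StufflePair k l) (i : Fin st.1) (a : Fin k) :
    stuffleChen st i (Fin.castAdd l a) = if st.2.1.1 a ≤ i then 1 else 0 := by
  have h : ∀ b : Fin l, Fin.castAdd l a ≠ Fin.natAdd k b := fun b => by
    simp only [ne_eq, Fin.ext_iff, Fin.val_castAdd, Fin.val_natAdd]; omega
  simp [stuffleChen, stuffleVec, Finset.sum_apply, h, Finset.sum_ite_eq]

lemma stuffleChen_natAdd {k l : ℕ} (st : StufflePair k l) (i : Fin st.1) (b : Fin l) :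
    stuffleChen st i (Fin.natAdd k b) = if st.2.1.2 b ≤ i then 1 else 0 := by
  have h : ∀ a : Fin k, Fin.natAdd k b ≠ Fin.castAdd l a := fun a => by
    simp only [ne_eq, Fin.ext_iff, Fin.val_castAdd, Fin.val_natAdd]; omega
  simp [stuffleChen, stuffleVec, Finset.sum_apply, h, Finset.sum_ite_eq]

/-- A vector lies in the cone of `(φ, ψ)` iff its two blocks are `s ∘ φ` and `s ∘ ψ` for some
positive strictly decreasing sequence `s` of length `m`. -/
lemma mem_stuffleChen_iff {k l : ℕ} (st : StufflePair k l) (x : Fin (k + l) → ℝ) :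
    x ∈ openCone (stuffleChen st) ↔
      ∃ s : Fin st.1 → ℝ, StrictAnti s ∧ (∀ j, 0 < s j) ∧
        (∀ a, x (Fin.castAdd l a) = s (st.2.1.1 a)) ∧
        ∀ b, x (Fin.natAdd k b) = s (st.2.1.2 b) := by
  have key : ∀ c : Fin st.1 → ℝ, x = ∑ i, c i • stuffleChen st i ↔
      (∀ a, x (Fin.castAdd l a) = ∑ i, if st.2.1.1 a ≤ i then c i else 0) ∧
      ∀ b, x (Fin.natAdd k b) = ∑ i, if st.2.1.2 b ≤ i then c i else 0 := by
    intro c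
    rw [funext_add_iff]
    simp [Finset.sum_apply, stuffleChen_castAdd, stuffleChen_natAdd]
  constructor
  · rintro ⟨c, hc, hx⟩
    obtain ⟨h1, h2⟩ := (key c).1 hx
    obtain ⟨h3, h4⟩ := (exists_tail_sum_iff
      (fun j => ∑ i, if j ≤ i then c i else 0)).1 ⟨c, hc, fun _ => rfl⟩
    exact ⟨_, h3, h4, h1, h2⟩
  · rintro ⟨s, hs, hpos, h1, h2⟩
    obtain ⟨c, hc, h⟩ := (exists_tail_sum_iff s).2 ⟨hs, hpos⟩
    exact ⟨c, hc, (key c).2 ⟨fun a => by rw [h1, h], fun b => by rw [h2, h]⟩⟩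

/-! ### Existence and uniqueness of the stuffle of a vector -/

/-- Joint surjectivity of `(φ, ψ)` makes the values of `s` exactly the coordinates of `x`. -/
lemma range_eq_of_blocks {k l m : ℕ} {φ : Fin k → Fin m} {ψ : Fin l → Fin m}
    (hsurj : Set.range φ ∪ Set.range ψ = Set.univ) {x : Fin (k + l) → ℝ} {s : Fin m → ℝ}
    (h1 : ∀ a, x (Fin.castAdd l a) = s (φ a)) (h2 : ∀ b, x (Fin.natAdd k b) = s (ψ b)) :
    Set.range s = Set.range x := by
  ext r
  constructor
  · rintro ⟨j, rfl⟩
    have hj : j ∈ Set.range φ ∪ Set.range ψ := hsurj ▸ Set.mem_univ j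
    rcases hj with ⟨a, rfl⟩ | ⟨b, rfl⟩
    · exact ⟨_, h1 a⟩
    · exact ⟨_, h2 b⟩
  · rintro ⟨t, rfl⟩
    exact Fin.addCases (motive := fun t => x t ∈ Set.range s)
      (fun a => ⟨_, (h1 a).symm⟩) (fun b => ⟨_, (h2 b).symm⟩) t

lemma stuffle_unique {k l : ℕ} (st st' : StufflePair k l) (x : Fin (k + l) → ℝ)
    (h : x ∈ openCone (stuffleChen st)) (h' : x ∈ openCone (stuffleChen st')) : st = st' := by
  rw [mem_stuffleChen_iff] at h h'
  obtain ⟨m, ⟨φ, ψ⟩, hφ, hψ, hsurj⟩ := st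
  obtain ⟨m', ⟨φ', ψ'⟩, hφ', hψ', hsurj'⟩ := st'
  obtain ⟨s, hs, -, h1, h2⟩ := h
  obtain ⟨s', hs', -, h1', h2'⟩ := h'
  dsimp only at *
  have hr : Set.range s = Set.range s' :=
    (range_eq_of_blocks hsurj h1 h2).trans (range_eq_of_blocks hsurj' h1' h2').symm
  have hm : m = m' := by
    have card : ∀ (n : ℕ) (u : Fin n → ℝ), StrictAnti u → (Set.range u).ncard = n := by
      intro n u hu
      rw [← Set.image_univ, Set.ncard_image_of_injective _ hu.injective, Set.ncard_univ,
        Nat.card_fin]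
    exact (card m s hs).symm.trans ((congrArg Set.ncard hr).trans (card m' s' hs'))
  subst hm
  -- Strictly decreasing sequences become strictly increasing in the order dual.
  have hss : s = s' := by
    have e := (StrictMono.range_inj (f := OrderDual.toDual ∘ s) (g := OrderDual.toDual ∘ s')
      (fun _ _ hab => hs hab) (fun _ _ hab => hs' hab)).1 hr
    exact e
  subst hss
  have e1 : φ = φ' := funext fun a => hs.injective ((h1 a).symm.trans (h1' a))
  have e2 : ψ = ψ' := funext fun b => hs.injective ((h2 b).symm.trans (h2' b))
  subst e1 e2
  rfl

/-- The stuffle of `x`: `s` enumerates the distinct coordinates of `x` in decreasing order, and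
`φ`, `ψ` send a position to the index of the coordinate found there. -/
lemma exists_stuffle {k l : ℕ} (x : Fin (k + l) → ℝ)
    (hy : StrictAnti (fun a => x (Fin.castAdd l a))) (hy0 : ∀ a, 0 < x (Fin.castAdd l a))
    (hz : StrictAnti (fun b => x (Fin.natAdd k b))) (hz0 : ∀ b, 0 < x (Fin.natAdd k b)) :
    ∃ st : StufflePair k l, x ∈ openCone (stuffleChen st) := by
  classical
  have hx0 : ∀ t, 0 < x t := fun t => Fin.addCases (motive := fun t => 0 < x t) hy0 hz0 t
  let T : Finset ℝ := Finset.univ.image x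
  let s : Fin T.card → ℝ := fun j => T.orderEmbOfFin rfl j.rev
  have hs : StrictAnti s := fun p q hpq =>
    (T.orderEmbOfFin rfl).strictMono (Fin.rev_lt_rev.2 hpq)
  have hmem : ∀ j, ∃ t, x t = s j := fun j => by
    have hj : s j ∈ Finset.univ.image x := T.orderEmbOfFin_mem rfl j.rev
    obtain ⟨t, -, ht⟩ := Finset.mem_image.1 hj
    exact ⟨t, ht⟩
  have hex : ∀ t, ∃ j, s j = x t := fun t => by
    have ht : x t ∈ Set.range (T.orderEmbOfFin rfl) := by
      rw [Finset.range_orderEmbOfFin]; simp [T]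
    obtain ⟨j, hj⟩ := ht
    exact ⟨j.rev, by simpa [s] using hj⟩
  choose f hf using hex
  have hmono : ∀ t u, x u < x t → f t < f u := fun t u h => by
    rwa [← hf, ← hf, hs.lt_iff_gt] at h
  refine ⟨⟨T.card, (fun a => f (Fin.castAdd l a), fun b => f (Fin.natAdd k b)),
    fun a b hab => hmono _ _ (hy hab), fun a b hab => hmono _ _ (hz hab), ?_⟩,
    (mem_stuffleChen_iff _ x).2 ⟨s, hs, fun j => ?_, fun a => (hf _).symm, fun b => (hf _).symm⟩⟩
  · refine Set.eq_univ_of_forall fun j => ?_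
    obtain ⟨t, ht⟩ := hmem j
    have hj : f t = j := hs.injective ((hf t).trans ht)
    subst hj
    exact Fin.addCases (motive := fun t => f t ∈ Set.range (fun a => f (Fin.castAdd l a)) ∪
      Set.range (fun b => f (Fin.natAdd k b))) (fun a => Or.inl ⟨a, rfl⟩)
      (fun b => Or.inr ⟨b, rfl⟩) t
  · obtain ⟨t, ht⟩ := hmem j
    exact ht ▸ hx0 t

/-- the open cone spanned by
`e₁, e₁+e₂, …, e₁+⋯+e_k, e_{k+1}, …, e_{k+1}+⋯+e_{k+ℓ}` is the union, over all
stuffles `(φ, ψ) ∈ St_{k,ℓ}`, of the open Chen cones spanned by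
`w₁, w₁+w₂, …, w₁+⋯+w_m` (with `w_j = e_{φ⁻¹(j)} + e_{k+ψ⁻¹(j)}`), and these
open cones are pairwise disjoint. -/
theorem statement3 (k l : ℕ) (hk : 1 ≤ k) (hl : 1 ≤ l) :
    openCone (doubleChen k l) = (⋃ st : StufflePair k l, openCone (stuffleChen st)) ∧
    (∀ st st' : StufflePair k l, st ≠ st' →
      Disjoint (openCone (stuffleChen st)) (openCone (stuffleChen st'))) := by
  refine ⟨Set.ext fun x => ?_, fun st st' hne => Set.disjoint_left.2 fun x hx hx' =>
    hne (stuffle_unique st st' x hx hx')⟩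
  rw [Set.mem_iUnion, mem_doubleChen_iff]
  constructor
  · rintro ⟨⟨hy, hy0⟩, hz, hz0⟩
    exact exists_stuffle x hy hy0 hz hz0
  · rintro ⟨st, hx⟩
    obtain ⟨s, hs, hpos, h1, h2⟩ := (mem_stuffleChen_iff st x).1 hx
    refine ⟨⟨fun a b hab => ?_, fun a => h1 a ▸ hpos _⟩, fun a b hab => ?_, fun b => h2 b ▸ hpos _⟩
    · simpa only [h1] using hs (st.2.2.1 hab)
    · simpa only [h2] using hs (st.2.2.2.1 hab)
end
end

section
/- Let k, ℓ ≥ 1 and let s_1, …, s_{k+ℓ} be positive integers with s_1 ≥ 2 and s_{k+1} ≥ 2. Then ζ(s_1, …, s_k) · ζ(s_{k+1}, …, s_{k+ℓ}) = Σ_{(φ, ψ) ∈ St_{k,ℓ}} ζ(t_1, …, t_m), where for a pair (φ, ψ) with common target {1, …, m} one sets t_j = s_{φ^{−1}(j)} + s_{k+ψ^{−1}(j)}, with the convention that the summand s_{φ^{−1}(j)} (respectively s_{k+ψ^{−1}(j)}) equals 0 when j ∉ im(φ) (respectively j ∉ im(ψ)). (Every ζ(t_1, …, t_m) occurring on the right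 is convergent since t_1 ≥ 2.) -/
/-!
The map `(φ, ψ, n) ↦ (n ∘ φ, n ∘ ψ)` is a bijection from the pairs consisting of a stuffle and a
strictly decreasing positive sequence `n` of length `m` onto the pairs of strictly decreasing
positive sequences of lengths `k` and `ℓ` (`stuffleMap_bijective`): the range of `n` has to be the
union of the two ranges, and this determines everything. The general term of the right-hand side
is carried to the product of the general terms on the left (`prod_stuffleExp`), so the identity
follows by rearranging an absolutely convergent double series.

Convergence (`summable_mzvTerm`): as `n₁` is the largest index, `n₁⁻¹ ≤ ∏ i, nᵢ ^ (-1/k)`, so the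
general term is at most `∏ i, nᵢ ^ (-(1 + 1/k))`, which is summable over all of `ℤ ^ k`.
-/

open scoped BigOperators

noncomputable section

/-- The stuffled exponents `t_j = s_{φ⁻¹(j)} + s_{k+ψ⁻¹(j)}`, with the convention that
a summand equals `0` when `j` is not in the range of `φ` (resp. `ψ`). -/
def stuffleExp {k l : ℕ} (s : Fin (k + l) → ℤ) (st : StufflePair k l) : Fin st.1 → ℤ :=
  fun j => (∑ a ∈ Finset.univ.filter (fun a : Fin k => st.2.1.1 a = j), s (Fin.castAdd l a))
    + (∑ b ∈ Finset.univ.filter (fun b : Fin l => st.2.1.2 b = j), s (Fin.natAdd k b))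

/-- The index set of `mzv`: strictly decreasing sequences of positive integers. -/
abbrev DecSeq (k : ℕ) : Type :=
  {f : Fin k → ℤ // (∀ i j : Fin k, i < j → f j < f i) ∧ ∀ i, 0 < f i}

/-- The general term of the series defining `mzv`. -/
def mzvTerm {k : ℕ} (s : Fin k → ℤ) (p : DecSeq k) : ℝ :=
  ∏ i, ((p.1 i : ℝ)) ^ (-(s i))

lemma DecSeq.strictAnti {k : ℕ} (p : DecSeq k) : StrictAnti p.1 := fun i j h => p.2.1 i j h

lemma mzvTerm_nonneg {k : ℕ} (s : Fin k → ℤ) (p : DecSeq k) : 0 ≤ mzvTerm s p :=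
  Finset.prod_nonneg fun i _ => zpow_nonneg (by exact_mod_cast (p.2.2 i).le) _

lemma summable_prod_pi {k : ℕ} {g : ℤ → ℝ} (hg : Summable g) (h0 : ∀ n, 0 ≤ g n) :
    Summable fun f : Fin k → ℤ => ∏ i, g (f i) := by
  classical
  refine summable_of_sum_le (c := ∏ _i : Fin k, ∑' n, g n)
    (fun f => Finset.prod_nonneg fun i _ => h0 _) fun u => ?_
  calc ∑ f ∈ u, ∏ i, g (f i)
      ≤ ∑ f ∈ Fintype.piFinset (fun i => u.image (fun f => f i)), ∏ i, g (f i) := by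
        refine Finset.sum_le_sum_of_subset_of_nonneg (fun f hf => ?_)
          (fun f _ _ => Finset.prod_nonneg fun i _ => h0 _)
        exact Fintype.mem_piFinset.2 fun i => Finset.mem_image_of_mem _ hf
    _ = ∏ i, ∑ n ∈ u.image (fun f => f i), g n :=
        (Finset.prod_univ_sum _ _).symm
    _ ≤ _ := Finset.prod_le_prod (fun i _ => Finset.sum_nonneg fun n _ => h0 n)
        (fun i _ => hg.sum_le_tsum _ fun n _ => h0 n)

lemma summable_mzvTerm {k : ℕ} (hk : 1 ≤ k) (s : Fin k → ℤ) (hpos : ∀ i, 1 ≤ s i)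
    (h1 : 2 ≤ s ⟨0, hk⟩) : Summable (mzvTerm s) := by
  have hk0 : (0 : ℝ) < k := by exact_mod_cast hk
  have hsum := summable_prod_pi (k := k)
    (Real.summable_abs_int_rpow (b := 1 + 1 / (k : ℝ)) (by simpa using hk0))
    (fun n => by positivity)
  refine Summable.of_nonneg_of_le (mzvTerm_nonneg s) (fun p => ?_)
    (hsum.comp_injective (Subtype.val_injective (p := fun f : Fin k → ℤ =>
      (∀ i j : Fin k, i < j → f j < f i) ∧ ∀ i, 0 < f i)))
  have hp : ∀ i, (0 : ℝ) < p.1 i := fun i => by exact_mod_cast p.2.2 i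
  have hp1 : ∀ i, (1 : ℝ) ≤ p.1 i := fun i => by exact_mod_cast p.2.2 i
  let z : Fin k := ⟨0, hk⟩
  have hz : ∀ i, (p.1 i : ℝ) ≤ p.1 z := fun i => by
    exact_mod_cast p.strictAnti.antitone (Fin.mk_le_of_le_val (Nat.zero_le _))
  -- Lower every exponent to `1`, keeping one spare factor `n₁⁻¹`.
  have step1 : mzvTerm s p ≤ (p.1 z : ℝ)⁻¹ * ∏ i, (p.1 i : ℝ)⁻¹ := by
    have hterm : ∀ i, (p.1 i : ℝ) ^ (-(s i)) ≤
        (if i = z then (p.1 z : ℝ)⁻¹ else 1) * (p.1 i : ℝ)⁻¹ := fun i => by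
      split_ifs with h
      · subst h
        rw [← mul_inv, ← pow_two, ← zpow_natCast, ← zpow_neg]
        exact zpow_le_zpow_right₀ (hp1 _) (by simpa using h1)
      · rw [one_mul, ← zpow_neg_one]
        exact zpow_le_zpow_right₀ (hp1 _) (by have := hpos i; omega)
    calc mzvTerm s p ≤ ∏ i, (if i = z then (p.1 z : ℝ)⁻¹ else 1) * (p.1 i : ℝ)⁻¹ :=
          Finset.prod_le_prod (fun i _ => zpow_nonneg (hp i).le _) fun i _ => hterm i
      _ = _ := by rw [Finset.prod_mul_distrib]; simp
  -- Distribute the spare factor evenly over the `k` indices.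
  have step2 : (p.1 z : ℝ)⁻¹ ≤ ∏ i, (p.1 i : ℝ) ^ (-(1 / (k : ℝ))) := by
    calc (p.1 z : ℝ)⁻¹ = ∏ _i : Fin k, (p.1 z : ℝ) ^ (-(1 / (k : ℝ))) := by
          rw [Finset.prod_const, Finset.card_univ, Fintype.card_fin, ← Real.rpow_natCast,
            ← Real.rpow_mul (hp z).le, ← Real.rpow_neg_one]
          congr 1
          field_simp
      _ ≤ _ := Finset.prod_le_prod (fun i _ => Real.rpow_nonneg (hp z).le _) fun i _ =>
          Real.rpow_le_rpow_of_nonpos (hp i) (hz i) (by simp)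
  calc mzvTerm s p ≤ (p.1 z : ℝ)⁻¹ * ∏ i, (p.1 i : ℝ)⁻¹ := step1
    _ ≤ (∏ i, (p.1 i : ℝ) ^ (-(1 / (k : ℝ)))) * ∏ i, (p.1 i : ℝ)⁻¹ :=
        mul_le_mul_of_nonneg_right step2
          (Finset.prod_nonneg fun i _ => inv_nonneg.2 (hp i).le)
    _ = _ := by
        rw [← Finset.prod_mul_distrib]
        refine Finset.prod_congr rfl fun i _ => ?_
        rw [abs_of_pos (hp i), ← Real.rpow_neg_one, ← Real.rpow_add (hp i)]
        congr 1
        ring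

/-- Restriction of a decreasing sequence along the two maps of a stuffle. -/
def stuffleMap (k l : ℕ) (x : Σ st : StufflePair k l, DecSeq st.1) : DecSeq k × DecSeq l :=
  (⟨x.2.1 ∘ x.1.2.1.1, fun _ _ h => x.2.2.1 _ _ (x.1.2.2.1 h), fun _ => x.2.2.2 _⟩,
   ⟨x.2.1 ∘ x.1.2.1.2, fun _ _ h => x.2.2.1 _ _ (x.1.2.2.2.1 h), fun _ => x.2.2.2 _⟩)

lemma range_eq_union {k l m : ℕ} {φ : Fin k → Fin m} {ψ : Fin l → Fin m}
    (hu : Set.range φ ∪ Set.range ψ = Set.univ) (f : Fin m → ℤ) :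
    Set.range f = Set.range (f ∘ φ) ∪ Set.range (f ∘ ψ) := by
  rw [← Set.image_univ, ← hu, Set.image_union, ← Set.range_comp, ← Set.range_comp]

lemma stuffleMap_injective (k l : ℕ) : Function.Injective (stuffleMap k l) := by
  rintro ⟨⟨m, ⟨φ, ψ⟩, hφ, hψ, hu⟩, f⟩ ⟨⟨m', ⟨φ', ψ'⟩, hφ', hψ', hu'⟩, f'⟩ h
  have e1 : f.1 ∘ φ = f'.1 ∘ φ' := congrArg (fun y => y.1.1) h
  have e2 : f.1 ∘ ψ = f'.1 ∘ ψ' := congrArg (fun y => y.2.1) h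
  change DecSeq m at f
  change DecSeq m' at f'
  have hr : Set.range f.1 = Set.range f'.1 := by
    rw [range_eq_union hu f.1, range_eq_union hu' f'.1]
    exact congrArg₂ _ (congrArg _ e1) (congrArg _ e2)
  obtain rfl : m = m' := by
    have := congrArg Set.ncard hr
    rwa [Set.ncard_range_of_injective f.strictAnti.injective,
      Set.ncard_range_of_injective f'.strictAnti.injective, Nat.card_fin, Nat.card_fin] at this
  obtain rfl : f = f' := Subtype.ext ((f.strictAnti.range_inj f'.strictAnti).1 hr)
  obtain rfl : φ = φ' := f.strictAnti.injective.comp_left e1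
  obtain rfl : ψ = ψ' := f.strictAnti.injective.comp_left e2
  rfl

lemma stuffleMap_surjective (k l : ℕ) : Function.Surjective (stuffleMap k l) := by
  classical
  rintro ⟨a, b⟩
  let T : Finset ℤ := Finset.univ.image a.1 ∪ Finset.univ.image b.1
  -- The decreasing enumeration of the union of the two ranges.
  let f : Fin T.card → ℤ := T.orderEmbOfFin rfl ∘ Fin.rev
  have hf : StrictAnti f := (T.orderEmbOfFin rfl).strictMono.comp_strictAnti Fin.rev_strictAnti
  have hmem : ∀ j, f j ∈ T := fun j => Finset.orderEmbOfFin_mem _ _ _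
  have hsurj : ∀ x ∈ T, ∃ j, f j = x := fun x hx => by
    have : x ∈ Set.range (T.orderEmbOfFin rfl) := by rwa [Finset.range_orderEmbOfFin]
    obtain ⟨j, hj⟩ := this
    exact ⟨j.rev, by simpa [f] using hj⟩
  have hT : ∀ x, x ∈ T ↔ (∃ i, a.1 i = x) ∨ ∃ i, b.1 i = x := fun x => by simp [T]
  choose φ hφ using fun i => hsurj (a.1 i) ((hT _).2 (Or.inl ⟨i, rfl⟩))
  choose ψ hψ using fun i => hsurj (b.1 i) ((hT _).2 (Or.inr ⟨i, rfl⟩))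
  have hf0 : ∀ j, 0 < f j := fun j => by
    rcases (hT _).1 (hmem j) with ⟨i, hi⟩ | ⟨i, hi⟩
    · exact hi ▸ a.2.2 i
    · exact hi ▸ b.2.2 i
  refine ⟨⟨⟨T.card, (φ, ψ), fun i j h => ?_, fun i j h => ?_, ?_⟩, ⟨f, fun i j h => hf h, hf0⟩⟩, ?_⟩
  · exact hf.lt_iff_gt.1 (by rw [hφ, hφ]; exact a.strictAnti h)
  · exact hf.lt_iff_gt.1 (by rw [hψ, hψ]; exact b.strictAnti h)
  · refine Set.eq_univ_of_forall fun j => ?_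
    rcases (hT _).1 (hmem j) with ⟨i, hi⟩ | ⟨i, hi⟩
    · exact Or.inl ⟨i, hf.injective ((hφ i).trans hi)⟩
    · exact Or.inr ⟨i, hf.injective ((hψ i).trans hi)⟩
  · exact Prod.ext (Subtype.ext (funext hφ)) (Subtype.ext (funext hψ))

lemma stuffleMap_bijective (k l : ℕ) : Function.Bijective (stuffleMap k l) :=
  ⟨stuffleMap_injective k l, stuffleMap_surjective k l⟩

lemma zpow_neg_sum {ι : Type*} {x : ℝ} (hx : x ≠ 0) (u : Finset ι) (s : ι → ℤ) :
    x ^ (-∑ i ∈ u, s i) = ∏ i ∈ u, x ^ (-(s i)) := by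
  classical
  induction u using Finset.induction_on with
  | empty => simp
  | insert i u hi ih => rw [Finset.sum_insert hi, Finset.prod_insert hi, neg_add, zpow_add₀ hx, ih]

/-- Grouping the factors `n_{φ(a)} ^ (-s_a)` by the value of `φ`. -/
lemma prod_zpow_fiber {k m : ℕ} (φ : Fin k → Fin m) (s : Fin k → ℤ) (f : DecSeq m) :
    ∏ j, (f.1 j : ℝ) ^ (-∑ a ∈ Finset.univ.filter (fun a => φ a = j), s a)
      = ∏ a, (f.1 (φ a) : ℝ) ^ (-(s a)) := by
  rw [← Finset.prod_fiberwise Finset.univ φ]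
  refine Finset.prod_congr rfl fun j _ => ?_
  rw [zpow_neg_sum (by exact_mod_cast (f.2.2 j).ne')]
  refine Finset.prod_congr rfl fun a ha => ?_
  rw [(Finset.mem_filter.1 ha).2]

lemma prod_stuffleExp {k l : ℕ} (s : Fin (k + l) → ℤ)
    (x : Σ st : StufflePair k l, DecSeq st.1) :
    mzvTerm (stuffleExp s x.1) x.2
      = mzvTerm (fun i => s (Fin.castAdd l i)) (stuffleMap k l x).1
        * mzvTerm (fun j => s (Fin.natAdd k j)) (stuffleMap k l x).2 := by
  have h0 : ∀ j, (x.2.1 j : ℝ) ≠ 0 := fun j => by exact_mod_cast (x.2.2.2 j).ne'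
  simp only [mzvTerm, stuffleExp, neg_add, zpow_add₀ (h0 _), Finset.prod_mul_distrib]
  rw [prod_zpow_fiber x.1.2.1.1 (fun i => s (Fin.castAdd l i)) x.2,
    prod_zpow_fiber x.1.2.1.2 (fun j => s (Fin.natAdd k j)) x.2]
  rfl

/-- the quasi-shuffle (stuffle) relation of multiple zeta values:
`ζ(s₁,…,s_k) · ζ(s_{k+1},…,s_{k+ℓ}) = ∑_{(φ,ψ) ∈ St_{k,ℓ}} ζ(t₁,…,t_m)`. -/
theorem statement4 (k l : ℕ) (hk : 1 ≤ k) (hl : 1 ≤ l) (s : Fin (k + l) → ℤ)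
    (hpos : ∀ i, 1 ≤ s i)
    (h1 : 2 ≤ s (Fin.castAdd l ⟨0, hk⟩)) (h2 : 2 ≤ s (Fin.natAdd k ⟨0, hl⟩)) :
    mzv (fun i : Fin k => s (Fin.castAdd l i)) * mzv (fun j : Fin l => s (Fin.natAdd k j))
      = ∑' st : StufflePair k l, mzv (stuffleExp s st) := by
  have ha := summable_mzvTerm hk (fun i => s (Fin.castAdd l i)) (fun i => hpos _) h1
  have hb := summable_mzvTerm hl (fun j => s (Fin.natAdd k j)) (fun j => hpos _) h2
  have hab := ha.mul_of_nonneg hb (mzvTerm_nonneg _) (mzvTerm_nonneg _)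
  let e := Equiv.ofBijective _ (stuffleMap_bijective k l)
  have hS : Summable fun x : Σ st : StufflePair k l, DecSeq st.1 =>
      mzvTerm (stuffleExp s x.1) x.2 :=
    (e.summable_iff.2 hab).congr fun x => (prod_stuffleExp s x).symm
  calc _ = ∑' z : DecSeq k × DecSeq l, mzvTerm (fun i => s (Fin.castAdd l i)) z.1
          * mzvTerm (fun j => s (Fin.natAdd k j)) z.2 := ha.tsum_mul_tsum hb hab
    _ = ∑' x : Σ st : StufflePair k l, DecSeq st.1, mzvTerm (stuffleExp s x.1) x.2 := by
        rw [← e.tsum_eq]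
        exact tsum_congr fun x => (prod_stuffleExp s x).symm
    _ = _ := hS.tsum_sigma
end
end

section
/- Let 𝔽 be a subfield of ℝ and let C_1, …, C_m be closed cones in ℝ^k, each spanned by finitely many vectors of 𝔽^k, all spanning the same linear subspace of ℝ^k. Then for each i there exists a subdivision {C_{ij}}_j of C_i into simplicial closed cones spanned by vectors in 𝔽^k such that any two cones C_{ij} and C_{i'j'} either coincide or intersect in a set that is a face of both. -/
/-!
The cones `C_i` all span the same space `V`. By Carathéodory's theorem each `C_i` is the union of
the simplicial cones over those bases of `V` that consist of generators of `C_i`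
(`exists_basis_cone`). The coordinate functionals of all these bases form a finite set `H`; they
take values in `F` on `F`-rational vectors of `V` (`dual_mem`).

The idea is to build one complete simplicial `F`-rational fan in `V` such that no hyperplane `u = 0`
with `u ∈ H` cuts through a cone of the fan. The starting point is the fan of orthants of some
`F`-rational basis of `V` (`orthant_isFan`). If `u` changes sign on a cone of the fan, that cone has
generators `v`, `w` with `u v > 0 > u w`; the stellar subdivision at the point
`(-u w) v + (u v) w` of the edge `{v, w}`, where `u` vanishes, is again a fan (`stellar_isFan`), and
it has fewer edges crossed by `u = 0`. So finitely many stellar subdivisions suffice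
(`exists_refinement`), and functionals dealt with before remain one-sided on the refined fan.

In the final fan each simplicial cone over one of the bases is a union of cones of the fan
(`exists_cone_through`), hence so is each `C_i`; the cones of the fan contained in `C_i` are the
required subdivision. Since two cones of the fan meet in the cone over their common generators, their
intersection is a face of both (`isFace_inter`).
-/

open scoped BigOperators

noncomputable section

/-- The closed cone spanned by the vectors `v i`: all nonnegative linear
combinations of the `v i`. -/
def closedCone {k m : ℕ} (v : Fin m → (Fin k → ℝ)) : Set (Fin k → ℝ) :=
  {x | ∃ a : Fin m → ℝ, (∀ i, 0 ≤ a i) ∧ x = ∑ i, a i • v i}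

/-- `F` is a face of the closed cone `C`: `F = C ∩ {u = 0}` for a linear functional `u`
nonnegative on `C`. -/
def IsFace {k : ℕ} (C F : Set (Fin k → ℝ)) : Prop :=
  ∃ u : (Fin k → ℝ) →ₗ[ℝ] ℝ, (∀ x ∈ C, 0 ≤ u x) ∧ F = C ∩ {x | u x = 0}

/-- `D 0, …, D (r-1)` is a subdivision of the closed cone `C`. -/
def IsSubdivision {k : ℕ} (C : Set (Fin k → ℝ)) {r : ℕ} (D : Fin r → Set (Fin k → ℝ)) :
    Prop :=
  C = (⋃ i, D i) ∧ (∀ i, Submodule.span ℝ (D i) = Submodule.span ℝ C) ∧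
    ∀ i j, i ≠ j → IsFace (D i) (D i ∩ D j) ∧ IsFace (D j) (D i ∩ D j)

/-- `C` is a simplicial closed cone spanned by vectors with entries in the
subfield `F` of `ℝ`. -/
def IsSimplicialCone (F : Subfield ℝ) {k : ℕ} (C : Set (Fin k → ℝ)) : Prop :=
  ∃ (m : ℕ) (v : Fin m → (Fin k → ℝ)), (∀ i j, v i j ∈ F) ∧
    LinearIndependent ℝ v ∧ C = closedCone v

section Helpers

open scoped Classical

variable {E : Type*} [AddCommGroup E] [Module ℝ E]

/-! ### Cones spanned by finite sets -/

/-- The closed cone spanned by a finite set of vectors. -/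
def coneOf (S : Finset E) : Set E :=
  {x | ∃ a : E → ℝ, (∀ v ∈ S, 0 ≤ a v) ∧ x = ∑ v ∈ S, a v • v}

lemma zero_mem_coneOf (S : Finset E) : (0 : E) ∈ coneOf S :=
  ⟨fun _ => 0, fun _ _ => le_rfl, by simp⟩

lemma add_mem_coneOf {S : Finset E} {x y : E} (hx : x ∈ coneOf S) (hy : y ∈ coneOf S) :
    x + y ∈ coneOf S := by
  obtain ⟨a, ha, rfl⟩ := hx
  obtain ⟨b, hb, rfl⟩ := hy
  exact ⟨fun v => a v + b v, fun v hv => add_nonneg (ha v hv) (hb v hv),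
    by simp [add_smul, Finset.sum_add_distrib]⟩

lemma smul_mem_coneOf {S : Finset E} {x : E} {c : ℝ} (hc : 0 ≤ c) (hx : x ∈ coneOf S) :
    c • x ∈ coneOf S := by
  obtain ⟨a, ha, rfl⟩ := hx
  exact ⟨fun v => c * a v, fun v hv => mul_nonneg hc (ha v hv),
    by simp [mul_smul, Finset.smul_sum]⟩

lemma sum_mem_coneOf {ι : Type*} {S : Finset E} (s : Finset ι) (f : ι → E)
    (h : ∀ i ∈ s, f i ∈ coneOf S) : ∑ i ∈ s, f i ∈ coneOf S := by
  induction s using Finset.induction_on with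
  | empty => simpa using zero_mem_coneOf S
  | insert i s hi ih =>
    rw [Finset.sum_insert hi]
    exact add_mem_coneOf (h i (by simp)) (ih fun j hj => h j (by simp [hj]))

lemma mem_coneOf_of_mem {S : Finset E} {v : E} (hv : v ∈ S) : v ∈ coneOf S :=
  ⟨fun u => if u = v then 1 else 0, fun u _ => by dsimp; split_ifs <;> norm_num,
    by simp [ite_smul, hv]⟩

lemma coneOf_subset_of_forall {S T : Finset E} (h : ∀ v ∈ S, v ∈ coneOf T) :
    coneOf S ⊆ coneOf T := by
  rintro x ⟨a, ha, rfl⟩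
  exact sum_mem_coneOf _ _ fun v hv => smul_mem_coneOf (ha v hv) (h v hv)

lemma coneOf_mono {S T : Finset E} (h : S ⊆ T) : coneOf S ⊆ coneOf T :=
  coneOf_subset_of_forall fun _ hv => mem_coneOf_of_mem (h hv)

lemma coneOf_subset_span (S : Finset E) :
    coneOf S ⊆ (Submodule.span ℝ (S : Set E) : Set E) := by
  rintro x ⟨a, -, rfl⟩
  exact Submodule.sum_mem _ fun v hv => Submodule.smul_mem _ _ (Submodule.subset_span hv)

lemma span_coneOf (S : Finset E) :
    Submodule.span ℝ (coneOf S) = Submodule.span ℝ (S : Set E) :=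
  le_antisymm (Submodule.span_le.2 (coneOf_subset_span S))
    (Submodule.span_mono fun _ hv => mem_coneOf_of_mem hv)

lemma nonneg_on_coneOf {S : Finset E} (u : E →ₗ[ℝ] ℝ) (h : ∀ v ∈ S, 0 ≤ u v)
    {x : E} (hx : x ∈ coneOf S) : 0 ≤ u x := by
  obtain ⟨a, ha, rfl⟩ := hx
  simp only [map_sum, map_smul, smul_eq_mul]
  exact Finset.sum_nonneg fun v hv => mul_nonneg (ha v hv) (h v hv)

lemma exists_of_mem_coneOf_insert {S : Finset E} {p x : E} (hx : x ∈ coneOf (insert p S)) :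
    ∃ c : ℝ, 0 ≤ c ∧ ∃ y ∈ coneOf S, x = c • p + y := by
  by_cases hp : p ∈ S
  · rw [Finset.insert_eq_of_mem hp] at hx
    exact ⟨0, le_rfl, x, hx, by simp⟩
  · obtain ⟨a, ha, rfl⟩ := hx
    rw [Finset.sum_insert hp]
    exact ⟨a p, ha p (by simp), _, ⟨a, fun v hv => ha v (by simp [hv]), rfl⟩, rfl⟩

lemma mem_coneOf_insert {S : Finset E} {p y : E} {c : ℝ} (hc : 0 ≤ c) (hy : y ∈ coneOf S) :
    c • p + y ∈ coneOf (insert p S) :=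
  add_mem_coneOf (smul_mem_coneOf hc (mem_coneOf_of_mem (by simp)))
    (coneOf_mono (Finset.subset_insert _ _) hy)

/-! ### Linear independence through functionals -/

/-- Linear independence of a finite set, phrased dually: values on `S` can be prescribed
arbitrarily by a linear functional. -/
def Indep (S : Finset E) : Prop :=
  ∀ g : E → ℝ, ∃ f : E →ₗ[ℝ] ℝ, ∀ v ∈ S, f v = g v

lemma indep_iff {S : Finset E} : Indep S ↔ LinearIndepOn ℝ id (S : Set E) := by
  constructor
  · intro h
    rw [linearIndepOn_finset_iff]
    intro a ha v hv
    obtain ⟨f, hf⟩ := h (fun u => if u = v then 1 else 0)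
    have h1 := congrArg f ha
    simp only [id, map_sum, map_smul, smul_eq_mul, map_zero] at h1
    rw [Finset.sum_congr rfl fun u hu => by rw [hf u hu]] at h1
    simpa [hv] using h1
  · intro h g
    let b := Module.Basis.extend h
    refine ⟨b.constr ℝ (fun i => g i), fun v hv => ?_⟩
    have hm : v ∈ h.extend (Set.subset_univ _) := h.subset_extend _ hv
    have := b.constr_basis ℝ (fun i => g (i : E)) ⟨v, hm⟩
    simpa [b] using this

lemma Indep.coord_unique {S : Finset E} (hS : Indep S) {a b : E → ℝ}
    (h : ∑ v ∈ S, a v • v = ∑ v ∈ S, b v • v) : ∀ v ∈ S, a v = b v := by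
  intro v hv
  obtain ⟨f, hf⟩ := hS (fun u => if u = v then 1 else 0)
  have h1 := congrArg f h
  simp only [map_sum, map_smul, smul_eq_mul] at h1
  rw [Finset.sum_congr rfl fun u hu => by rw [hf u hu]] at h1
  conv_rhs at h1 => rw [Finset.sum_congr rfl fun u hu => by rw [hf u hu]]
  simpa [hv] using h1

/-- A chosen functional dual to `b` with respect to the independent set `S`. -/
def Indep.dual {S : Finset E} (hS : Indep S) (b : E) : E →ₗ[ℝ] ℝ :=
  (hS (fun u => if u = b then 1 else 0)).choose

lemma Indep.dual_apply {S : Finset E} (hS : Indep S) (b : E) {v : E} (hv : v ∈ S) :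
    hS.dual b v = if v = b then 1 else 0 :=
  (hS (fun u => if u = b then 1 else 0)).choose_spec v hv

lemma Indep.dual_sum {S : Finset E} (hS : Indep S) (a : E → ℝ) {b : E} (hb : b ∈ S) :
    hS.dual b (∑ v ∈ S, a v • v) = a b := by
  simp only [map_sum, map_smul, smul_eq_mul]
  rw [Finset.sum_congr rfl fun u hu => by rw [hS.dual_apply b hu]]
  simp [hb]

lemma exists_coord {S : Finset E} {x : E} (hx : x ∈ Submodule.span ℝ (S : Set E)) :
    ∃ a : E → ℝ, x = ∑ v ∈ S, a v • v := by
  obtain ⟨f, -, h⟩ := Submodule.mem_span_finset.1 hx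
  exact ⟨f, h.symm⟩

lemma Indep.sum_dual {S : Finset E} (hS : Indep S) {x : E}
    (hx : x ∈ Submodule.span ℝ (S : Set E)) : x = ∑ v ∈ S, hS.dual v x • v := by
  obtain ⟨a, rfl⟩ := exists_coord hx
  exact Finset.sum_congr rfl fun v hv => by rw [hS.dual_sum a hv]

lemma Indep.mem_coneOf_iff {S : Finset E} (hS : Indep S) {x : E} :
    x ∈ coneOf S ↔ x ∈ Submodule.span ℝ (S : Set E) ∧ ∀ v ∈ S, 0 ≤ hS.dual v x := by
  constructor
  · intro hx
    refine ⟨coneOf_subset_span S hx, fun v hv => ?_⟩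
    obtain ⟨a, ha, rfl⟩ := hx
    rw [hS.dual_sum a hv]
    exact ha v hv
  · rintro ⟨hx, h⟩
    exact ⟨fun v => hS.dual v x, h, hS.sum_dual hx⟩

/-- The cone form of Carathéodory's theorem. -/
lemma caratheodory_cone {x : E} (S : Finset E) (hx : x ∈ coneOf S) :
    ∃ T ⊆ S, LinearIndepOn ℝ id (T : Set E) ∧ x ∈ coneOf T := by
  induction S using Finset.strongInduction with
  | H S ih =>
    by_cases hS : LinearIndepOn ℝ id (S : Set E)
    · exact ⟨S, subset_rfl, hS, hx⟩
    obtain ⟨g, hg, v₀, hv₀, hpos⟩ : ∃ g : E → ℝ, ∑ v ∈ S, g v • v = 0 ∧ ∃ v ∈ S, 0 < g v := by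
      rw [linearIndepOn_finset_iff] at hS
      push Not at hS
      obtain ⟨g, hg, v, hv, hne⟩ := hS
      rcases lt_or_gt_of_ne hne with h | h
      · exact ⟨fun v => - g v, by simpa using hg, v, hv, by simpa using h⟩
      · exact ⟨g, by simpa using hg, v, hv, h⟩
    obtain ⟨a, ha, rfl⟩ := hx
    -- subtract the largest multiple of the relation `g` that keeps all coefficients nonnegative
    obtain ⟨v₁, hv₁, hmin⟩ := Finset.exists_min_image (S.filter fun v => 0 < g v)
      (fun v => a v / g v) ⟨v₀, by simp [hv₀, hpos]⟩
    simp only [Finset.mem_filter] at hv₁ hmin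
    set t := a v₁ / g v₁ with ht
    have ht0 : 0 ≤ t := div_nonneg (ha _ hv₁.1) hv₁.2.le
    have hx' : ∑ v ∈ S, a v • v ∈ coneOf (S.erase v₁) := by
      refine ⟨fun v => a v - t * g v, fun v hv => ?_, ?_⟩
      · have hvS := Finset.mem_of_mem_erase hv
        rcases le_or_gt (g v) 0 with h | h
        · nlinarith [ha v hvS, mul_nonneg ht0 (neg_nonneg.2 h)]
        · have := (le_div_iff₀ h).1 (hmin v ⟨hvS, h⟩)
          linarith
      · have hz : a v₁ - t * g v₁ = 0 := by
          rw [ht, div_mul_cancel₀ _ hv₁.2.ne', sub_self]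
        have h2 : ∑ v ∈ S, (a v - t * g v) • v = ∑ v ∈ S, a v • v := by
          simp only [sub_smul, mul_smul, Finset.sum_sub_distrib, ← Finset.smul_sum, hg]
          simp
        rw [← h2, ← Finset.add_sum_erase S _ hv₁.1, hz]
        simp
    obtain ⟨T, hT, h⟩ := ih _ (Finset.erase_ssubset hv₁.1) hx'
    exact ⟨T, hT.trans (Finset.erase_subset _ _), h⟩

/-! ### Stellar subdivision of a single simplicial cone -/

section Stellar

variable {v w p : E} {α β : ℝ}

/-- Half of the criterion for membership in one of the two pieces of the stellar subdivision of
`coneOf S` at `p = α v + β w`: in the piece where `p` replaces `v`, the coordinates satisfy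
`β a_v ≤ α a_w`. -/
lemma coord_of_mem_star {S : Finset E} (hvw : v ≠ w) (hv : v ∈ S) (hw : w ∈ S) (hα : 0 < α)
    (hβ : 0 < β) (hp : p = α • v + β • w) {x : E} (hx : x ∈ coneOf (insert p (S.erase v))) :
    ∃ a : E → ℝ, (∀ u ∈ S, 0 ≤ a u) ∧ x = ∑ u ∈ S, a u • u ∧ β * a v ≤ α * a w := by
  obtain ⟨c, hc, y, ⟨d, hd, rfl⟩, rfl⟩ := exists_of_mem_coneOf_insert hx
  have hwe : w ∈ S.erase v := Finset.mem_erase.2 ⟨hvw.symm, hw⟩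
  have hdw := hd w hwe
  refine ⟨fun u => if u = v then c * α else d u + if u = w then c * β else 0, ?_, ?_, ?_⟩
  · intro u hu
    dsimp
    by_cases h : u = v
    · simp only [h, if_true]; positivity
    · have := hd u (Finset.mem_erase.2 ⟨h, hu⟩)
      simp only [h, if_false]
      split_ifs <;> positivity
  · rw [← Finset.add_sum_erase S _ hv]
    have : ∑ u ∈ S.erase v, (if u = v then c * α else d u + if u = w then c * β else 0) • u
        = ∑ u ∈ S.erase v, d u • u + (c * β) • w := by
      rw [Finset.sum_congr rfl (g := fun u => d u • u + (if u = w then c * β else 0) • u)]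
      · rw [Finset.sum_add_distrib]
        simp [ite_smul, hw, hvw.symm]
      · intro u hu
        rw [if_neg (Finset.ne_of_mem_erase hu), add_smul]
    rw [this, hp]
    simp only [if_true, smul_add, mul_smul]
    abel
  · simp only [if_true, hvw.symm, if_false]
    nlinarith [mul_nonneg hα.le hdw]

lemma mem_star_of_coord {S : Finset E} (hvw : v ≠ w) (hv : v ∈ S) (hw : w ∈ S) (hα : 0 < α)
    (hp : p = α • v + β • w) {a : E → ℝ} (ha : ∀ u ∈ S, 0 ≤ a u)
    (hle : β * a v ≤ α * a w) : ∑ u ∈ S, a u • u ∈ coneOf (insert p (S.erase v)) := by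
  have hwe : w ∈ S.erase v := Finset.mem_erase.2 ⟨hvw.symm, hw⟩
  have key : ∑ u ∈ S, a u • u = (a v / α) • p +
      ∑ u ∈ S.erase v, (a u - if u = w then β * (a v / α) else 0) • u := by
    rw [← Finset.add_sum_erase S _ hv]
    simp only [sub_smul, Finset.sum_sub_distrib]
    have : ∑ u ∈ S.erase v, (if u = w then β * (a v / α) else 0) • u
        = (β * (a v / α)) • w := by
      simp [ite_smul, hw, hvw.symm]
    rw [this, hp, smul_add, smul_smul, smul_smul, div_mul_cancel₀ _ hα.ne', mul_comm β]
    abel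
  rw [key]
  refine mem_coneOf_insert (div_nonneg (ha v hv) hα.le) ⟨_, fun u hu => ?_, rfl⟩
  have hu' := ha u (Finset.mem_of_mem_erase hu)
  split_ifs with h
  · subst h
    rw [sub_nonneg, ← mul_div_assoc, div_le_iff₀ hα]
    linarith
  · simpa using hu'

/-- Points with `β a_v = α a_w` lie in the wall separating the two pieces. -/
lemma mem_wall_of_coord {S : Finset E} (hvw : v ≠ w) (hv : v ∈ S) (hw : w ∈ S) (hα : 0 < α)
    (hp : p = α • v + β • w) {a : E → ℝ} (ha : ∀ u ∈ S, 0 ≤ a u)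
    (heq : β * a v = α * a w) :
    ∑ u ∈ S, a u • u ∈ coneOf (insert p ((S.erase v).erase w)) := by
  have hwe : w ∈ S.erase v := Finset.mem_erase.2 ⟨hvw.symm, hw⟩
  have h1 : a v / α * β = a w := by field_simp; linarith
  have key : ∑ u ∈ S, a u • u = (a v / α) • p + ∑ u ∈ (S.erase v).erase w, a u • u := by
    rw [← Finset.add_sum_erase S _ hv, ← Finset.add_sum_erase _ _ hwe, hp, smul_add, smul_smul,
      smul_smul, div_mul_cancel₀ _ hα.ne', h1]
    abel
  rw [key]
  exact mem_coneOf_insert (div_nonneg (ha v hv) hα.le)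
    ⟨a, fun u hu => ha u (Finset.mem_of_mem_erase (Finset.mem_of_mem_erase hu)), rfl⟩

lemma star_subset {S : Finset E} (hv : v ∈ S) (hw : w ∈ S) (hα : 0 < α)
    (hβ : 0 < β) (hp : p = α • v + β • w) : coneOf (insert p (S.erase v)) ⊆ coneOf S := by
  refine coneOf_subset_of_forall fun u hu => ?_
  rcases Finset.mem_insert.1 hu with rfl | hu
  · rw [hp]
    exact add_mem_coneOf (smul_mem_coneOf hα.le (mem_coneOf_of_mem hv))
      (smul_mem_coneOf hβ.le (mem_coneOf_of_mem hw))
  · exact mem_coneOf_of_mem (Finset.mem_of_mem_erase hu)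

lemma star_indep {S : Finset E} (hS : Indep S) (hvw : v ≠ w) (hv : v ∈ S) (hw : w ∈ S)
    (hα : 0 < α) (hp : p = α • v + β • w) : Indep (insert p (S.erase v)) := by
  intro g
  obtain ⟨f, hf⟩ := hS (fun u => if u = v then (g p - β * g w) / α else g u)
  refine ⟨f, fun u hu => ?_⟩
  rcases Finset.mem_insert.1 hu with rfl | hu
  · rw [hp, map_add, map_smul, map_smul, hf v hv, hf w hw, ← hp]
    simp only [if_true, hvw.symm, if_false, smul_eq_mul]
    field_simp
    ring
  · rw [hf u (Finset.mem_of_mem_erase hu), if_neg (Finset.ne_of_mem_erase hu)]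

lemma star_span {S : Finset E} (hvw : v ≠ w) (hv : v ∈ S) (hw : w ∈ S)
    (hα : 0 < α) (hp : p = α • v + β • w) :
    Submodule.span ℝ ((insert p (S.erase v) : Finset E) : Set E)
      = Submodule.span ℝ (S : Set E) := by
  apply le_antisymm
  · refine Submodule.span_le.2 fun u hu => ?_
    rcases Finset.mem_insert.1 hu with rfl | hu
    · rw [hp]
      exact Submodule.add_mem _ (Submodule.smul_mem _ _ (Submodule.subset_span hv))
        (Submodule.smul_mem _ _ (Submodule.subset_span hw))
    · exact Submodule.subset_span (Finset.mem_of_mem_erase hu)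
  · refine Submodule.span_le.2 fun u hu => ?_
    by_cases h : u = v
    · have : u = α⁻¹ • (p - β • w) := by
        rw [hp, add_sub_cancel_right, smul_smul, inv_mul_cancel₀ hα.ne', one_smul, h]
      rw [this]
      refine Submodule.smul_mem _ _ (Submodule.sub_mem _ (Submodule.subset_span (by simp))
        (Submodule.smul_mem _ _ (Submodule.subset_span ?_)))
      simp [hvw.symm, hw]
    · exact Submodule.subset_span (by simp [h]; exact Or.inr hu)

/-- If two simplicial cones meet in the cone over their common generators, then the coordinates
in one of them of a common point are supported on the common generators. -/
lemma coord_support {S T : Finset E} (hS : Indep S)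
    (hST : coneOf S ∩ coneOf T ⊆ coneOf (S ∩ T)) {a : E → ℝ} (ha : ∀ u ∈ S, 0 ≤ a u)
    (hx : ∑ u ∈ S, a u • u ∈ coneOf T) :
    (∀ u ∈ S, u ∉ T → a u = 0) ∧ ∑ u ∈ S, a u • u = ∑ u ∈ S ∩ T, a u • u := by
  obtain ⟨c, -, hc⟩ := hST ⟨⟨a, ha, rfl⟩, hx⟩
  have h0 : ∀ u ∈ S, u ∉ T → a u = 0 := by
    have : ∑ u ∈ S, a u • u = ∑ u ∈ S, (if u ∈ T then c u else 0) • u := by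
      rw [hc]
      simp [ite_smul, Finset.sum_ite_mem]
    intro u hu huT
    simpa [huT] using hS.coord_unique this u hu
  refine ⟨h0, ?_⟩
  symm
  refine Finset.sum_subset Finset.inter_subset_left fun u hu hn => ?_
  rw [h0 u hu (fun h => hn (Finset.mem_inter.2 ⟨hu, h⟩)), zero_smul]

lemma inter_old_new {S T : Finset E} (hT : Indep T)
    (hST : coneOf T ∩ coneOf S ⊆ coneOf (T ∩ S)) (hvw : v ≠ w) (hv : v ∈ T) (hw : w ∈ T)
    (hα : 0 < α) (hβ : 0 < β) (hp : p = α • v + β • w) (hS : ¬ (v ∈ S ∧ w ∈ S)) {x : E}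
    (hxS : x ∈ coneOf S) (hxT : x ∈ coneOf (insert p (T.erase v))) :
    x ∈ coneOf (S ∩ insert p (T.erase v)) := by
  obtain ⟨a, ha, rfl, hle⟩ := coord_of_mem_star hvw hv hw hα hβ hp hxT
  obtain ⟨h0, hsum⟩ := coord_support hT hST ha hxS
  have hav : a v = 0 := by
    by_cases hvS : v ∈ S
    · have haw := h0 w hw (fun h => hS ⟨hvS, h⟩)
      rw [haw, mul_zero] at hle
      exact le_antisymm (by nlinarith) (ha v hv)
    · exact h0 v hv hvS
  have : ∑ u ∈ T ∩ S, a u • u = ∑ u ∈ (T ∩ S).erase v, a u • u := by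
    by_cases h : v ∈ T ∩ S
    · rw [← Finset.add_sum_erase _ _ h, hav, zero_smul, zero_add]
    · rw [Finset.erase_eq_of_notMem h]
  rw [hsum, this]
  refine coneOf_mono ?_ ⟨a, fun u hu => ha u ?_, rfl⟩
  · intro u hu
    simp only [Finset.mem_erase, Finset.mem_inter, Finset.mem_insert] at hu ⊢
    tauto
  · exact (Finset.mem_inter.1 (Finset.mem_of_mem_erase hu)).1

lemma inter_new_same {S T : Finset E} (hS : Indep S)
    (hST : coneOf S ∩ coneOf T ⊆ coneOf (S ∩ T)) (hvw : v ≠ w) (hvS : v ∈ S) (hwS : w ∈ S)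
    (hvT : v ∈ T) (hwT : w ∈ T)
    (hα : 0 < α) (hβ : 0 < β) (hp : p = α • v + β • w) {x : E}
    (hxS : x ∈ coneOf (insert p (S.erase v))) (hxT : x ∈ coneOf (insert p (T.erase v))) :
    x ∈ coneOf (insert p (S.erase v) ∩ insert p (T.erase v)) := by
  obtain ⟨a, ha, rfl, hle⟩ := coord_of_mem_star hvw hvS hwS hα hβ hp hxS
  obtain ⟨-, hsum⟩ := coord_support hS hST ha (star_subset hvT hwT hα hβ hp hxT)
  rw [hsum]
  refine coneOf_mono ?_ (mem_star_of_coord (S := S ∩ T) hvw (by simp [hvS, hvT])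
    (by simp [hwS, hwT]) hα hp (fun u hu => ha u (Finset.mem_inter.1 hu).1) hle)
  intro u hu
  simp only [Finset.mem_erase, Finset.mem_inter, Finset.mem_insert] at hu ⊢
  tauto

lemma inter_new_opposite {S T : Finset E} (hS : Indep S) (hT : Indep T)
    (hST : coneOf S ∩ coneOf T ⊆ coneOf (S ∩ T)) (hvw : v ≠ w) (hvS : v ∈ S) (hwS : w ∈ S)
    (hvT : v ∈ T) (hwT : w ∈ T)
    (hα : 0 < α) (hβ : 0 < β) (hp : p = α • v + β • w) {x : E}
    (hxS : x ∈ coneOf (insert p (S.erase v))) (hxT : x ∈ coneOf (insert p (T.erase w))) :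
    x ∈ coneOf (insert p (S.erase v) ∩ insert p (T.erase w)) := by
  have hp' : p = β • w + α • v := by rw [hp, add_comm]
  obtain ⟨a, ha, rfl, hle⟩ := coord_of_mem_star hvw hvS hwS hα hβ hp hxS
  obtain ⟨b, hb, hab, hle'⟩ := coord_of_mem_star hvw.symm hwT hvT hβ hα hp' hxT
  have hxT' := star_subset hwT hvT hβ hα hp' hxT
  have hxS' := star_subset hvS hwS hα hβ hp hxS
  obtain ⟨-, hsum⟩ := coord_support hS hST ha hxT'
  have hTS : coneOf T ∩ coneOf S ⊆ coneOf (T ∩ S) := by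
    rw [Set.inter_comm, Finset.inter_comm]; exact hST
  obtain ⟨-, hsum'⟩ := coord_support hT hTS hb (hab ▸ hxS')
  have hI : Indep (S ∩ T) := fun g => by
    obtain ⟨f, hf⟩ := hS g
    exact ⟨f, fun u hu => hf u (Finset.mem_inter.1 hu).1⟩
  have hcoord := hI.coord_unique (a := a) (b := b) (by
    rw [← hsum, hab, hsum', Finset.inter_comm])
  rw [← hcoord v (by simp [hvS, hvT]), ← hcoord w (by simp [hwS, hwT])] at hle'
  rw [hsum]
  refine coneOf_mono ?_ (mem_wall_of_coord (S := S ∩ T) hvw (by simp [hvS, hvT])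
    (by simp [hwS, hwT]) hα hp (fun u hu => ha u (Finset.mem_inter.1 hu).1)
    (le_antisymm hle hle'))
  intro u hu
  simp only [Finset.mem_erase, Finset.mem_inter, Finset.mem_insert] at hu ⊢
  tauto

end Stellar

/-! ### Simplicial fans and their refinement -/

/-- `P` is the set of (generator sets of) maximal cones of a simplicial fan with support `V`,
all of whose generators satisfy the rationality condition `Q`. The condition that any two cones
meet in a common face is expressed by `inter`. -/
structure IsFan (Q : E → Prop) (V : Submodule ℝ E) (P : Finset (Finset E)) : Prop where
  indep : ∀ S ∈ P, Indep S
  rat : ∀ S ∈ P, ∀ v ∈ S, Q v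
  span : ∀ S ∈ P, Submodule.span ℝ (S : Set E) = V
  inter : ∀ S ∈ P, ∀ T ∈ P, coneOf S ∩ coneOf T ⊆ coneOf (S ∩ T)
  cover : ∀ x ∈ V, ∃ S ∈ P, x ∈ coneOf S

/-- The stellar subdivision of `P` along the edge `{v, w}` at a point `p` of that edge: every cone
containing both `v` and `w` is cut in two. -/
def stellar (P : Finset (Finset E)) (v w p : E) : Finset (Finset E) :=
  P.biUnion fun S =>
    if v ∈ S ∧ w ∈ S then {insert p (S.erase v), insert p (S.erase w)} else {S}

set_option linter.unusedSectionVars false in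
lemma mem_stellar {P : Finset (Finset E)} {v w p : E} {T : Finset E} :
    T ∈ stellar P v w p ↔ ∃ S ∈ P, (¬ (v ∈ S ∧ w ∈ S) ∧ T = S) ∨
      ((v ∈ S ∧ w ∈ S) ∧ (T = insert p (S.erase v) ∨ T = insert p (S.erase w))) := by
  unfold stellar
  rw [Finset.mem_biUnion]
  refine exists_congr fun S => and_congr_right fun _ => ?_
  split_ifs with h <;> simp [h]

/-- Every cone of `P'` is contained in a cone of `P`. -/
def Refines (P' P : Finset (Finset E)) : Prop :=
  ∀ S' ∈ P', ∃ S ∈ P, coneOf S' ⊆ coneOf S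

lemma stellar_refines {P : Finset (Finset E)} {v w p : E} {α β : ℝ} (hα : 0 < α) (hβ : 0 < β)
    (hp : p = α • v + β • w) : Refines (stellar P v w p) P := by
  have hp' : p = β • w + α • v := by rw [hp, add_comm]
  intro T hT
  obtain ⟨S, hS, ⟨-, rfl⟩ | ⟨⟨hv, hw⟩, rfl | rfl⟩⟩ := mem_stellar.1 hT
  · exact ⟨_, hS, subset_rfl⟩
  · exact ⟨S, hS, star_subset hv hw hα hβ hp⟩
  · exact ⟨S, hS, star_subset hw hv hβ hα hp'⟩

lemma stellar_isFan {Q : E → Prop} {V : Submodule ℝ E} {P : Finset (Finset E)}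
    (hP : IsFan Q V P) {v w p : E} {α β : ℝ} (hvw : v ≠ w) (hα : 0 < α) (hβ : 0 < β)
    (hp : p = α • v + β • w) (hQ : Q p) : IsFan Q V (stellar P v w p) := by
  have hp' : p = β • w + α • v := by rw [hp, add_comm]
  refine ⟨?_, ?_, ?_, ?_, ?_⟩
  · intro T hT
    obtain ⟨S, hS, ⟨-, rfl⟩ | ⟨⟨hv, hw⟩, rfl | rfl⟩⟩ := mem_stellar.1 hT
    · exact hP.indep _ hS
    · exact star_indep (hP.indep S hS) hvw hv hw hα hp
    · exact star_indep (hP.indep S hS) hvw.symm hw hv hβ hp'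
  · intro T hT u hu
    obtain ⟨S, hS, ⟨-, rfl⟩ | ⟨⟨hv, hw⟩, rfl | rfl⟩⟩ := mem_stellar.1 hT
    · exact hP.rat _ hS u hu
    all_goals
      rcases Finset.mem_insert.1 hu with rfl | hu
      · exact hQ
      · exact hP.rat S hS u (Finset.mem_of_mem_erase hu)
  · intro T hT
    obtain ⟨S, hS, ⟨-, rfl⟩ | ⟨⟨hv, hw⟩, rfl | rfl⟩⟩ := mem_stellar.1 hT
    · exact hP.span _ hS
    · rw [star_span hvw hv hw hα hp, hP.span S hS]
    · rw [star_span hvw.symm hw hv hβ hp', hP.span S hS]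
  · rintro S' hS' T' hT' x ⟨hxS, hxT⟩
    obtain ⟨S, hS, ⟨hnS, rfl⟩ | ⟨⟨hvS, hwS⟩, rfl | rfl⟩⟩ := mem_stellar.1 hS' <;>
    obtain ⟨T, hT, ⟨hnT, rfl⟩ | ⟨⟨hvT, hwT⟩, rfl | rfl⟩⟩ := mem_stellar.1 hT'
    · exact hP.inter _ hS _ hT ⟨hxS, hxT⟩
    · exact inter_old_new (hP.indep T hT) (hP.inter T hT _ hS) hvw hvT hwT hα hβ hp hnS hxS hxT
    · exact inter_old_new (hP.indep T hT) (hP.inter T hT _ hS) hvw.symm hwT hvT hβ hα hp'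
        (fun h => hnS h.symm) hxS hxT
    · rw [Finset.inter_comm]
      exact inter_old_new (hP.indep S hS) (hP.inter S hS _ hT) hvw hvS hwS hα hβ hp hnT hxT hxS
    · exact inter_new_same (hP.indep S hS) (hP.inter S hS T hT) hvw hvS hwS hvT hwT hα hβ hp
        hxS hxT
    · exact inter_new_opposite (hP.indep S hS) (hP.indep T hT) (hP.inter S hS T hT) hvw hvS hwS
        hvT hwT hα hβ hp hxS hxT
    · rw [Finset.inter_comm]
      exact inter_old_new (hP.indep S hS) (hP.inter S hS _ hT) hvw.symm hwS hvS hβ hα hp'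
        (fun h => hnT h.symm) hxT hxS
    · exact inter_new_opposite (hP.indep S hS) (hP.indep T hT) (hP.inter S hS T hT) hvw.symm hwS
        hvS hwT hvT hβ hα hp' hxS hxT
    · exact inter_new_same (hP.indep S hS) (hP.inter S hS T hT) hvw.symm hwS hvS hwT hvT hβ hα
        hp' hxS hxT
  · intro x hx
    obtain ⟨S, hS, hxS⟩ := hP.cover x hx
    by_cases h : v ∈ S ∧ w ∈ S
    · obtain ⟨a, ha, rfl⟩ := hxS
      rcases le_total (β * a v) (α * a w) with hle | hle
      · exact ⟨_, mem_stellar.2 ⟨S, hS, Or.inr ⟨h, Or.inl rfl⟩⟩,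
          mem_star_of_coord hvw h.1 h.2 hα hp ha hle⟩
      · exact ⟨_, mem_stellar.2 ⟨S, hS, Or.inr ⟨h, Or.inr rfl⟩⟩,
          mem_star_of_coord hvw.symm h.2 h.1 hβ hp' ha hle⟩
    · exact ⟨S, mem_stellar.2 ⟨S, hS, Or.inl ⟨h, rfl⟩⟩, hxS⟩

/-- The functional `u` does not change sign on any cone of `P`. -/
def OneSided (P : Finset (Finset E)) (u : E →ₗ[ℝ] ℝ) : Prop :=
  ∀ S ∈ P, (∀ x ∈ coneOf S, 0 ≤ u x) ∨ (∀ x ∈ coneOf S, 0 ≤ (-u) x)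

lemma OneSided.of_refines {P P' : Finset (Finset E)} {u : E →ₗ[ℝ] ℝ} (h : OneSided P u)
    (hr : Refines P' P) : OneSided P' u := by
  intro S' hS'
  obtain ⟨S, hS, hsub⟩ := hr S' hS'
  exact (h S hS).imp (fun h x hx => h x (hsub hx)) (fun h x hx => h x (hsub hx))

/-- The edges of `P` strictly crossed by the hyperplane `u = 0`. -/
def crossing (P : Finset (Finset E)) (u : E →ₗ[ℝ] ℝ) : Finset (E × E) :=
  (P.biUnion fun S => S ×ˢ S).filter fun e => 0 < u e.1 ∧ u e.2 < 0

lemma mem_crossing {P : Finset (Finset E)} {u : E →ₗ[ℝ] ℝ} {e : E × E} :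
    e ∈ crossing P u ↔ (∃ S ∈ P, e.1 ∈ S ∧ e.2 ∈ S) ∧ 0 < u e.1 ∧ u e.2 < 0 := by
  simp [crossing]

/-- A fan can be refined by stellar subdivisions at points of the hyperplane `u = 0` until no cone
is cut by that hyperplane: each step removes one crossed edge and creates no new one. -/
lemma exists_refinement (F : Subfield ℝ) {Q : E → Prop} {V : Submodule ℝ E}
    (hQ : ∀ a ∈ F, ∀ b ∈ F, ∀ v w, Q v → Q w → Q (a • v + b • w))
    (u : E →ₗ[ℝ] ℝ) (hu : ∀ v, Q v → u v ∈ F) (n : ℕ) (P : Finset (Finset E))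
    (hP : IsFan Q V P) (hn : (crossing P u).card = n) :
    ∃ P', IsFan Q V P' ∧ Refines P' P ∧ OneSided P' u := by
  induction n using Nat.strong_induction_on generalizing P with
  | _ n ih =>
    by_cases hne : crossing P u = ∅
    · refine ⟨P, hP, fun S hS => ⟨S, hS, subset_rfl⟩, fun S hS => ?_⟩
      by_cases h : ∀ v ∈ S, 0 ≤ u v
      · exact Or.inl fun x hx => nonneg_on_coneOf u h hx
      · right
        push Not at h
        obtain ⟨w, hw, hneg⟩ := h
        refine fun x hx => nonneg_on_coneOf (-u) (fun v hv => ?_) hx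
        by_contra hc
        have : (v, w) ∈ crossing P u :=
          mem_crossing.2 ⟨⟨S, hS, hv, hw⟩, by simpa using hc, hneg⟩
        simp [hne] at this
    · obtain ⟨⟨v, w⟩, he⟩ := Finset.nonempty_iff_ne_empty.2 hne
      obtain ⟨⟨S₀, hS₀, hv₀, hw₀⟩, hpos, hneg⟩ := mem_crossing.1 he
      dsimp only at hv₀ hw₀ hpos hneg
      have hvw : v ≠ w := by rintro rfl; linarith
      set p := (-u w) • v + (u v) • w with hp
      have hup : u p = 0 := by simp [hp]; ring
      have hQv := hP.rat S₀ hS₀ v hv₀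
      have hQw := hP.rat S₀ hS₀ w hw₀
      have hQp : Q p := hQ _ (F.neg_mem (hu w hQw)) _ (hu v hQv) _ _ hQv hQw
      have hα : 0 < -u w := by linarith
      have hfan := stellar_isFan hP hvw hα hpos hp hQp
      have hsub : crossing (stellar P v w p) u ⊆ (crossing P u).erase (v, w) := by
        rintro ⟨a, b⟩ hab
        obtain ⟨⟨T, hT, ha, hb⟩, hua, hub⟩ := mem_crossing.1 hab
        dsimp only at ha hb hua hub
        have hap : a ≠ p := by rintro rfl; linarith
        have hbp : b ≠ p := by rintro rfl; linarith
        rw [Finset.mem_erase, mem_crossing]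
        obtain ⟨S, hS, ⟨hn, rfl⟩ | ⟨-, rfl | rfl⟩⟩ := mem_stellar.1 hT
        · refine ⟨?_, ⟨_, hS, ha, hb⟩, hua, hub⟩
          rintro ⟨⟩
          exact hn ⟨ha, hb⟩
        all_goals
          simp only [Finset.mem_insert, hap, hbp, false_or, Finset.mem_erase] at ha hb
          refine ⟨?_, ⟨S, hS, ha.2, hb.2⟩, hua, hub⟩
          rintro ⟨⟩
          tauto
      have hlt : (crossing (stellar P v w p) u).card < n := by
        rw [← hn]
        exact lt_of_le_of_lt (Finset.card_le_card hsub) (Finset.card_erase_lt_of_mem he)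
      obtain ⟨P', h1, h2, h3⟩ := ih _ hlt _ hfan rfl
      refine ⟨P', h1, fun S' hS' => ?_, h3⟩
      obtain ⟨T, hT, hs⟩ := h2 S' hS'
      obtain ⟨S, hS, hs'⟩ := stellar_refines hα hpos hp T hT
      exact ⟨S, hS, hs.trans hs'⟩

lemma exists_refinement_list (F : Subfield ℝ) {Q : E → Prop} {V : Submodule ℝ E}
    (hQ : ∀ a ∈ F, ∀ b ∈ F, ∀ v w, Q v → Q w → Q (a • v + b • w))
    (H : Finset (E →ₗ[ℝ] ℝ)) (hH : ∀ u ∈ H, ∀ v, Q v → u v ∈ F) (P : Finset (Finset E))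
    (hP : IsFan Q V P) : ∃ P', IsFan Q V P' ∧ ∀ u ∈ H, OneSided P' u := by
  induction H using Finset.induction_on with
  | empty => exact ⟨P, hP, by simp⟩
  | insert u H _ ih =>
    obtain ⟨P₁, hP₁, h₁⟩ := ih fun u' hu' => hH u' (by simp [hu'])
    obtain ⟨P₂, hP₂, hr, h₂⟩ := exists_refinement F hQ u (hH u (by simp)) _ P₁ hP₁ rfl
    refine ⟨P₂, hP₂, fun u' hu' => ?_⟩
    rcases Finset.mem_insert.1 hu' with rfl | hu'
    · exact h₂
    · exact (h₁ u' hu').of_refines hr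

/-! ### The fan of orthants of a basis -/

/-- The generators of the orthant with respect to `B` whose positive directions are `A`. -/
def orthant (B A : Finset E) : Finset E := A ∪ (B \ A).image fun b => -b

set_option linter.unusedSectionVars false in
lemma mem_orthant {B A : Finset E} {v : E} :
    v ∈ orthant B A ↔ v ∈ A ∨ ∃ b ∈ B, b ∉ A ∧ v = -b := by
  simp only [orthant, Finset.mem_union, Finset.mem_image, Finset.mem_sdiff]
  constructor
  · rintro (h | ⟨b, ⟨h1, h2⟩, rfl⟩)
    · exact Or.inl h
    · exact Or.inr ⟨b, h1, h2, rfl⟩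
  · rintro (h | ⟨b, h1, h2, rfl⟩)
    · exact Or.inl h
    · exact Or.inr ⟨b, ⟨h1, h2⟩, rfl⟩

lemma orthant_dual {B A : Finset E} (hB : Indep B) (hA : A ⊆ B) {x : E}
    (hx : x ∈ coneOf (orthant B A)) {b : E} :
    (b ∈ A → 0 ≤ hB.dual b x) ∧ (b ∉ A → hB.dual b x ≤ 0) := by
  constructor
  · intro hb
    refine nonneg_on_coneOf _ (fun v hv => ?_) hx
    rcases mem_orthant.1 hv with hv | ⟨c, hc, hcA, rfl⟩
    · rw [hB.dual_apply b (hA hv)]; split_ifs <;> norm_num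
    · rw [map_neg, hB.dual_apply b hc, if_neg (by rintro rfl; exact hcA hb)]; simp
  · intro hb
    have := nonneg_on_coneOf (-hB.dual b) (fun v hv => ?_) hx
    · simpa using this
    rcases mem_orthant.1 hv with hv | ⟨c, hc, hcA, rfl⟩
    · rw [LinearMap.neg_apply, hB.dual_apply b (hA hv), if_neg (by rintro rfl; exact hb hv)]
      simp
    · rw [LinearMap.neg_apply, map_neg, neg_neg, hB.dual_apply b hc]; split_ifs <;> norm_num

lemma orthant_span {B A : Finset E} (hA : A ⊆ B) :
    Submodule.span ℝ (orthant B A : Set E) = Submodule.span ℝ (B : Set E) := by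
  apply le_antisymm
  · refine Submodule.span_le.2 fun v hv => ?_
    rcases mem_orthant.1 hv with hv | ⟨c, hc, hcA, rfl⟩
    · exact Submodule.subset_span (hA hv)
    · exact Submodule.neg_mem _ (Submodule.subset_span hc)
  · refine Submodule.span_le.2 fun b hb => ?_
    by_cases h : b ∈ A
    · exact Submodule.subset_span (mem_orthant.2 (Or.inl h))
    · rw [← neg_neg b]
      exact Submodule.neg_mem _ (Submodule.subset_span (mem_orthant.2 (Or.inr ⟨b, hb, h, rfl⟩)))

lemma orthant_isFan {Q : E → Prop} (hneg : ∀ v, Q v → Q (-v)) {B : Finset E} (hB : Indep B)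
    (hBQ : ∀ b ∈ B, Q b) :
    IsFan Q (Submodule.span ℝ (B : Set E)) (B.powerset.image (orthant B)) := by
  refine ⟨?_, ?_, ?_, ?_, ?_⟩
  · intro S hS
    obtain ⟨A, hA, rfl⟩ := Finset.mem_image.1 hS
    rw [Finset.mem_powerset] at hA
    intro g
    obtain ⟨f, hf⟩ := hB (fun b => if b ∈ A then g b else -g (-b))
    refine ⟨f, fun v hv => ?_⟩
    rcases mem_orthant.1 hv with hv | ⟨c, hc, hcA, rfl⟩
    · rw [hf v (hA hv), if_pos hv]
    · rw [map_neg, hf c hc, if_neg hcA, neg_neg]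
  · intro S hS v hv
    obtain ⟨A, hA, rfl⟩ := Finset.mem_image.1 hS
    rw [Finset.mem_powerset] at hA
    rcases mem_orthant.1 hv with hv | ⟨c, hc, hcA, rfl⟩
    · exact hBQ v (hA hv)
    · exact hneg c (hBQ c hc)
  · intro S hS
    obtain ⟨A, hA, rfl⟩ := Finset.mem_image.1 hS
    exact orthant_span (Finset.mem_powerset.1 hA)
  · intro S hS T hT x hx
    obtain ⟨A, hA, rfl⟩ := Finset.mem_image.1 hS
    obtain ⟨A', hA', rfl⟩ := Finset.mem_image.1 hT
    rw [Finset.mem_powerset] at hA hA'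
    have hxV := coneOf_subset_span _ hx.1
    rw [orthant_span hA] at hxV
    rw [hB.sum_dual hxV]
    refine sum_mem_coneOf _ _ fun b hb => ?_
    have h1 := orthant_dual hB hA hx.1 (b := b)
    have h2 := orthant_dual hB hA' hx.2 (b := b)
    rcases lt_trichotomy (hB.dual b x) 0 with h | h | h
    · have hbA : b ∉ A := fun hb => by linarith [h1.1 hb]
      have hbA' : b ∉ A' := fun hb => by linarith [h2.1 hb]
      rw [← neg_smul_neg]
      refine smul_mem_coneOf (by linarith) (mem_coneOf_of_mem (Finset.mem_inter.2 ⟨?_, ?_⟩))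
      · exact mem_orthant.2 (Or.inr ⟨b, hb, hbA, rfl⟩)
      · exact mem_orthant.2 (Or.inr ⟨b, hb, hbA', rfl⟩)
    · rw [h, zero_smul]; exact zero_mem_coneOf _
    · have hbA : b ∈ A := by by_contra hb; linarith [h1.2 hb]
      have hbA' : b ∈ A' := by by_contra hb; linarith [h2.2 hb]
      exact smul_mem_coneOf h.le (mem_coneOf_of_mem (Finset.mem_inter.2
        ⟨mem_orthant.2 (Or.inl hbA), mem_orthant.2 (Or.inl hbA')⟩))
  · intro x hx
    obtain ⟨a, rfl⟩ := exists_coord hx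
    refine ⟨orthant B (B.filter fun b => 0 ≤ a b), Finset.mem_image.2 ⟨_, by simp, rfl⟩,
      sum_mem_coneOf _ _ fun b hb => ?_⟩
    by_cases h : 0 ≤ a b
    · exact smul_mem_coneOf h (mem_coneOf_of_mem (mem_orthant.2 (Or.inl (by simp [hb, h]))))
    · rw [← neg_smul_neg]
      exact smul_mem_coneOf (by linarith)
        (mem_coneOf_of_mem (mem_orthant.2 (Or.inr ⟨b, hb, by simp [h], rfl⟩)))

/-! ### Cones in coordinate space -/

variable {k : ℕ}

lemma coneOf_isClosed {S : Finset (Fin k → ℝ)} (hS : Indep S) : IsClosed (coneOf S) := by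
  have : coneOf S = (Submodule.span ℝ (S : Set (Fin k → ℝ)) : Set (Fin k → ℝ)) ∩
      ⋂ v ∈ S, {x | 0 ≤ hS.dual v x} := by
    ext x
    simp [hS.mem_coneOf_iff]
  rw [this]
  refine (Submodule.closed_of_finiteDimensional _).inter (isClosed_biInter fun v _ => ?_)
  exact isClosed_le continuous_const (LinearMap.continuous_of_finiteDimensional _)

/-- If the facet hyperplanes of the simplicial cone over a basis `B` cut no cone of the fan `P`,
then `coneOf B` is a union of cones of `P`. A point of `coneOf B` is the limit of points with all
coordinates positive, and a cone of `P` containing such a point lies inside `coneOf B`. -/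
lemma exists_cone_through {Q : (Fin k → ℝ) → Prop} {V : Submodule ℝ (Fin k → ℝ)}
    {P : Finset (Finset (Fin k → ℝ))} (hP : IsFan Q V P) {B : Finset (Fin k → ℝ)} (hB : Indep B)
    (hBV : Submodule.span ℝ (B : Set (Fin k → ℝ)) = V)
    (hside : ∀ b ∈ B, OneSided P (hB.dual b)) {x : Fin k → ℝ} (hx : x ∈ coneOf B) :
    ∃ S ∈ P, x ∈ coneOf S ∧ coneOf S ⊆ coneOf B := by
  set y : Fin k → ℝ := ∑ b ∈ B, (1 : ℝ) • b with hy
  have hyV : y ∈ V := by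
    rw [← hBV]
    exact Submodule.sum_mem _ fun b hb => Submodule.smul_mem _ _ (Submodule.subset_span hb)
  have hxB := hB.mem_coneOf_iff.1 hx
  have hclosed : IsClosed (⋃ S ∈ P.filter (fun S => coneOf S ⊆ coneOf B), coneOf S) := by
    refine Set.Finite.isClosed_biUnion (Finset.finite_toSet _) fun S hS => ?_
    exact coneOf_isClosed (hP.indep S (Finset.mem_filter.1 hS).1)
  have hlim : Filter.Tendsto (fun n : ℕ => x + (1 / ((n : ℝ) + 1)) • y) Filter.atTop (nhds x) := by
    have h := (tendsto_one_div_add_atTop_nhds_zero_nat (𝕜 := ℝ)).smul_const y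
    simpa using h.const_add x
  have hmem := hclosed.mem_of_tendsto hlim (Filter.Eventually.of_forall fun n => ?_)
  · simp only [Set.mem_iUnion, Finset.mem_filter] at hmem
    obtain ⟨S, ⟨hS, hsub⟩, hxS⟩ := hmem
    exact ⟨S, hS, hxS, hsub⟩
  have hn : (0 : ℝ) < 1 / ((n : ℝ) + 1) := by positivity
  obtain ⟨S, hS, hxS⟩ := hP.cover (x + (1 / ((n : ℝ) + 1)) • y)
    (V.add_mem (hBV ▸ hxB.1) (V.smul_mem _ hyV))
  simp only [Set.mem_iUnion, Finset.mem_filter]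
  refine ⟨S, ⟨hS, fun z hz => hB.mem_coneOf_iff.2 ⟨?_, fun b hb => ?_⟩⟩, hxS⟩
  · rw [hBV, ← hP.span S hS]
    exact coneOf_subset_span S hz
  · have hpos : 0 < hB.dual b (x + (1 / ((n : ℝ) + 1)) • y) := by
      rw [map_add, map_smul, hy, hB.dual_sum (fun _ => 1) hb, smul_eq_mul, mul_one]
      linarith [hxB.2 b hb]
    rcases hside b hb S hS with h | h
    · exact h z hz
    · have := h _ hxS
      rw [LinearMap.neg_apply] at this
      linarith

/-- The coordinates of an `F`-rational vector with respect to independent `F`-rational vectors lie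
in `F`: an `F`-linear retraction `ℝ → F`, applied to all coefficients, leaves the vector
unchanged. -/
lemma dual_mem (F : Subfield ℝ) {B : Finset (Fin k → ℝ)} (hB : Indep B)
    (hBF : ∀ b ∈ B, ∀ j, b j ∈ F) {w : Fin k → ℝ}
    (hw : w ∈ Submodule.span ℝ (B : Set (Fin k → ℝ))) (hwF : ∀ j, w j ∈ F)
    {b : Fin k → ℝ} (hb : b ∈ B) : hB.dual b w ∈ F := by
  obtain ⟨π, hπ⟩ := LinearMap.exists_leftInverse_of_injective (Algebra.linearMap F ℝ)
    (LinearMap.ker_eq_bot.2 (algebraMap F ℝ).injective)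
  have hπ' : ∀ c : ℝ, ∀ hc : c ∈ F, π c = ⟨c, hc⟩ := fun c hc =>
    LinearMap.congr_fun hπ ⟨c, hc⟩
  obtain ⟨a, rfl⟩ := exists_coord hw
  rw [hB.dual_sum a hb]
  have key : ∑ v ∈ B, a v • v = ∑ v ∈ B, ((π (a v) : F) : ℝ) • v := by
    ext j
    have h1 := hwF j
    have h2 : ((π ((∑ v ∈ B, a v • v) j) : F) : ℝ) = (∑ v ∈ B, a v • v) j := by
      rw [hπ' _ h1]
    rw [← h2]
    simp only [Finset.sum_apply, Pi.smul_apply, smul_eq_mul, map_sum,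
      AddSubmonoidClass.coe_finsetSum]
    refine Finset.sum_congr rfl fun v hv => ?_
    have h3 : a v * v j = (⟨v j, hBF v hv j⟩ : F) • a v := by
      rw [Subfield.smul_def, smul_eq_mul, mul_comm]
    rw [h3, map_smul, smul_eq_mul, Subfield.coe_mul, mul_comm]
  rw [hB.coord_unique key b hb]
  exact (π (a b)).2

lemma closedCone_eq {m : ℕ} (v : Fin m → (Fin k → ℝ)) :
    closedCone v = coneOf (Finset.univ.image v) := by
  apply Set.Subset.antisymm
  · rintro x ⟨a, ha, rfl⟩
    exact sum_mem_coneOf _ _ fun i _ => smul_mem_coneOf (ha i)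
      (mem_coneOf_of_mem (Finset.mem_image_of_mem _ (Finset.mem_univ i)))
  · rintro x ⟨a, ha, rfl⟩
    cases isEmpty_or_nonempty (Fin m)
    · exact ⟨fun _ => 0, fun _ => le_rfl, by simp⟩
    -- choose one index for each vector in the image
    have hc : ∀ w ∈ Finset.univ.image v, ∃ i, v i = w := fun w hw => by simpa using hw
    choose! s hs using hc
    refine ⟨fun i => ∑ w ∈ Finset.univ.image v, if s w = i then a w else 0, fun i => ?_, ?_⟩
    · exact Finset.sum_nonneg fun w hw => by split_ifs; exacts [ha w hw, le_rfl]
    · simp only [Finset.sum_smul, ite_smul, zero_smul]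
      rw [Finset.sum_comm]
      refine Finset.sum_congr rfl fun w hw => ?_
      simp [hs w hw]

lemma isSimplicialCone_coneOf (F : Subfield ℝ) {S : Finset (Fin k → ℝ)} (hS : Indep S)
    (hF : ∀ v ∈ S, ∀ j, v j ∈ F) : IsSimplicialCone F (coneOf S) := by
  refine ⟨S.card, fun i => (S.equivFin.symm i : Fin k → ℝ),
    fun i j => hF _ (S.equivFin.symm i).2 j, ?_, ?_⟩
  · exact (indep_iff.1 hS).linearIndependent.comp _ S.equivFin.symm.injective
  · rw [closedCone_eq]
    congr 1
    ext w
    simp only [Finset.mem_image, Finset.mem_univ, true_and]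
    constructor
    · intro hw
      exact ⟨S.equivFin ⟨w, hw⟩, by simp⟩
    · rintro ⟨i, rfl⟩
      exact (S.equivFin.symm i).2

lemma isFace_inter {S T : Finset (Fin k → ℝ)} (hS : Indep S)
    (hST : coneOf S ∩ coneOf T ⊆ coneOf (S ∩ T)) : IsFace (coneOf S) (coneOf S ∩ coneOf T) := by
  obtain ⟨u, hu⟩ := hS (fun v => if v ∈ T then 0 else 1)
  have h0 : ∀ v ∈ S, 0 ≤ u v := fun v hv => by rw [hu v hv]; split_ifs <;> norm_num
  refine ⟨u, fun x hx => nonneg_on_coneOf u h0 hx, Set.Subset.antisymm ?_ ?_⟩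
  · rintro x hx
    refine ⟨hx.1, ?_⟩
    obtain ⟨a, -, rfl⟩ := hST hx
    simp only [Set.mem_ofPred_eq, map_sum, map_smul, smul_eq_mul]
    refine Finset.sum_eq_zero fun v hv => ?_
    rw [Finset.mem_inter] at hv
    rw [hu v hv.1, if_pos hv.2, mul_zero]
  · rintro x ⟨hx, hux⟩
    refine ⟨hx, ?_⟩
    obtain ⟨a, ha, rfl⟩ := hx
    simp only [Set.mem_ofPred_eq, map_sum, map_smul, smul_eq_mul] at hux
    rw [Finset.sum_eq_zero_iff_of_nonneg fun v hv => mul_nonneg (ha v hv) (h0 v hv)] at hux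
    refine sum_mem_coneOf _ _ fun v hv => ?_
    by_cases hvT : v ∈ T
    · exact smul_mem_coneOf (ha v hv) (mem_coneOf_of_mem hvT)
    · have := hux v hv
      rw [hu v hv, if_neg hvT, mul_one] at this
      rw [this, zero_smul]
      exact zero_mem_coneOf _

/-- A cone spanned by a finite set `G` is the union of the simplicial cones over the bases of its
span contained in `G`. -/
lemma exists_basis_cone (G : Finset (Fin k → ℝ)) {x : Fin k → ℝ} (hx : x ∈ coneOf G) :
    ∃ B ⊆ G, Indep B ∧ Submodule.span ℝ (B : Set (Fin k → ℝ)) =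
      Submodule.span ℝ (G : Set (Fin k → ℝ)) ∧ x ∈ coneOf B := by
  obtain ⟨T, hTG, hT, hxT⟩ := caratheodory_cone G hx
  obtain ⟨b, hbG, hTb, hGb, hb⟩ := exists_linearIndepOn_id_extension hT
    (Finset.coe_subset.2 hTG)
  have hfin : b.Finite := G.finite_toSet.subset hbG
  lift b to Finset (Fin k → ℝ) using hfin
  exact ⟨b, Finset.coe_subset.1 hbG, indep_iff.2 hb,
    le_antisymm (Submodule.span_mono hbG) (Submodule.span_le.2 hGb),
    coneOf_mono (Finset.coe_subset.1 hTb) hxT⟩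

/-- One fan that is simultaneously adapted to all the given cones. -/
lemma exists_common_fan (F : Subfield ℝ) {mcount : ℕ} (G : Fin mcount → Finset (Fin k → ℝ))
    (hF : ∀ i, ∀ v ∈ G i, ∀ j, v j ∈ F) (V : Submodule ℝ (Fin k → ℝ))
    (hV : ∀ i, Submodule.span ℝ (G i : Set (Fin k → ℝ)) = V) (i₀ : Fin mcount) :
    ∃ P, IsFan (fun w => w ∈ V ∧ ∀ j, w j ∈ F) V P ∧
      ∀ i, ∀ x ∈ coneOf (G i), ∃ S ∈ P, x ∈ coneOf S ∧ coneOf S ⊆ coneOf (G i) := by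
  obtain ⟨B₀, hB₀G, hB₀, hB₀V, -⟩ := exists_basis_cone (G i₀) (zero_mem_coneOf _)
  have hQ : ∀ a ∈ F, ∀ b ∈ F, ∀ v w : Fin k → ℝ, (v ∈ V ∧ ∀ j, v j ∈ F) →
      (w ∈ V ∧ ∀ j, w j ∈ F) → (a • v + b • w ∈ V ∧ ∀ j, (a • v + b • w) j ∈ F) := by
    intro a ha b hb v w hv hw
    exact ⟨V.add_mem (V.smul_mem _ hv.1) (V.smul_mem _ hw.1), fun j =>
      F.add_mem (F.mul_mem ha (hv.2 j)) (F.mul_mem hb (hw.2 j))⟩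
  have hfan := orthant_isFan (Q := fun w => w ∈ V ∧ ∀ j, w j ∈ F)
    (fun v hv => ⟨V.neg_mem hv.1, fun j => F.neg_mem (hv.2 j)⟩) hB₀
    (fun b hb => ⟨hV i₀ ▸ Submodule.subset_span (hB₀G hb), hF i₀ b (hB₀G hb)⟩)
  rw [hB₀V, hV i₀] at hfan
  -- all coordinate functionals of all bases of `V` contained in some `G i`
  let H : Finset ((Fin k → ℝ) →ₗ[ℝ] ℝ) := Finset.univ.biUnion fun i =>
    (G i).powerset.biUnion fun B =>
      if h : Indep B ∧ Submodule.span ℝ (B : Set (Fin k → ℝ)) = V then B.image h.1.dual else ∅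
  have hH : ∀ u ∈ H, ∀ w : Fin k → ℝ, (w ∈ V ∧ ∀ j, w j ∈ F) → u w ∈ F := by
    intro u hu w hw
    simp only [H, Finset.mem_biUnion, Finset.mem_univ, true_and, Finset.mem_powerset] at hu
    obtain ⟨i, B, hBG, hu⟩ := hu
    split_ifs at hu with h
    · obtain ⟨b, hb, rfl⟩ := Finset.mem_image.1 hu
      exact dual_mem F h.1 (fun b hb => hF i b (hBG hb)) (h.2 ▸ hw.1) hw.2 hb
    · simp at hu
  obtain ⟨P, hP, hside⟩ := exists_refinement_list F hQ H hH _ hfan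
  refine ⟨P, hP, fun i x hx => ?_⟩
  obtain ⟨B, hBG, hB, hBV, hxB⟩ := exists_basis_cone (G i) hx
  rw [hV i] at hBV
  have hmem : ∀ b ∈ B, hB.dual b ∈ H := fun b hb => by
    simp only [H, Finset.mem_biUnion, Finset.mem_univ, true_and, Finset.mem_powerset]
    refine ⟨i, B, hBG, ?_⟩
    rw [dif_pos ⟨hB, hBV⟩]
    exact Finset.mem_image_of_mem _ hb
  obtain ⟨S, hS, hxS, hsub⟩ :=
    exists_cone_through hP hB hBV (fun b hb => hside _ (hmem b hb)) hxB
  exact ⟨S, hS, hxS, hsub.trans (coneOf_mono hBG)⟩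

end Helpers

/-- given closed cones `C₁, …, C_m` in `ℝ^k`, each spanned by finitely many
vectors of `𝔽^k` and all spanning the same linear subspace, each `C_i` admits a
subdivision `{C_{ij}}_j` into simplicial closed cones spanned by vectors of `𝔽^k` such
that any two of the `C_{ij}` either coincide or intersect in a common face. -/
theorem statement6 (F : Subfield ℝ) (k : ℕ) (mcount : ℕ)
    (mv : Fin mcount → ℕ) (v : ∀ i, Fin (mv i) → (Fin k → ℝ))
    (hF : ∀ i a j, v i a j ∈ F)
    (hspan : ∀ i j, Submodule.span ℝ (closedCone (v i)) = Submodule.span ℝ (closedCone (v j))) :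
    ∃ (r : Fin mcount → ℕ) (D : ∀ i, Fin (r i) → Set (Fin k → ℝ)),
      (∀ i, IsSubdivision (closedCone (v i)) (D i)) ∧
      (∀ i j, IsSimplicialCone F (D i j)) ∧
      (∀ i j i' j', D i j = D i' j' ∨
        (IsFace (D i j) (D i j ∩ D i' j') ∧ IsFace (D i' j') (D i j ∩ D i' j'))) := by
  classical
  rcases Nat.eq_zero_or_pos mcount with rfl | hpos
  · exact ⟨fun i => i.elim0, fun i => i.elim0, fun i => i.elim0, fun i => i.elim0,
      fun i => i.elim0⟩
  let i₀ : Fin mcount := ⟨0, hpos⟩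
  let G : Fin mcount → Finset (Fin k → ℝ) := fun i => Finset.univ.image (v i)
  have hGC : ∀ i, closedCone (v i) = coneOf (G i) := fun i => closedCone_eq (v i)
  let V := Submodule.span ℝ (closedCone (v i₀))
  have hV : ∀ i, Submodule.span ℝ (G i : Set (Fin k → ℝ)) = V := fun i => by
    rw [← span_coneOf, ← hGC i]
    exact hspan i i₀
  obtain ⟨P, hP, hcov⟩ := exists_common_fan F G
    (fun i w hw j => by
      obtain ⟨a, -, rfl⟩ := Finset.mem_image.1 hw
      exact hF i a j) V hV i₀
  let R : Fin mcount → Finset (Finset (Fin k → ℝ)) := fun i =>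
    P.filter fun S => coneOf S ⊆ coneOf (G i)
  have hR : ∀ i (j : Fin (R i).card), ((R i).equivFin.symm j : Finset (Fin k → ℝ)) ∈ P ∧
      coneOf ((R i).equivFin.symm j : Finset (Fin k → ℝ)) ⊆ coneOf (G i) := fun i j =>
    Finset.mem_filter.1 ((R i).equivFin.symm j).2
  have hface : ∀ S ∈ P, ∀ T ∈ P, IsFace (coneOf S) (coneOf S ∩ coneOf T) ∧
      IsFace (coneOf T) (coneOf S ∩ coneOf T) := fun S hS T hT =>
    ⟨isFace_inter (hP.indep S hS) (by convert hP.inter S hS T hT), by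
      rw [Set.inter_comm]
      exact isFace_inter (hP.indep T hT) (by convert hP.inter T hT S hS)⟩
  refine ⟨fun i => (R i).card, fun i j => coneOf ((R i).equivFin.symm j : Finset (Fin k → ℝ)),
    fun i => ⟨?_, fun j => ?_, fun j j' _ => ?_⟩, fun i j => ?_, fun i j i' j' => Or.inr ?_⟩
  · rw [hGC i]
    refine Set.Subset.antisymm (fun x hx => ?_) (Set.iUnion_subset fun j => (hR i j).2)
    obtain ⟨S, hS, hxS, hsub⟩ := hcov i x hx
    refine Set.mem_iUnion.2 ⟨(R i).equivFin ⟨S, Finset.mem_filter.2 ⟨hS, hsub⟩⟩, ?_⟩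
    simpa using hxS
  · rw [span_coneOf, hP.span _ (hR i j).1]
    exact (hspan i i₀).symm
  · exact hface _ (hR i j).1 _ (hR i j').1
  · exact isSimplicialCone_coneOf F (hP.indep _ (hR i j).1) fun w hw =>
      (hP.rat _ (hR i j).1 w hw).2
  · exact hface _ (hR i j).1 _ (hR i' j').1
end
end

section
/- Let v_1, …, v_n ∈ ℝ^n be linearly independent, let A be the n × n matrix with columns v_1, …, v_n, and let C = ⟨v_1, …, v_n⟩^c. Let z ∈ ℝ^n satisfy ⟨z, c⟩ < 0 for every nonzero c ∈ C. Then the function x ↦ exp(⟨x, z⟩) is integrable on C with respect to Lebesgue measure, and ∫_C exp(⟨x, z⟩) dx = (−1)^n |det A| / (⟨v_1, z⟩ ⟨v_2, z⟩ ⋯ ⟨v_n, z⟩). -/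
/-!
The linear map `a ↦ A a = ∑ aᵢ vᵢ` is injective and sends the orthant `[0, ∞)ⁿ` onto the cone, with
constant Jacobian `|det A|`. In these coordinates `exp ⟨x, z⟩` becomes `∏ᵢ exp (aᵢ ⟨vᵢ, z⟩)`, so
Fubini reduces integrability and the value of the integral to the one-dimensional integrals
`∫₀^∞ exp (t ⟨vᵢ, z⟩) dt = -1 / ⟨vᵢ, z⟩`. They converge because each `vᵢ` is a nonzero element of the
cone, whence `⟨vᵢ, z⟩ < 0`.
-/

open scoped BigOperators

noncomputable section

open MeasureTheory

lemma closedCone_eq_image {n : ℕ} (v : Fin n → (Fin n → ℝ)) :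
    closedCone v = Matrix.toLin' (Matrix.of fun i j => v j i) ''
      (Set.univ.pi fun _ => Set.Ici (0 : ℝ)) := by
  have key (a : Fin n → ℝ) :
      Matrix.toLin' (Matrix.of fun i j => v j i) a = ∑ i, a i • v i := by
    ext t
    simp [Matrix.mulVec, dotProduct, mul_comm]
  ext x
  simp only [closedCone, Set.mem_ofPred_eq, Set.mem_image, Set.mem_univ_pi, Set.mem_Ici, key,
    eq_comm]

/-- In the coordinates `a` of the cone, the integrand factors over the generators. -/
lemma exp_sum_toLin' {n : ℕ} (v : Fin n → (Fin n → ℝ)) (z a : Fin n → ℝ) :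
    Real.exp (∑ i, Matrix.toLin' (Matrix.of fun i j => v j i) a i * z i) =
      ∏ i, Real.exp ((∑ t, v i t * z t) * a i) := by
  rw [← Real.exp_sum]
  congr 1
  simp only [Matrix.toLin'_apply, Matrix.mulVec, dotProduct, Matrix.of_apply, Finset.sum_mul]
  rw [Finset.sum_comm]
  refine Finset.sum_congr rfl fun i _ => Finset.sum_congr rfl fun t _ => ?_
  ring

/-- for linearly independent `v₁, …, v_n ∈ ℝ^n` spanning the closed cone
`C = ⟨v₁,…,v_n⟩^c`, and `z ∈ ℝ^n` with `⟨z, c⟩ < 0` for all nonzero `c ∈ C`, the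
function `x ↦ exp⟨x, z⟩` is integrable on `C` and
`∫_C exp⟨x,z⟩ dx = (-1)^n |det A| / (⟨v₁,z⟩ ⋯ ⟨v_n,z⟩)`, where `A` is the matrix with
columns `v₁, …, v_n`. -/
theorem statement7 {n : ℕ} (v : Fin n → (Fin n → ℝ)) (hv : LinearIndependent ℝ v)
    (z : Fin n → ℝ) (hz : ∀ c ∈ closedCone v, c ≠ 0 → ∑ i, z i * c i < 0) :
    MeasureTheory.IntegrableOn (fun x => Real.exp (∑ i, x i * z i)) (closedCone v)
      MeasureTheory.volume ∧
    ∫ x in closedCone v, Real.exp (∑ i, x i * z i) =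
      (-1 : ℝ) ^ n * |(Matrix.of fun i j => v j i).det| / ∏ i, (∑ t, v i t * z t) := by
  have hneg (i : Fin n) : ∑ t, v i t * z t < 0 := by
    have hmem : v i ∈ closedCone v :=
      ⟨Pi.single i 1, fun j => by by_cases h : j = i <;> simp [h],
        by simp [Pi.single_apply]⟩
    simpa only [mul_comm] using hz _ hmem (hv.ne_zero i)
  set A : Matrix (Fin n) (Fin n) ℝ := Matrix.of fun i j => v j i with hA
  have hinj : Function.Injective (Matrix.toLin' A) := by
    have hcol : LinearIndependent ℝ A.col := hv
    exact Matrix.mulVec_injective_iff.2 hcol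
  let L : (Fin n → ℝ) →L[ℝ] (Fin n → ℝ) := LinearMap.toContinuousLinearMap (Matrix.toLin' A)
  have hdet : L.det = A.det := by
    simp [L, ContinuousLinearMap.det]
  have hmeas : MeasurableSet (Set.univ.pi fun _ : Fin n => Set.Ici (0 : ℝ)) :=
    MeasurableSet.univ_pi fun _ => measurableSet_Ici
  have hderiv : ∀ x ∈ (Set.univ.pi fun _ : Fin n => Set.Ici (0 : ℝ)),
      HasFDerivWithinAt (Matrix.toLin' A) L (Set.univ.pi fun _ : Fin n => Set.Ici (0 : ℝ)) x :=
    fun x _ => L.hasFDerivWithinAt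
  have hpi : (volume : Measure (Fin n → ℝ)).restrict (Set.univ.pi fun _ => Set.Ici (0 : ℝ)) =
      Measure.pi fun _ => (volume : Measure ℝ).restrict (Set.Ici 0) := by
    rw [volume_pi, Measure.restrict_pi_pi]
  rw [closedCone_eq_image]
  constructor
  · rw [integrableOn_image_iff_integrableOn_abs_det_fderiv_smul volume hmeas hderiv hinj.injOn]
    simp only [hA, exp_sum_toLin']
    have hprod : IntegrableOn (fun a : Fin n → ℝ => ∏ i, Real.exp ((∑ t, v i t * z t) * a i))
        (Set.univ.pi fun _ => Set.Ici 0) := by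
      rw [IntegrableOn, hpi]
      refine Integrable.fintype_prod_dep (f := fun i s => Real.exp ((∑ t, v i t * z t) * s))
        fun i => ?_
      exact (integrableOn_Ici_iff_integrableOn_Ioi).2 (integrableOn_exp_mul_Ioi (hneg i) 0)
    exact hprod.smul |L.det|
  · rw [integral_image_eq_integral_abs_det_fderiv_smul volume hmeas hderiv hinj.injOn]
    simp only [hA, exp_sum_toLin', hdet]
    rw [integral_smul, hpi,
      integral_fintype_prod_eq_prod (fun i s => Real.exp ((∑ t, v i t * z t) * s))]
    simp only [integral_Ici_eq_integral_Ioi, integral_exp_mul_Ioi (hneg _), mul_zero,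
      Real.exp_zero, Finset.prod_div_distrib, Finset.prod_const, Finset.card_univ,
      Fintype.card_fin, smul_eq_mul]
    ring
end
end

section
/- Let 𝔽 be a subfield of ℝ and let C ⊆ ℝ^n be a closed cone spanned by finitely many vectors of 𝔽^n. If C contains a line through the origin, then there exist a linear subspace L (spanned by vectors of 𝔽^n) with L ⊆ C and a strongly convex closed cone C′ (spanned by vectors of 𝔽^n) contained in the orthogonal complement of L inside the linear span of C, such that C = {l + c′ : l ∈ L, c′ ∈ C′}. -/
/-!
Let `L` be the span of those generators `v i` with `-v i ∈ C`. Both `L ⊆ C` and the converse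
inclusion `C ∩ -C ⊆ L` hold (`mem_span_of_neg_mem`): if `∑ a i • v i` and its negative
`∑ b i • v i` lie in `C`, then `∑ (a i + b i) • v i = 0`, and every `v i` with `a i > 0` has its
negative in `C`, as one sees by dividing by `a i + b i`.

Take for `C'` the cone on the orthogonal projections `w i` of the `v i` to the complement of `L`.
Since `v i - w i ∈ L`, one gets `C = L + C'` and `C' ⊆ C`; a line in `C'` would lie in
`C ∩ -C ⊆ L` and be orthogonal to `L`, which is impossible. The entries of `w i` stay in the
subfield because Gram–Schmidt without normalisation uses only field operations
(`exists_orthogonal_projection`).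
-/

open scoped BigOperators

noncomputable section

/-- The set `C` contains a line through the origin. -/
def ContainsLine {k : ℕ} (C : Set (Fin k → ℝ)) : Prop :=
  ∃ x : Fin k → ℝ, x ≠ 0 ∧ ∀ t : ℝ, t • x ∈ C

open scoped Matrix

section ClosedCone

variable {k m : ℕ} {v : Fin m → (Fin k → ℝ)}

lemma closedCone_zero_mem : (0 : Fin k → ℝ) ∈ closedCone v :=
  ⟨0, fun _ => le_rfl, by simp⟩

lemma closedCone_add_mem {x y : Fin k → ℝ} (hx : x ∈ closedCone v) (hy : y ∈ closedCone v) :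
    x + y ∈ closedCone v := by
  obtain ⟨a, ha, rfl⟩ := hx
  obtain ⟨b, hb, rfl⟩ := hy
  exact ⟨a + b, fun i => add_nonneg (ha i) (hb i), by simp [add_smul, Finset.sum_add_distrib]⟩

lemma closedCone_smul_mem {x : Fin k → ℝ} {c : ℝ} (hc : 0 ≤ c) (hx : x ∈ closedCone v) :
    c • x ∈ closedCone v := by
  obtain ⟨a, ha, rfl⟩ := hx
  exact ⟨fun i => c * a i, fun i => mul_nonneg hc (ha i), by simp [Finset.smul_sum, mul_smul]⟩

lemma closedCone_generator_mem (i : Fin m) : v i ∈ closedCone v :=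
  ⟨Pi.single i 1, fun j => by by_cases h : j = i <;> simp [h],
    by simp [Pi.single_apply, ite_smul]⟩

lemma closedCone_subset {p : ℕ} {w : Fin p → (Fin k → ℝ)} (hw : ∀ i, w i ∈ closedCone v) :
    closedCone w ⊆ closedCone v := by
  rintro _ ⟨a, ha, rfl⟩
  exact Finset.sum_induction _ (· ∈ closedCone v) (fun _ _ => closedCone_add_mem)
    closedCone_zero_mem (fun i _ => closedCone_smul_mem (ha i) (hw i))

lemma span_subset_closedCone {S : Set (Fin k → ℝ)}
    (hS : ∀ x ∈ S, x ∈ closedCone v ∧ -x ∈ closedCone v) :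
    (Submodule.span ℝ S : Set (Fin k → ℝ)) ⊆ closedCone v := by
  intro x hx
  -- Closure under negative scalars requires tracking `-x` along with `x`.
  suffices h : x ∈ closedCone v ∧ -x ∈ closedCone v from h.1
  induction hx using Submodule.span_induction with
  | mem x hx => exact hS x hx
  | zero => simpa using closedCone_zero_mem
  | add x y _ _ hx hy =>
    exact ⟨closedCone_add_mem hx.1 hy.1, by
      rw [neg_add]; exact closedCone_add_mem hx.2 hy.2⟩
  | smul c x _ hx =>
    rcases le_total 0 c with hc | hc
    · exact ⟨closedCone_smul_mem hc hx.1, by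
        rw [← smul_neg]; exact closedCone_smul_mem hc hx.2⟩
    · have hc' : 0 ≤ -c := by linarith
      exact ⟨by simpa using closedCone_smul_mem hc' hx.2,
        by simpa using closedCone_smul_mem hc' hx.1⟩

/-- The lineality space `C ∩ -C` is spanned by the generators it contains. -/
lemma mem_span_of_neg_mem {S : Set (Fin k → ℝ)} (hS : ∀ i, -v i ∈ closedCone v → v i ∈ S)
    {x : Fin k → ℝ} (hx : x ∈ closedCone v) (hnx : -x ∈ closedCone v) :
    x ∈ Submodule.span ℝ S := by
  obtain ⟨a, ha, rfl⟩ := hx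
  obtain ⟨b, hb, hab⟩ := hnx
  refine Submodule.sum_mem _ fun i _ => ?_
  rcases (ha i).eq_or_lt with h0 | hpos
  · simp [← h0]
  refine Submodule.smul_mem _ _ (Submodule.subset_span (hS i ?_))
  have hsum : ∑ j, (a j + b j) • v j = 0 := by
    simp only [add_smul, Finset.sum_add_distrib]
    rw [← hab, add_neg_cancel]
  have hc : 0 < a i + b i := add_pos_of_pos_of_nonneg hpos (hb i)
  have hrest : ∑ j ∈ Finset.univ.erase i, (a j + b j) • v j ∈ closedCone v :=
    Finset.sum_induction _ (· ∈ closedCone v) (fun _ _ => closedCone_add_mem)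
      closedCone_zero_mem (fun j _ => closedCone_smul_mem (add_nonneg (ha j) (hb j))
        (closedCone_generator_mem j))
  rw [← Finset.add_sum_erase _ _ (Finset.mem_univ i)] at hsum
  rw [eq_neg_of_add_eq_zero_right hsum] at hrest
  have := closedCone_smul_mem (inv_nonneg.2 hc.le) hrest
  rwa [smul_neg, smul_smul, inv_mul_cancel₀ hc.ne', one_smul] at this

end ClosedCone

lemma dotProduct_eq_zero_of_mem_span {n : ℕ} {S : Set (Fin n → ℝ)} {w y : Fin n → ℝ}
    (hw : ∀ x ∈ S, w ⬝ᵥ x = 0) (hy : y ∈ Submodule.span ℝ S) : w ⬝ᵥ y = 0 := by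
  induction hy using Submodule.span_induction with
  | mem x hx => exact hw x hx
  | zero => simp
  | add x y _ _ hx hy => rw [dotProduct_add, hx, hy, add_zero]
  | smul c x _ hx => rw [dotProduct_smul, hx, smul_zero]

lemma dotProduct_mem_subfield (F : Subfield ℝ) {n : ℕ} {x y : Fin n → ℝ} (hx : ∀ j, x j ∈ F)
    (hy : ∀ j, y j ∈ F) : x ⬝ᵥ y ∈ F :=
  sum_mem fun j _ => mul_mem (hx j) (hy j)

/-- Gram–Schmidt over a subfield: the component `w` of `x` orthogonal to the span of finitely many
vectors with entries in `F` again has entries in `F`. -/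
lemma exists_orthogonal_projection (F : Subfield ℝ) {n p : ℕ} (u : Fin p → (Fin n → ℝ))
    (hu : ∀ i j, u i j ∈ F) (s : Finset (Fin p)) :
    ∀ x : Fin n → ℝ, (∀ j, x j ∈ F) → ∃ w : Fin n → ℝ, (∀ j, w j ∈ F) ∧
      x - w ∈ Submodule.span ℝ (u '' s) ∧ ∀ i ∈ s, w ⬝ᵥ u i = 0 := by
  classical
  induction s using Finset.induction_on with
  | empty => exact fun x hx => ⟨x, hx, by simp, by simp⟩
  | insert i s _ ih =>
    intro x hx
    obtain ⟨r, hrF, hrs, hr⟩ := ih (u i) (hu i)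
    obtain ⟨w, hwF, hws, hw⟩ := ih x hx
    have hmono : Submodule.span ℝ (u '' s) ≤ Submodule.span ℝ (u '' (insert i s : Finset _)) :=
      Submodule.span_mono (Set.image_mono (by simp))
    have hrmem : r ∈ Submodule.span ℝ (u '' (insert i s : Finset _)) := by
      have h : u i ∈ Submodule.span ℝ (u '' (insert i s : Finset _)) :=
        Submodule.subset_span ⟨i, by simp, rfl⟩
      simpa using Submodule.sub_mem _ h (hmono hrs)
    -- If `r = 0`, the coefficient is the junk value `_ / 0 = 0`, and `w` itself is the answer.
    set c : ℝ := (w ⬝ᵥ r) / (r ⬝ᵥ r) with hc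
    have hcF : c ∈ F :=
      div_mem (dotProduct_mem_subfield F hwF hrF) (dotProduct_mem_subfield F hrF hrF)
    have hs : ∀ j ∈ s, (w - c • r) ⬝ᵥ u j = 0 := fun j hj => by
      rw [sub_dotProduct, smul_dotProduct, hw j hj, hr j hj, smul_zero, sub_zero]
    refine ⟨w - c • r, fun j => sub_mem (hwF j) (mul_mem hcF (hrF j)), ?_, ?_⟩
    · rw [← sub_add]
      exact Submodule.add_mem _ (hmono hws) (Submodule.smul_mem _ _ hrmem)
    · intro j hj
      rcases Finset.mem_insert.1 hj with rfl | hj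
      · have h1 : (w - c • r) ⬝ᵥ r = 0 := by
          rw [sub_dotProduct, smul_dotProduct, smul_eq_mul, hc]
          by_cases h0 : r ⬝ᵥ r = 0
          · simp [dotProduct_self_eq_zero.1 h0]
          · rw [div_mul_cancel₀ _ h0, sub_self]
        have h2 : (w - c • r) ⬝ᵥ (u j - r) = 0 :=
          dotProduct_eq_zero_of_mem_span (by rintro _ ⟨j, hj, rfl⟩; exact hs j hj) hrs
        rwa [dotProduct_sub, h1, sub_zero] at h2
      · exact hs j hj

/-- a closed cone `C ⊆ ℝ^n` spanned by vectors of `𝔽^n` that contains a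
line through the origin decomposes as `C = L + C'` with `L ⊆ C` a linear subspace
spanned by vectors of `𝔽^n` and `C'` a strongly convex closed cone spanned by vectors
of `𝔽^n`, contained in the orthogonal complement of `L` inside the linear span of `C`. -/
theorem statement9 (F : Subfield ℝ) (n m : ℕ) (v : Fin m → (Fin n → ℝ))
    (hF : ∀ i j, v i j ∈ F) (hline : ContainsLine (closedCone v)) :
    ∃ (p : ℕ) (lv : Fin p → (Fin n → ℝ)) (q : ℕ) (cv : Fin q → (Fin n → ℝ)),
      (∀ i j, lv i j ∈ F) ∧ (∀ i j, cv i j ∈ F) ∧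
      (Submodule.span ℝ (Set.range lv) : Set (Fin n → ℝ)) ⊆ closedCone v ∧
      ¬ ContainsLine (closedCone cv) ∧
      closedCone cv ⊆ {x | x ∈ Submodule.span ℝ (closedCone v) ∧
        ∀ y ∈ Submodule.span ℝ (Set.range lv), ∑ t, x t * y t = 0} ∧
      closedCone v = {z | ∃ l ∈ (Submodule.span ℝ (Set.range lv) : Set (Fin n → ℝ)),
        ∃ c ∈ closedCone cv, z = l + c} := by
  classical
  -- Generators outside the lineality space are replaced by `0`, which keeps the index type.
  set lv : Fin m → (Fin n → ℝ) := fun i => if -v i ∈ closedCone v then v i else 0 with hlv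
  have hlvF : ∀ i j, lv i j ∈ F := fun i j => by
    by_cases h : -v i ∈ closedCone v
    · simpa [hlv, h] using hF i j
    · simp [hlv, h]
  have hLC : (Submodule.span ℝ (Set.range lv) : Set (Fin n → ℝ)) ⊆ closedCone v := by
    refine span_subset_closedCone ?_
    rintro _ ⟨i, rfl⟩
    by_cases h : -v i ∈ closedCone v
    · simpa [hlv, h] using closedCone_generator_mem i
    · simpa [hlv, h] using closedCone_zero_mem
  choose cv hcvF hcvL hcvo using fun i =>
    exists_orthogonal_projection F lv hlvF Finset.univ (v i) (hF i)
  simp only [Finset.coe_univ, Set.image_univ] at hcvL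
  have hcvC : closedCone cv ⊆ closedCone v := closedCone_subset fun i => by
    have := closedCone_add_mem (closedCone_generator_mem i) (hLC (Submodule.neg_mem _ (hcvL i)))
    simpa using this
  have horth : ∀ x ∈ closedCone cv, ∀ y ∈ Submodule.span ℝ (Set.range lv), x ⬝ᵥ y = 0 := by
    rintro _ ⟨a, _, rfl⟩ y hy
    rw [sum_dotProduct]
    refine Finset.sum_eq_zero fun i _ => ?_
    rw [smul_dotProduct, dotProduct_eq_zero_of_mem_span _ hy, smul_zero]
    rintro _ ⟨j, rfl⟩
    exact hcvo i j (Finset.mem_univ j)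
  refine ⟨m, lv, m, cv, hlvF, hcvF, hLC, ?_, fun x hx =>
    ⟨Submodule.subset_span (hcvC hx), horth x hx⟩, ?_⟩
  · rintro ⟨x, hx0, hx⟩
    have h1 : x ∈ closedCone cv := by simpa using hx 1
    have h2 : -x ∈ closedCone cv := by simpa using hx (-1)
    refine hx0 (dotProduct_self_eq_zero.1 (horth x h1 x ?_))
    exact mem_span_of_neg_mem (S := Set.range lv) (fun i hi => ⟨i, by simp [hlv, hi]⟩) (hcvC h1)
      (hcvC h2)
  · ext z
    constructor
    · rintro ⟨a, ha, rfl⟩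
      refine ⟨∑ i, a i • (v i - cv i),
        Submodule.sum_mem _ fun i _ => Submodule.smul_mem _ _ (hcvL i),
        ∑ i, a i • cv i, ⟨a, ha, rfl⟩, ?_⟩
      simp [smul_sub]
    · rintro ⟨l, hl, c, hc, rfl⟩
      exact closedCone_add_mem (hLC hl) (hcvC hc)
end
end

section
/- Let 𝔽 be a subfield of ℝ and let C_1, …, C_r be pairwise distinct simplicial closed cones contained in ℝ^n_{≥0}, each spanned by linearly independent vectors of 𝔽^n_{≥0}, all spanning the same linear subspace of ℝ^n, and such that for all i ≠ j the intersection C_i ∩ C_j is a face of both C_i and C_j. Then the rational functions Φ(C_1), …, Φ(C_r) are linearly independent over 𝔽 in 𝔽(z_1, …, z_n). -/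
/-!
Put `b i = a i * w(u i)`; since `w(u i) ≠ 0`, it suffices to show that a relation
`∑ i, b i / ∏ a, L (u i a) = 0` forces `b = 0`. Evaluating at a point `z` turns it into an
identity between real numbers in which `L v` becomes `⟪v, z⟫`, valid for every `z` off finitely
many hyperplanes (`sum_eval_eq_zero`). The face condition enters only through its consequence
that distinct cones have disjoint relative interiors (`eq_of_isFace_of_pos`), and the common span
only through the fact that all cones have the same number `k` of generators.

The heart is `cone_independence`, an induction on `k` for simplicial cones with disjoint relative
interiors on whose generators some linear functional `l` is positive. Discard the cones with
`b i = 0`. If any remain, let `p` be a generator, scaled to `l p = 1`, of largest norm among the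
generators so scaled. By the equality case of Cauchy-Schwarz, `l' = ‖p‖² l - ⟪p, ·⟫` vanishes on
the ray of `p` and is positive on every generator off that ray. Multiply the relation by `⟪p, z⟫`
and let `z` tend to the hyperplane `p^⊥`: only the cones having the ray of `p` as an edge survive,
and what is left is the same kind of relation between their orthogonal projections to `p^⊥`.
These are simplicial with `k - 1` generators, `l'` is positive on them, and their relative
interiors are disjoint because a point common to two of them lifts, after adding a large multiple
of `p`, to a point common to the original interiors. By induction the coefficients of these
cones vanish, a contradiction.
-/

open scoped BigOperators

noncomputable section

/-- The field of rational functions `ℝ(z₁, …, z_n)`. -/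
abbrev RatFun (n : ℕ) := FractionRing (MvPolynomial (Fin n) ℝ)

/-- The linear form `L_v = v₁ z₁ + ⋯ + v_n z_n` as a rational function. -/
def Lform {n : ℕ} (v : Fin n → ℝ) : RatFun n :=
  algebraMap (MvPolynomial (Fin n) ℝ) (RatFun n)
    (∑ j, MvPolynomial.C (v j) * MvPolynomial.X j)

/-- `w(v₁, …, v_k)`: the sum of the absolute values of the determinants of all `k × k`
minors of the `n × k` matrix whose columns are `v₁, …, v_k`. -/
def wWeight {n k : ℕ} (v : Fin k → (Fin n → ℝ)) : ℝ :=
  ∑ T : Finset (Fin n), if h : T.card = k then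
    |(Matrix.of fun i j : Fin k => v j ((T.orderIsoOfFin h i : Fin n))).det| else 0

/-- `Φ(⟨v₁,…,v_k⟩^c) = w(v₁,…,v_k) / (L_{v₁} ⋯ L_{v_k})`. -/
def Phi {n k : ℕ} (v : Fin k → (Fin n → ℝ)) : RatFun n :=
  algebraMap (MvPolynomial (Fin n) ℝ) (RatFun n) (MvPolynomial.C (wWeight v)) /
    ∏ i, Lform (v i)

/-! ### Independence for cones with disjoint relative interiors -/

section ConeIndependence

open Filter Topology

variable {E : Type*} [NormedAddCommGroup E] [InnerProductSpace ℝ E]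

/-- Orthogonal projection of `E` along the line through `p` (the identity when `p = 0`). -/
def projAlong (p : E) : E →ₗ[ℝ] E :=
  LinearMap.id - (‖p‖ ^ 2)⁻¹ • (innerₛₗ ℝ p).smulRight p

theorem projAlong_apply (p x : E) :
    projAlong p x = x - ((‖p‖ ^ 2)⁻¹ * inner ℝ p x) • p := by
  simp [projAlong, smul_smul]

theorem inner_projAlong (p x z : E) :
    inner ℝ x (projAlong p z) = inner ℝ (projAlong p x) z := by
  simp only [projAlong_apply, inner_sub_left, inner_sub_right, inner_smul_left, inner_smul_right]
  simp [real_inner_comm]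
  ring

theorem projAlong_self {p : E} (hp : p ≠ 0) : projAlong p p = 0 := by
  have : ‖p‖ ≠ 0 := norm_ne_zero_iff.2 hp
  rw [projAlong_apply, real_inner_self_eq_norm_sq, inv_mul_cancel₀ (by positivity), one_smul,
    sub_self]

/-- A real vector space is not a finite union of hyperplanes. -/
theorem exists_inner_ne_zero (G : Finset E) (hG : ∀ g ∈ G, g ≠ 0) :
    ∃ z : E, ∀ g ∈ G, inner ℝ g z ≠ 0 := by
  classical
  induction G using Finset.induction_on with
  | empty => exact ⟨0, by simp⟩
  | insert g G _ ih =>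
    obtain ⟨z, hz⟩ := ih fun g hg => hG g (Finset.mem_insert_of_mem hg)
    have hg : inner ℝ g g ≠ (0 : ℝ) := inner_self_ne_zero.2 (hG g (Finset.mem_insert_self _ _))
    have hev : ∀ᶠ t : ℝ in 𝓝[≠] 0, ∀ h ∈ G, inner ℝ h (z + t • g) ≠ 0 := by
      refine (Finset.eventually_all G).2 fun h hh => nhdsWithin_le_nhds ?_
      have : ContinuousAt (fun t : ℝ => inner ℝ h (z + t • g)) 0 := by fun_prop
      exact this.eventually_ne (by simpa using hz h hh)
    have hev' : ∀ᶠ t : ℝ in 𝓝[≠] 0, inner ℝ g (z + t • g) ≠ 0 := by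
      by_cases h0 : inner ℝ g z = 0
      · filter_upwards [self_mem_nhdsWithin] with t ht
        simpa [inner_add_right, inner_smul_right, h0, hG g] using ht
      · refine nhdsWithin_le_nhds ?_
        have : ContinuousAt (fun t : ℝ => inner ℝ g (z + t • g)) 0 := by fun_prop
        exact this.eventually_ne (by simpa using h0)
    obtain ⟨t, ht, ht'⟩ := (hev.and hev').exists
    refine ⟨z + t • g, fun h hh => ?_⟩
    rcases Finset.mem_insert.1 hh with rfl | hh
    exacts [ht', ht h hh]

/-- Simplicial cones with `k` generators, disjoint relative interiors and a common functional `l`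
positive on all generators have linearly independent functions `z ↦ 1 / ∏ a, ⟪u i a, z⟫`. The
relation is only required off the hyperplanes orthogonal to the finite set `G`, which contains all
generators; allowing `G` to be larger lets the induction keep the hyperplanes coming from cones
that have dropped out. -/
theorem cone_independence (k : ℕ) : ∀ {ι : Type} (S : Finset ι) (u : ι → Fin k → E) (G : Finset E)
    (l : E →ₗ[ℝ] ℝ) (b : ι → ℝ),
    (∀ i ∈ S, LinearIndependent ℝ (u i)) →
    (∀ i ∈ S, ∀ a, 0 < l (u i a)) →
    (∀ i ∈ S, ∀ j ∈ S, i ≠ j → ∀ c d : Fin k → ℝ, (∀ a, 0 < c a) → (∀ a, 0 < d a) →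
      ∑ a, c a • u i a ≠ ∑ a, d a • u j a) →
    (∀ g ∈ G, g ≠ 0) → (∀ i ∈ S, ∀ a, u i a ∈ G) →
    (∀ z : E, (∀ g ∈ G, inner ℝ g z ≠ 0) → ∑ i ∈ S, b i * ∏ a, (inner ℝ (u i a) z)⁻¹ = 0) →
    ∀ i ∈ S, b i = 0 := by
  classical
  induction k with
  | zero =>
    intro ι S u G l b hli hl hdis hG hGu hz i hi
    have hS : ∀ j ∈ S, j = i := by
      intro j hj
      by_contra hne
      exact hdis j hj i hi hne 0 0 (fun a => a.elim0) (fun a => a.elim0) (by simp)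
    have hS' : S = {i} := Finset.eq_singleton_iff_unique_mem.2 ⟨hi, hS⟩
    obtain ⟨z, hzG⟩ := exists_inner_ne_zero G hG
    simpa [hS'] using hz z hzG
  | succ k ih =>
    intro ι S₀ u G l b hli hl hdis hG hGu hz
    by_contra! hcon
    obtain ⟨i₁, hi₁, hb₁⟩ := hcon
    -- only the cones with nonzero coefficient matter
    set S := S₀.filter fun i => b i ≠ 0 with hS
    have hSS : ∀ i ∈ S, i ∈ S₀ := fun i hi => (Finset.mem_filter.1 hi).1
    have hSb : ∀ i ∈ S, b i ≠ 0 := fun i hi => (Finset.mem_filter.1 hi).2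
    obtain ⟨⟨i₀, a₀⟩, hmem, hmax⟩ := Finset.exists_max_image
      (S ×ˢ (Finset.univ : Finset (Fin (k + 1)))) (fun q => ‖u q.1 q.2‖ / l (u q.1 q.2))
      ⟨(i₁, 0), by simp [hS, hi₁, hb₁]⟩
    have hi₀ : i₀ ∈ S := (Finset.mem_product.1 hmem).1
    have hl₀ := hl i₀ (hSS _ hi₀) a₀
    set p : E := (l (u i₀ a₀))⁻¹ • u i₀ a₀ with hp
    have hlp : l p = 1 := by simp [hp, hl₀.ne']
    have hp0 : p ≠ 0 := by rintro h; simp [h] at hlp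
    have hpn : 0 < ‖p‖ := norm_pos_iff.2 hp0
    have hmax' : ∀ i ∈ S, ∀ a, ‖u i a‖ ≤ ‖p‖ * l (u i a) := by
      intro i hi a
      have h1 := hmax (i, a) (by simp [hi])
      have h2 : ‖p‖ = ‖u i₀ a₀‖ / l (u i₀ a₀) := by
        rw [hp, norm_smul, norm_inv, Real.norm_of_nonneg hl₀.le, inv_mul_eq_div]
      rw [h2]
      exact (div_le_iff₀ (hl i (hSS i hi) a)).1 h1
    have hker : ∀ x, projAlong p x = 0 → x = l x • p := by
      intro x hx
      rw [projAlong_apply, sub_eq_zero] at hx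
      have := congrArg l hx
      rw [map_smul, hlp, smul_eq_mul, mul_one] at this
      rw [this]; exact hx
    -- the functional exposing the ray through `p`
    set l' : E →ₗ[ℝ] ℝ := ‖p‖ ^ 2 • l - innerₛₗ ℝ p with hl'
    have hl'app : ∀ x, l' x = ‖p‖ ^ 2 * l x - inner ℝ p x := by intro x; simp [hl']
    have hl'p : l' p = 0 := by rw [hl'app, hlp, real_inner_self_eq_norm_sq]; ring
    have hl'proj : ∀ x, l' (projAlong p x) = l' x := by
      intro x; rw [projAlong_apply, map_sub, map_smul, hl'p]; simp
    have hl'pos : ∀ i ∈ S, ∀ a, u i a ≠ l (u i a) • p → 0 < l' (u i a) := by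
      intro i hi a hne
      rw [hl'app, sub_pos]
      have hm := hmax' i hi a
      have hCS := real_inner_le_norm p (u i a)
      have hle : ‖p‖ * ‖u i a‖ ≤ ‖p‖ ^ 2 * l (u i a) := by nlinarith
      refine lt_of_le_of_ne (hCS.trans hle) fun heq => hne ?_
      have h1 : inner ℝ p (u i a) = ‖p‖ * ‖u i a‖ := le_antisymm hCS (heq ▸ hle)
      have h2 := inner_eq_norm_mul_iff_real.1 h1
      have h3 : ‖u i a‖ = ‖p‖ * l (u i a) := by
        apply mul_left_cancel₀ hpn.ne'
        rw [← h1, heq]; ring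
      rw [h3, mul_smul] at h2
      exact (smul_right_injective E hpn.ne' h2).symm
    -- the cones having the ray through `p` as an edge
    set T := S.filter fun i => ∃ a, u i a = l (u i a) • p with hT
    have hTS : ∀ i ∈ T, i ∈ S := fun i hi => (Finset.mem_filter.1 hi).1
    have hA : ∀ i, ∃ a, i ∈ T → u i a = l (u i a) • p := by
      intro i
      by_cases hi : i ∈ T
      · obtain ⟨a, ha⟩ := (Finset.mem_filter.1 hi).2
        exact ⟨a, fun _ => ha⟩
      · exact ⟨0, fun h => absurd h hi⟩
    choose A hA using hA
    have hi₀T : i₀ ∈ T := by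
      refine Finset.mem_filter.2 ⟨hi₀, a₀, ?_⟩
      rw [hp, smul_smul, mul_inv_cancel₀ hl₀.ne', one_smul]
    set u' : ι → Fin k → E := fun i a => projAlong p (u i ((A i).succAbove a)) with hu'
    have hAl : ∀ i ∈ T, 0 < l (u i (A i)) := fun i hi => hl i (hSS i (hTS i hi)) _
    -- `projAlong p` only changes a combination by a multiple of `p`
    have hcomb : ∀ i (c : Fin k → ℝ), ∃ s : ℝ,
        ∑ a, c a • u' i a = ∑ a, c a • u i ((A i).succAbove a) - s • p := by
      intro i c
      refine ⟨(‖p‖ ^ 2)⁻¹ * inner ℝ p (∑ a, c a • u i ((A i).succAbove a)), ?_⟩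
      rw [← projAlong_apply, map_sum]
      simp [hu']
    have hAe : ∀ i ∈ T, (l (u i (A i)))⁻¹ • u i (A i) = p := by
      intro i hi
      conv_lhs => rw [hA i hi]
      rw [map_smul, hlp, smul_smul, smul_eq_mul, mul_one, inv_mul_cancel₀ (hAl i hi).ne', one_smul]
    have hli' : ∀ i ∈ T, LinearIndependent ℝ (u' i) := by
      intro i hi
      rw [Fintype.linearIndependent_iff]
      intro c hc a
      obtain ⟨s, hs⟩ := hcomb i c
      rw [hc] at hs
      have h := Fintype.linearIndependent_iff.1 (hli i (hSS i (hTS i hi)))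
        ((A i).insertNth (-s * (l (u i (A i)))⁻¹) c) (by
          rw [Fin.sum_univ_succAbove _ (A i)]
          simp only [Fin.insertNth_apply_same, Fin.insertNth_apply_succAbove]
          rw [mul_smul, hAe i hi, neg_smul, neg_add_eq_sub]
          exact hs.symm) ((A i).succAbove a)
      simpa using h
    refine hSb i₀ hi₀ ?_
    have key := ih T u' ((G.image (projAlong p)).filter (· ≠ 0)) l'
      (fun i => b i * (l (u i (A i)))⁻¹) hli' ?_ ?_ ?_ ?_ ?_ i₀ hi₀T
    · simpa [(hAl i₀ hi₀T).ne'] using key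
    · intro i hi a
      rw [hu']; simp only; rw [hl'proj]
      refine hl'pos i (hTS i hi) _ fun h => (hli' i hi).ne_zero a ?_
      rw [hu']; simp only; rw [h, map_smul, projAlong_self hp0, smul_zero]
    · intro i hi j hj hij c d hc hd heq
      obtain ⟨s, hs⟩ := hcomb i c
      obtain ⟨t, ht⟩ := hcomb j d
      rw [hs, ht] at heq
      -- large multiples of `p` on both sides compensate `s • p` and `t • p`
      refine hdis i (hSS i (hTS i hi)) j (hSS j (hTS j hj)) hij
        ((A i).insertNth ((|s| + |t| + 1 - s) * (l (u i (A i)))⁻¹) c)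
        ((A j).insertNth ((|s| + |t| + 1 - t) * (l (u j (A j)))⁻¹) d) ?_ ?_ ?_
      · intro a
        refine Fin.succAboveCases (A i) ?_ (fun a => ?_) a
        · have := abs_nonneg t
          have := le_abs_self s
          have := hAl i hi
          simp only [Fin.insertNth_apply_same]
          exact mul_pos (by linarith) (by positivity)
        · simpa using hc a
      · intro a
        refine Fin.succAboveCases (A j) ?_ (fun a => ?_) a
        · have := abs_nonneg s
          have := le_abs_self t
          have := hAl j hj
          simp only [Fin.insertNth_apply_same]
          exact mul_pos (by linarith) (by positivity)
        · simpa using hd a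
      · rw [Fin.sum_univ_succAbove _ (A i), Fin.sum_univ_succAbove _ (A j)]
        simp only [Fin.insertNth_apply_same, Fin.insertNth_apply_succAbove, mul_smul, hAe i hi,
          hAe j hj]
        rw [sub_smul, sub_smul, sub_add_eq_add_sub, add_sub_assoc, heq]
        abel
    · intro g hg
      exact (Finset.mem_filter.1 hg).2
    · intro i hi a
      exact Finset.mem_filter.2 ⟨Finset.mem_image_of_mem _ (hGu i (hSS i (hTS i hi)) _),
        (hli' i hi).ne_zero a⟩
    · intro z hzG
      -- approach the point `projAlong p z` of the hyperplane `p^⊥` in the direction `p`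
      have hin : ∀ g (t : ℝ), inner ℝ g (projAlong p z + t • p)
          = inner ℝ (projAlong p g) z + t * inner ℝ g p := by
        intro g t
        rw [inner_add_right, inner_projAlong, inner_smul_right]
      have hzG' : ∀ g ∈ G, projAlong p g ≠ 0 → inner ℝ (projAlong p g) z ≠ 0 := fun g hg h =>
        hzG _ (Finset.mem_filter.2 ⟨Finset.mem_image_of_mem _ hg, h⟩)
      have hlim : ∀ g ∈ G, projAlong p g ≠ 0 → Tendsto
          (fun t : ℝ => (inner ℝ g (projAlong p z + t • p))⁻¹) (𝓝[≠] 0)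
          (𝓝 (inner ℝ (projAlong p g) z)⁻¹) := by
        intro g hg h
        refine Tendsto.inv₀ ?_ (hzG' g hg h)
        have : ContinuousAt (fun t : ℝ => inner ℝ g (projAlong p z + t • p)) 0 := by fun_prop
        have h2 := this.tendsto
        simp only [hin, zero_mul, add_zero] at h2 ⊢
        exact h2.mono_left nhdsWithin_le_nhds
      have hev : ∀ᶠ t : ℝ in 𝓝[≠] 0, ∀ g ∈ G, inner ℝ g (projAlong p z + t • p) ≠ 0 := by
        refine (Finset.eventually_all G).2 fun g hg => ?_
        by_cases h : projAlong p g = 0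
        · filter_upwards [self_mem_nhdsWithin] with t ht
          rw [hin, h, inner_zero_left, zero_add]
          refine mul_ne_zero ht ?_
          have hg0 := hG g hg
          rw [hker g h] at hg0 ⊢
          rw [inner_smul_left, real_inner_self_eq_norm_sq]
          simpa [hp0] using hg0
        · exact ((hlim g hg h).eventually_ne (inv_ne_zero (hzG' g hg h))).mono
            fun t ht h0 => ht (by rw [h0, inv_zero])
      -- the limit of each term multiplied by the linear form of `p`
      have hterm : ∀ i ∈ S, Tendsto (fun t : ℝ => (t * ‖p‖ ^ 2) *
          (b i * ∏ a, (inner ℝ (u i a) (projAlong p z + t • p))⁻¹)) (𝓝[≠] 0)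
          (𝓝 (if ∃ a, u i a = l (u i a) • p then
            b i * (l (u i (A i)))⁻¹ * ∏ a, (inner ℝ (u' i a) z)⁻¹ else 0)) := by
        intro i hi
        split_ifs with h
        · have hiT : i ∈ T := Finset.mem_filter.2 ⟨hi, h⟩
          have h1 : Tendsto (fun t : ℝ => b i * (l (u i (A i)))⁻¹ *
              ∏ a, (inner ℝ (u i ((A i).succAbove a)) (projAlong p z + t • p))⁻¹) (𝓝[≠] 0)
              (𝓝 (b i * (l (u i (A i)))⁻¹ * ∏ a, (inner ℝ (u' i a) z)⁻¹)) :=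
            (tendsto_finsetProd _ fun a _ =>
              hlim _ (hGu i (hSS i hi) _) ((hli' i hiT).ne_zero a)).const_mul _
          refine h1.congr' ?_
          filter_upwards [self_mem_nhdsWithin] with t ht
          have ht : t ≠ 0 := ht
          rw [Fin.prod_univ_succAbove _ (A i)]
          have e : inner ℝ (u i (A i)) (projAlong p z + t • p)
              = l (u i (A i)) * (t * ‖p‖ ^ 2) := by
            rw [hin, hA i hiT, map_smul, projAlong_self hp0, smul_zero, inner_zero_left, zero_add,
              map_smul, hlp, inner_smul_left, real_inner_self_eq_norm_sq]
            simp; ring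
          rw [e]
          have := (hAl i hiT).ne'
          field_simp
        · push Not at h
          have h1 : Tendsto (fun t : ℝ => (t * ‖p‖ ^ 2)) (𝓝[≠] 0) (𝓝 0) := by
            have : ContinuousAt (fun t : ℝ => t * ‖p‖ ^ 2) 0 := by fun_prop
            have h2 := this.tendsto
            rw [zero_mul] at h2
            exact h2.mono_left nhdsWithin_le_nhds
          have h2 := (tendsto_finsetProd Finset.univ fun a _ =>
            hlim _ (hGu i (hSS i hi) a) (fun h0 => h a (hker _ h0))).const_mul (b i)
          simpa using h1.mul h2
      have hsum := tendsto_finsetSum S hterm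
      rw [← Finset.sum_filter] at hsum
      refine tendsto_nhds_unique hsum (tendsto_const_nhds.congr' ?_)
      filter_upwards [hev] with t ht
      rw [← Finset.mul_sum]
      have h0 := hz _ ht
      rw [← Finset.sum_filter_of_ne (p := fun i => b i ≠ 0)
        (fun i _ h => left_ne_zero_of_mul h)] at h0
      rw [h0, mul_zero]

end ConeIndependence

/-! ### Cones, weights and evaluation -/

theorem mem_closedCone {k m : ℕ} (v : Fin m → (Fin k → ℝ)) (a : Fin m) :
    v a ∈ closedCone v :=
  ⟨Pi.single a 1, fun i => by by_cases h : i = a <;> simp [h],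
    by simp [Pi.single_apply]⟩

theorem span_closedCone {k m : ℕ} (v : Fin m → (Fin k → ℝ)) :
    Submodule.span ℝ (closedCone v) = Submodule.span ℝ (Set.range v) := by
  apply le_antisymm
  · rw [Submodule.span_le]
    rintro x ⟨a, -, rfl⟩
    exact Submodule.sum_mem _ fun i _ =>
      Submodule.smul_mem _ _ (Submodule.subset_span ⟨i, rfl⟩)
  · apply Submodule.span_mono
    rintro _ ⟨a, rfl⟩
    exact mem_closedCone v a

/-- A face containing a relative interior point of a cone is the whole cone. -/
theorem eq_of_isFace_of_pos {k m : ℕ} {v : Fin m → (Fin k → ℝ)} {D : Set (Fin k → ℝ)}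
    (hf : IsFace (closedCone v) D) {c : Fin m → ℝ} (hc : ∀ a, 0 < c a)
    (hx : ∑ a, c a • v a ∈ D) : D = closedCone v := by
  obtain ⟨f, hf0, rfl⟩ := hf
  have hfx : f (∑ a, c a • v a) = 0 := hx.2
  simp only [map_sum, map_smul, smul_eq_mul] at hfx
  have hnn : ∀ a, 0 ≤ f (v a) := fun a => hf0 _ (mem_closedCone v a)
  rw [Finset.sum_eq_zero_iff_of_nonneg (fun a _ => mul_nonneg (hc a).le (hnn a))] at hfx
  refine Set.inter_eq_left.2 ?_
  rintro x ⟨a, -, rfl⟩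
  simp only [Set.mem_ofPred_eq, map_sum, map_smul, smul_eq_mul]
  refine Finset.sum_eq_zero fun i hi => ?_
  rcases mul_eq_zero.1 (hfx i hi) with h | h
  · exact absurd h (hc i).ne'
  · rw [h, mul_zero]

/-- Linearly independent columns have a nonvanishing maximal minor: the row space has dimension
`k`, so some `k` rows are linearly independent. -/
theorem wWeight_ne_zero {n k : ℕ} {v : Fin k → (Fin n → ℝ)} (hv : LinearIndependent ℝ v) :
    wWeight v ≠ 0 := by
  classical
  have hr : Module.finrank ℝ (Submodule.span ℝ (Set.range fun j : Fin n => fun a => v a j)) = k := by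
    have h1 := LinearIndependent.rank_matrix (M := Matrix.of v) hv
    rw [← Matrix.rank_transpose, Matrix.rank_eq_finrank_span_row, Fintype.card_fin] at h1
    exact h1
  obtain ⟨κ, e, he, hspan, hli⟩ := exists_linearIndependent' ℝ fun j : Fin n => fun a => v a j
  have : Finite κ := Finite.of_injective e he
  have : Fintype κ := Fintype.ofFinite κ
  have hcard : Fintype.card κ = k := by
    rw [linearIndependent_iff_card_eq_finrank_span.1 hli, Set.finrank, hspan, hr]
  have hT : (Finset.univ.image e).card = k := by
    rw [Finset.card_image_of_injective _ he, Finset.card_univ, hcard]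
  set T := Finset.univ.image e with hTdef
  have hmem : ∀ i : Fin k, ∃ q : κ, e q = (T.orderIsoOfFin hT i : Fin n) := by
    intro i
    obtain ⟨q, -, hq⟩ := Finset.mem_image.1 (T.orderIsoOfFin hT i).2
    exact ⟨q, hq⟩
  choose q hq using hmem
  have hqinj : Function.Injective q := by
    intro i j hij
    have : (T.orderIsoOfFin hT i : Fin n) = T.orderIsoOfFin hT j := by rw [← hq, ← hq, hij]
    exact (T.orderIsoOfFin hT).injective (Subtype.ext this)
  have hrows := hli.comp q hqinj
  have hdet : (Matrix.of fun i j : Fin k => v j ((T.orderIsoOfFin hT i : Fin n))).det ≠ 0 := by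
    have hu : IsUnit (Matrix.of fun i j : Fin k => v j ((T.orderIsoOfFin hT i : Fin n))) := by
      rw [← Matrix.linearIndependent_rows_iff_isUnit]
      have e : (Matrix.of fun i j : Fin k => v j ((T.orderIsoOfFin hT i : Fin n))).row =
          ((fun j : Fin n => fun a => v a j) ∘ e) ∘ q := by
        funext i a
        simp [Matrix.row, hq]
      rw [e]
      exact hrows
    exact ((Matrix.isUnit_iff_isUnit_det _).1 hu).ne_zero
  refine (Finset.sum_pos' (fun S _ => ?_) ⟨T, Finset.mem_univ _, ?_⟩).ne'
  · split_ifs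
    exacts [abs_nonneg _, le_rfl]
  · rw [dif_pos hT]
    exact abs_pos.2 hdet

/-- The polynomial underlying `Lform`. -/
def linPoly {n : ℕ} (v : Fin n → ℝ) : MvPolynomial (Fin n) ℝ :=
  ∑ j, MvPolynomial.C (v j) * MvPolynomial.X j

theorem eval_linPoly {n : ℕ} (v : Fin n → ℝ) (z : EuclideanSpace ℝ (Fin n)) :
    MvPolynomial.eval z (linPoly v) = inner ℝ (WithLp.toLp 2 v) z := by
  simp [linPoly, PiLp.inner_apply, mul_comm]

/-- Clearing denominators, a linear relation between the `Phi (u i)` in the field of rational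
functions holds pointwise wherever no denominator vanishes. -/
theorem sum_eval_eq_zero {n k r : ℕ} (u : Fin r → Fin k → (Fin n → ℝ)) (a : Fin r → ℝ)
    (h : (∑ i, algebraMap (MvPolynomial (Fin n) ℝ) (RatFun n) (MvPolynomial.C (a i)) *
        Phi (u i)) = 0) (z : EuclideanSpace ℝ (Fin n))
    (hz : ∀ i b, inner ℝ (WithLp.toLp 2 (u i b)) z ≠ 0) :
    ∑ i, a i * wWeight (u i) * ∏ b, (inner ℝ (WithLp.toLp 2 (u i b)) z)⁻¹ = 0 := by
  classical
  set D : Fin r → MvPolynomial (Fin n) ℝ := fun i => ∏ b, linPoly (u i b) with hD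
  have hev : ∀ i, MvPolynomial.eval z (D i) = ∏ b, inner ℝ (WithLp.toLp 2 (u i b)) z := by
    intro i; rw [hD]; simp only [map_prod, eval_linPoly]
  have hev0 : ∀ i, MvPolynomial.eval z (D i) ≠ 0 := fun i => by
    rw [hev]; exact Finset.prod_ne_zero_iff.2 fun b _ => hz i b
  have hD0 : ∀ i, algebraMap _ (RatFun n) (D i) ≠ 0 := fun i => by
    have : D i ≠ 0 := fun h0 => hev0 i (by rw [h0, map_zero])
    simpa using this
  have hpoly : ∑ i, MvPolynomial.C (a i * wWeight (u i)) * ∏ j ∈ Finset.univ.erase i, D j = 0 := by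
    apply IsFractionRing.injective (MvPolynomial (Fin n) ℝ) (RatFun n)
    rw [map_zero, map_sum]
    have h2 := congrArg (· * ∏ j, algebraMap _ (RatFun n) (D j)) h
    simp only [zero_mul, Finset.sum_mul] at h2
    rw [← h2]
    refine Finset.sum_congr rfl fun i _ => ?_
    have e : ∏ b, Lform (u i b) = algebraMap _ (RatFun n) (D i) := by
      rw [hD]; simp only [map_prod]; rfl
    rw [Phi, e, ← Finset.mul_prod_erase _ _ (Finset.mem_univ i), map_mul, map_mul, map_mul,
      map_prod]
    have := hD0 i
    field_simp
  have h3 := congrArg (MvPolynomial.eval z) hpoly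
  simp only [map_sum, map_mul, map_prod, MvPolynomial.eval_C, map_zero] at h3
  have h4 := congrArg (· * (∏ j, MvPolynomial.eval z (D j))⁻¹) h3
  simp only [zero_mul, Finset.sum_mul] at h4
  rw [← h4]
  refine Finset.sum_congr rfl fun i _ => ?_
  rw [← Finset.mul_prod_erase _ _ (Finset.mem_univ i), Finset.prod_inv_distrib, ← hev]
  have h5 : ∏ j ∈ Finset.univ.erase i, MvPolynomial.eval z (D j) ≠ 0 :=
    Finset.prod_ne_zero_iff.2 fun j _ => hev0 j
  have h6 := hev0 i
  beta_reduce
  field_simp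


/-- pairwise distinct simplicial closed cones in `ℝ^n_{≥0}`, spanned by
linearly independent vectors of `𝔽^n_{≥0}`, all spanning the same linear subspace and
pairwise intersecting along common faces, have `𝔽`-linearly independent images
`Φ(C₁), …, Φ(C_r)` in the field of rational functions. -/
theorem statement11 (F : Subfield ℝ) (n r : ℕ) (d : Fin r → ℕ)
    (u : ∀ i, Fin (d i) → (Fin n → ℝ))
    (huF : ∀ i a j, u i a j ∈ F) (hupos : ∀ i a j, 0 ≤ u i a j)
    (hu : ∀ i, LinearIndependent ℝ (u i))
    (hspan : ∀ i j,
      Submodule.span ℝ (closedCone (u i)) = Submodule.span ℝ (closedCone (u j)))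
    (hdist : ∀ i j, i ≠ j → closedCone (u i) ≠ closedCone (u j))
    (hface : ∀ i j, i ≠ j →
      IsFace (closedCone (u i)) (closedCone (u i) ∩ closedCone (u j)) ∧
      IsFace (closedCone (u j)) (closedCone (u i) ∩ closedCone (u j))) :
    ∀ a : Fin r → ℝ, (∀ i, a i ∈ F) →
      (∑ i, algebraMap (MvPolynomial (Fin n) ℝ) (RatFun n) (MvPolynomial.C (a i)) *
        Phi (u i)) = 0 → ∀ i, a i = 0 := by
  classical
  intro a _ hsum
  rcases Nat.eq_zero_or_pos r with rfl | hr
  · exact fun i => i.elim0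
  have hd : ∀ i, Module.finrank ℝ (Submodule.span ℝ (closedCone (u i))) = d i := fun i => by
    rw [span_closedCone, finrank_span_eq_card (hu i), Fintype.card_fin]
  obtain ⟨k, hk⟩ : ∃ k, d = fun _ => k :=
    ⟨d ⟨0, hr⟩, funext fun i => by rw [← hd i, ← hd ⟨0, hr⟩, hspan i ⟨0, hr⟩]⟩
  subst hk
  set φ : (Fin n → ℝ) ≃ₗ[ℝ] EuclideanSpace ℝ (Fin n) :=
    (WithLp.linearEquiv 2 ℝ (Fin n → ℝ)).symm with hφ
  have hφa : ∀ x, φ x = WithLp.toLp 2 x := fun x => rfl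
  have hne : ∀ i b, u i b ≠ 0 := fun i b => (hu i).ne_zero b
  have key := cone_independence k (Finset.univ : Finset (Fin r)) (fun i b => φ (u i b))
    (Finset.univ.image fun q : Fin r × Fin k => φ (u q.1 q.2))
    ((∑ j, LinearMap.proj j : (Fin n → ℝ) →ₗ[ℝ] ℝ) ∘ₗ φ.symm.toLinearMap)
    (fun i => a i * wWeight (u i)) ?_ ?_ ?_ ?_ ?_ ?_
  · intro i
    exact (mul_eq_zero.1 (key i (Finset.mem_univ i))).resolve_right (wWeight_ne_zero (hu i))
  · intro i _
    exact (hu i).map' φ.toLinearMap φ.ker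
  · intro i _ b
    simp only [LinearMap.comp_apply, LinearEquiv.coe_coe, LinearEquiv.symm_apply_apply,
      LinearMap.sum_apply, LinearMap.proj_apply]
    obtain ⟨j, hj⟩ := Function.ne_iff.1 (hne i b)
    exact Finset.sum_pos' (fun j _ => hupos i b j)
      ⟨j, Finset.mem_univ j, lt_of_le_of_ne (hupos i b j) (Ne.symm hj)⟩
  · intro i _ j _ hij c e hc he heq
    have heq' : ∑ b, c b • u i b = ∑ b, e b • u j b := by
      apply φ.injective
      simpa only [map_sum, map_smul] using heq
    have hmem : ∑ b, c b • u i b ∈ closedCone (u i) ∩ closedCone (u j) :=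
      ⟨⟨c, fun b => (hc b).le, rfl⟩, ⟨e, fun b => (he b).le, heq'⟩⟩
    exact hdist i j hij ((eq_of_isFace_of_pos (hface i j hij).1 hc hmem).symm.trans
      (eq_of_isFace_of_pos (hface i j hij).2 he (heq' ▸ hmem)))
  · intro g hg
    obtain ⟨q, -, rfl⟩ := Finset.mem_image.1 hg
    exact fun h => hne q.1 q.2 (φ.map_eq_zero_iff.1 h)
  · intro i _ b
    exact Finset.mem_image.2 ⟨(i, b), Finset.mem_univ _, rfl⟩
  · intro z hz
    exact sum_eval_eq_zero u a hsum z fun i b =>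
      hz _ (Finset.mem_image.2 ⟨(i, b), Finset.mem_univ _, rfl⟩)
end
end

section
/- Let 𝔽 be a subfield of ℝ, let L_1, …, L_k be nonzero linear forms in the variables z_1, …, z_n with coefficients in 𝔽, and let s_1, …, s_k ≥ 1 be integers. Then in 𝔽(z_1, …, z_n): (1) the fraction 1/(L_1^{s_1} ⋯ L_k^{s_k}) is an 𝔽-linear combination of pure fractions, i.e. of fractions of the form 1/(M_1^{t_1} ⋯ M_m^{t_m}) with M_1, …, M_m linearly independent linear forms with coefficients in 𝔽 and integers t_j ≥ 1; (2) if moreover every L_i has nonnegative coefficients, then this linear combination can be chosen with all coefficients positive and with every linear form M_j having nonnegative coefficients. -/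
/-!
A product `1/(L₁^{s₁} ⋯ L_k^{s_k})` is encoded as a multiset `m` of vectors (`recipProd m`), whose
support is the set of distinct forms occurring; the proof is by induction on the size of this
support.

If the support is linearly dependent, there are disjoint subsets `A`, `B` of it and coefficients
with `∑_{v ∈ A} c_v v = ∑_{v ∈ B} c_v v = M ≠ 0`. Multiplying by `M / M` and expanding the numerator
over `A` (`recipProd_step`) gives
`1/∏ m = ∑_{v ∈ A} c_v · 1/(M · ∏ (m - v))`.
Repeating this, keeping the copies of `M` apart from what is left of `m`, eventually exhausts some
form of `A`, and in the same way some form of `B`. Two forms have then disappeared and only `M` has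
been added, so the support has shrunk. This is `recipProd_mem_pureCone`, stated for an arbitrary
monoid `C` of coefficients and an arbitrary set `P` of admissible forms.

The relation has coefficients in `𝔽` because an `𝔽`-linear functional on `ℝ` can be applied to any
real relation between vectors of `𝔽ⁿ` (`exists_subfield_relation`). For (1) one solves it for a
single form, so that `B` is a singleton. For (2) one takes for `A` and `B` the forms with positive
and with negative coefficient; `M` is then a nonzero form with nonnegative coefficients.
-/


open scoped BigOperators

noncomputable section

/-- The constant `c` as a rational function. -/
def constFun {n : ℕ} (c : ℝ) : RatFun n :=
  algebraMap (MvPolynomial (Fin n) ℝ) (RatFun n) (MvPolynomial.C c)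

/-- The fraction `1/∏ L_v`, the product running over the multiset `m` of vectors `v`. -/
def recipProd {n : ℕ} (m : Multiset (Fin n → ℝ)) : RatFun n :=
  (m.map Lform).prod⁻¹

/-- Sums of terms `c · 1/(M₁^{t₁} ⋯ M_m^{t_m})` with `c ∈ C` and linearly independent
`M₁, …, M_m ∈ P`. The `M_j` are the distinct elements of a multiset and the `t_j` are their
multiplicities, so that `t_j ≥ 1` is automatic. -/
def pureCone {n : ℕ} (C : Submonoid ℝ) (P : Set (Fin n → ℝ)) : AddSubmonoid (RatFun n) :=
  AddSubmonoid.closure {x | ∃ c ∈ C, ∃ m : Multiset (Fin n → ℝ), (∀ v ∈ m, v ∈ P) ∧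
    LinearIndepOn ℝ id {v | v ∈ m} ∧ x = constFun c * recipProd m}

lemma Lform_add {n : ℕ} (v w : Fin n → ℝ) : Lform (v + w) = Lform v + Lform w := by
  simp [Lform, add_mul, Finset.sum_add_distrib]

lemma Lform_smul {n : ℕ} (c : ℝ) (v : Fin n → ℝ) : Lform (c • v) = constFun c * Lform v := by
  rw [Lform, Lform, constFun, ← map_mul, Finset.mul_sum]
  congr 1
  refine Finset.sum_congr rfl fun j _ => ?_
  simp [mul_assoc]

lemma Lform_sum {n : ℕ} (A : Finset (Fin n → ℝ)) (c : (Fin n → ℝ) → ℝ) :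
    Lform (∑ v ∈ A, c v • v) = ∑ v ∈ A, constFun (c v) * Lform v := by
  classical
  induction A using Finset.induction_on with
  | empty => simp [Lform]
  | insert a A ha ih => rw [Finset.sum_insert ha, Finset.sum_insert ha, Lform_add, ih, Lform_smul]

lemma Lform_ne_zero {n : ℕ} {v : Fin n → ℝ} (hv : v ≠ 0) : Lform v ≠ 0 := by
  intro h
  apply hv
  rw [Lform, FaithfulSMul.algebraMap_eq_zero_iff] at h
  ext j
  -- evaluation at the `j`-th unit vector reads off the `j`-th coefficient
  have := congrArg (MvPolynomial.eval (Pi.single j (1 : ℝ))) h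
  simpa [Pi.single_apply] using this

lemma recipProd_add {n : ℕ} (m m' : Multiset (Fin n → ℝ)) :
    recipProd (m + m') = recipProd m * recipProd m' := by
  simp [recipProd, mul_comm]

lemma recipProd_cons {n : ℕ} (v : Fin n → ℝ) (m : Multiset (Fin n → ℝ)) :
    recipProd (v ::ₘ m) = (Lform v)⁻¹ * recipProd m := by
  simp [recipProd, mul_comm]

open Classical in
/-- Multiplication by `M / M`, where `M = ∑_{v ∈ A} c_v v`, trades one factor of `m` from `A` for a
factor `M`. -/
lemma recipProd_step {n : ℕ} (A : Finset (Fin n → ℝ)) (c : (Fin n → ℝ) → ℝ) (M : Fin n → ℝ)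
    (hM : ∑ v ∈ A, c v • v = M) (hM0 : M ≠ 0) (hA0 : ∀ v ∈ A, v ≠ 0)
    (q m : Multiset (Fin n → ℝ)) (hAm : ∀ v ∈ A, v ∈ m) :
    recipProd (q + m) = ∑ v ∈ A, constFun (c v) * recipProd ((M ::ₘ q) + m.erase v) := by
  have h : ∀ v ∈ A, constFun (c v) * recipProd ((M ::ₘ q) + m.erase v)
      = (constFun (c v) * Lform v) * ((Lform M)⁻¹ * recipProd (q + m)) := by
    intro v hv
    have h1 : recipProd m = (Lform v)⁻¹ * recipProd (m.erase v) := by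
      rw [← recipProd_cons, Multiset.cons_erase (hAm v hv)]
    have := Lform_ne_zero (hA0 v hv)
    rw [recipProd_add, recipProd_cons, recipProd_add, h1]
    field_simp
  rw [Finset.sum_congr rfl h, ← Finset.sum_mul, ← Lform_sum, hM, ← mul_assoc,
    mul_inv_cancel₀ (Lform_ne_zero hM0), one_mul]

lemma constFun_mul_mem {n : ℕ} {C : Submonoid ℝ} {P : Set (Fin n → ℝ)} {c : ℝ} (hc : c ∈ C)
    {x : RatFun n} (hx : x ∈ pureCone C P) : constFun c * x ∈ pureCone C P := by
  unfold pureCone at hx ⊢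
  induction hx using AddSubmonoid.closure_induction with
  | mem x hx =>
    obtain ⟨d, hd, m, hm, hi, rfl⟩ := hx
    refine AddSubmonoid.subset_closure ⟨c * d, C.mul_mem hc hd, m, hm, hi, ?_⟩
    simp [constFun, mul_assoc]
  | zero => simp
  | add x y _ _ hx hy => rw [mul_add]; exact add_mem hx hy

/-- The reduction to pure fractions. It needs only that every dependent finite set of admissible
forms has two disjoint subsets with a common `C`-combination that is again admissible. -/
theorem recipProd_mem_pureCone {n : ℕ} (C : Submonoid ℝ) (P : Set (Fin n → ℝ))
    (h0 : ∀ v ∈ P, v ≠ 0)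
    (H : ∀ S : Finset (Fin n → ℝ), (∀ v ∈ S, v ∈ P) → ¬ LinearIndepOn ℝ id (S : Set (Fin n → ℝ)) →
      ∃ A ⊆ S, ∃ B ⊆ S, Disjoint A B ∧ ∃ c : (Fin n → ℝ) → ℝ, (∀ v ∈ A, c v ∈ C) ∧
        (∀ v ∈ B, c v ∈ C) ∧ ∑ v ∈ A, c v • v = ∑ v ∈ B, c v • v ∧ ∑ v ∈ A, c v • v ∈ P)
    (m : Multiset (Fin n → ℝ)) (hm : ∀ v ∈ m, v ∈ P) : recipProd m ∈ pureCone C P := by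
  classical
  induction hk : m.toFinset.card using Nat.strong_induction_on generalizing m with
  | _ k ih =>
  by_cases hi : LinearIndepOn ℝ id (m.toFinset : Set (Fin n → ℝ))
  · refine AddSubmonoid.subset_closure ⟨1, C.one_mem, m, hm, ?_, by simp [constFun]⟩
    convert hi using 1
    ext v
    simp
  obtain ⟨A, hA, B, hB, hAB, c, hcA, hcB, hsum, hMP⟩ :=
    H m.toFinset (fun v hv => hm v (Multiset.mem_toFinset.1 hv)) hi
  obtain ⟨M, hM⟩ : ∃ M, ∑ v ∈ A, c v • v = M := ⟨_, rfl⟩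
  rw [hM] at hMP
  have hMB : ∑ v ∈ B, c v • v = M := by rw [← hsum, hM]
  -- `m'` is what remains of `m`, apart from the `p` copies of `M` produced so far
  have key : ∀ (N p : ℕ) (m' : Multiset (Fin n → ℝ)), m'.card = N → (∀ v ∈ m', v ∈ m) →
      recipProd (Multiset.replicate p M + m') ∈ pureCone C P := by
    intro N
    induction N with
    | zero =>
      intro p m' hc' hm'
      obtain rfl := Multiset.card_eq_zero.1 hc'
      have hli : LinearIndepOn ℝ id {v | v ∈ Multiset.replicate p M} := by
        have h1 : LinearIndepOn ℝ id {M} := LinearIndepOn.singleton (h0 M hMP)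
        exact h1.mono fun v hv => Multiset.eq_of_mem_replicate hv
      refine AddSubmonoid.subset_closure ⟨1, C.one_mem, Multiset.replicate p M, ?_, hli,
        by simp [constFun]⟩
      intro v hv
      rw [Multiset.eq_of_mem_replicate hv]
      exact hMP
    | succ N ihN =>
      intro p m' hc' hm'
      have hstep : ∀ D : Finset (Fin n → ℝ), D ⊆ m.toFinset → (∀ v ∈ D, c v ∈ C) →
          ∑ v ∈ D, c v • v = M → (∀ v ∈ D, v ∈ m') →
          recipProd (Multiset.replicate p M + m') ∈ pureCone C P := by
        intro D hD hcD hDM hDm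
        rw [recipProd_step D c M hDM (h0 M hMP)
          (fun v hv => h0 v (hm v (Multiset.mem_toFinset.1 (hD hv)))) _ m' hDm]
        refine sum_mem fun v hv => constFun_mul_mem (hcD v hv) ?_
        rw [← Multiset.replicate_succ]
        refine ihN (p + 1) _ ?_ fun w hw => hm' w (Multiset.mem_of_mem_erase hw)
        rw [Multiset.card_erase_of_mem (hDm v hv), hc']
        rfl
      by_cases hAm : ∀ v ∈ A, v ∈ m'
      · exact hstep A hA hcA hM hAm
      by_cases hBm : ∀ v ∈ B, v ∈ m'
      · exact hstep B hB hcB hMB hBm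
      push Not at hAm hBm
      obtain ⟨a, ha, ham⟩ := hAm
      obtain ⟨b, hb, hbm⟩ := hBm
      have hab : a ≠ b := fun h => Finset.disjoint_left.1 hAB ha (h ▸ hb)
      refine ih _ ?_ (Multiset.replicate p M + m') ?_ rfl
      · have hsub : (Multiset.replicate p M + m').toFinset ⊆
            insert M ((m.toFinset.erase a).erase b) := by
          intro v hv
          rw [Multiset.mem_toFinset, Multiset.mem_add] at hv
          rcases hv with hv | hv
          · rw [Multiset.eq_of_mem_replicate hv]
            exact Finset.mem_insert_self _ _
          · refine Finset.mem_insert_of_mem ?_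
            simp only [Finset.mem_erase, Multiset.mem_toFinset]
            exact ⟨fun h => hbm (h ▸ hv), fun h => ham (h ▸ hv), hm' v hv⟩
        have h1 := Finset.card_le_card hsub
        have h2 := Finset.card_insert_le M ((m.toFinset.erase a).erase b)
        have h3 := Finset.card_erase_add_one (hA ha)
        have h4 := Finset.card_erase_add_one (Finset.mem_erase.2 ⟨hab.symm, hB hb⟩)
        omega
      · intro v hv
        rw [Multiset.mem_add] at hv
        rcases hv with hv | hv
        · rw [Multiset.eq_of_mem_replicate hv]
          exact hMP
        · exact hm v (hm' v hv)
  simpa using key _ 0 m rfl fun v hv => hv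

/-- A linear dependence over `ℝ` between vectors of `𝔽ⁿ` descends to one over `𝔽`: apply to its
coefficients an `𝔽`-linear functional `ℝ → 𝔽` that does not vanish on a chosen nonzero one. -/
lemma exists_subfield_relation {n : ℕ} (F : Subfield ℝ) (S : Finset (Fin n → ℝ))
    (hS : ∀ v ∈ S, ∀ j, v j ∈ F) (hd : ¬ LinearIndepOn ℝ id (S : Set (Fin n → ℝ))) :
    ∃ g : (Fin n → ℝ) → ℝ, (∀ v, g v ∈ F) ∧ ∑ v ∈ S, g v • v = 0 ∧ ∃ v ∈ S, g v ≠ 0 := by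
  rw [linearIndepOn_finset_iff] at hd
  push Not at hd
  obtain ⟨f, hf, v₀, hv₀, hfv⟩ := hd
  obtain ⟨φ, hφ⟩ : ∃ φ : Module.Dual F ℝ, φ (f v₀) ≠ 0 := by
    by_contra! h
    exact hfv ((Module.forall_dual_apply_eq_zero_iff F (f v₀)).1 h)
  refine ⟨fun v => φ (f v), fun v => (φ (f v)).2, ?_, v₀, hv₀, fun h => hφ (Subtype.ext h)⟩
  ext j
  have h1 : ∑ v ∈ S, f v * v j = 0 := by
    simpa using congrFun hf j
  have h2 : ∀ v ∈ S, ((φ (f v) : F) : ℝ) * v j = ((φ (f v * v j) : F) : ℝ) := by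
    intro v hv
    have : f v * v j = (⟨v j, hS v hv j⟩ : F) • f v := by
      rw [mul_comm]
      rfl
    rw [this, map_smul, mul_comm]
    rfl
  have h3 := congrArg (fun x => ((φ x : F) : ℝ)) h1
  simp only [map_sum, map_zero] at h3
  simp only [Finset.sum_apply, Pi.smul_apply, smul_eq_mul, Pi.zero_apply]
  rw [Finset.sum_congr rfl h2]
  simpa using h3

lemma recipProd_eq_count {n : ℕ} (m : Multiset (Fin n → ℝ)) :
    ∃ (k : ℕ) (M : Fin k → (Fin n → ℝ)) (t : Fin k → ℕ), Function.Injective M ∧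
      (∀ a, M a ∈ m) ∧ (∀ a, 1 ≤ t a) ∧ recipProd m = 1 / ∏ a, (Lform (M a)) ^ (t a) := by
  classical
  let e := m.toFinset.equivFin
  refine ⟨m.toFinset.card, fun a => (e.symm a : Fin n → ℝ), fun a => m.count (e.symm a : Fin n → ℝ),
    fun a b h => e.symm.injective (Subtype.ext h), fun a => Multiset.mem_toFinset.1 (e.symm a).2,
    fun a => Multiset.one_le_count_iff_mem.2 (Multiset.mem_toFinset.1 (e.symm a).2), ?_⟩
  rw [recipProd, Finset.prod_multiset_map_count, one_div]
  congr 1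
  rw [Equiv.prod_comp e.symm (fun v : m.toFinset => Lform (v : Fin n → ℝ) ^ m.count (v : Fin n → ℝ)),
    Finset.prod_coe_sort m.toFinset (fun v => Lform v ^ m.count v)]

/-- Membership in `pureCone`, written out with families indexed by `Fin`. -/
lemma exists_of_mem_pureCone {n : ℕ} {C : Submonoid ℝ} {P : Set (Fin n → ℝ)} {x : RatFun n}
    (hx : x ∈ pureCone C P) :
    ∃ (r : ℕ) (c : Fin r → ℝ) (mm : Fin r → ℕ) (M : ∀ i, Fin (mm i) → (Fin n → ℝ))
        (t : ∀ i, Fin (mm i) → ℕ),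
      (∀ i, c i ∈ C) ∧ (∀ i a, M i a ∈ P) ∧ (∀ i, LinearIndependent ℝ (M i)) ∧
      (∀ i a, 1 ≤ t i a) ∧
      x = ∑ i, algebraMap (MvPolynomial (Fin n) ℝ) (RatFun n) (MvPolynomial.C (c i)) *
          ((1 : RatFun n) / ∏ a, (Lform (M i a)) ^ (t i a)) := by
  obtain ⟨l, hl, rfl⟩ := AddSubmonoid.exists_list_of_mem_closure hx
  have h : ∀ i : Fin l.length, ∃ (c : ℝ) (k : ℕ) (M : Fin k → (Fin n → ℝ)) (t : Fin k → ℕ),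
      c ∈ C ∧ (∀ a, M a ∈ P) ∧ LinearIndependent ℝ M ∧ (∀ a, 1 ≤ t a) ∧
      l.get i = algebraMap (MvPolynomial (Fin n) ℝ) (RatFun n) (MvPolynomial.C c) *
          ((1 : RatFun n) / ∏ a, (Lform (M a)) ^ (t a)) := by
    intro i
    obtain ⟨c, hc, m, hm, hi, he⟩ := hl (l.get i) (List.get_mem l i)
    obtain ⟨k, M, t, hinj, hMm, ht, hr⟩ := recipProd_eq_count m
    refine ⟨c, k, M, t, hc, fun a => hm _ (hMm a), ?_, ht, by rw [he, hr]; rfl⟩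
    exact hi.comp (fun a => (⟨M a, hMm a⟩ : {v | v ∈ m}))
      fun a b hab => hinj (congrArg Subtype.val hab)
  choose c k M t hc hM hi ht he using h
  refine ⟨l.length, c, k, M, t, hc, hM, hi, ht, ?_⟩
  rw [← Finset.sum_congr rfl fun i _ => he i]
  simp

lemma recipProd_of_family {n k : ℕ} (L : Fin k → (Fin n → ℝ)) (s : Fin k → ℕ) :
    recipProd (∑ i, Multiset.replicate (s i) (L i)) = 1 / ∏ i, (Lform (L i)) ^ (s i) := by
  rw [recipProd, one_div, ← Multiset.coe_mapAddMonoidHom, map_sum, Multiset.prod_sum]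
  simp

/-- (1) every fraction `1/(L₁^{s₁} ⋯ L_k^{s_k})` with `L_i` nonzero
linear forms with coefficients in a subfield `𝔽` of `ℝ` is an `𝔽`-linear combination of
pure fractions `1/(M₁^{t₁} ⋯ M_m^{t_m})` (`M_j` linearly independent `𝔽`-linear forms,
`t_j ≥ 1`); (2) if all `L_i` have nonnegative coefficients, the combination can be
chosen with positive coefficients and all `M_j` with nonnegative coefficients. -/
theorem statement17 (F : Subfield ℝ) (n k : ℕ) (L : Fin k → (Fin n → ℝ))
    (hF : ∀ i j, L i j ∈ F) (hL0 : ∀ i, L i ≠ 0) (s : Fin k → ℕ) (hs : ∀ i, 1 ≤ s i) :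
    (∃ (r : ℕ) (c : Fin r → ℝ) (mm : Fin r → ℕ) (M : ∀ i, Fin (mm i) → (Fin n → ℝ))
        (t : ∀ i, Fin (mm i) → ℕ),
      (∀ i, c i ∈ F) ∧ (∀ i a j, M i a j ∈ F) ∧ (∀ i, LinearIndependent ℝ (M i)) ∧
      (∀ i a, 1 ≤ t i a) ∧
      (1 : RatFun n) / ∏ i, (Lform (L i)) ^ (s i) =
        ∑ i, algebraMap (MvPolynomial (Fin n) ℝ) (RatFun n) (MvPolynomial.C (c i)) *
          ((1 : RatFun n) / ∏ a, (Lform (M i a)) ^ (t i a))) ∧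
    ((∀ i j, 0 ≤ L i j) →
      ∃ (r : ℕ) (c : Fin r → ℝ) (mm : Fin r → ℕ) (M : ∀ i, Fin (mm i) → (Fin n → ℝ))
          (t : ∀ i, Fin (mm i) → ℕ),
        (∀ i, c i ∈ F) ∧ (∀ i, 0 < c i) ∧ (∀ i a j, M i a j ∈ F) ∧
        (∀ i a j, 0 ≤ M i a j) ∧ (∀ i, LinearIndependent ℝ (M i)) ∧
        (∀ i a, 1 ≤ t i a) ∧
        (1 : RatFun n) / ∏ i, (Lform (L i)) ^ (s i) =
          ∑ i, algebraMap (MvPolynomial (Fin n) ℝ) (RatFun n) (MvPolynomial.C (c i)) *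
            ((1 : RatFun n) / ∏ a, (Lform (M i a)) ^ (t i a))) := by
  have hmem : ∀ v ∈ ∑ i, Multiset.replicate (s i) (L i), ∃ i, v = L i := by
    intro v hv
    obtain ⟨i, _, hi⟩ := Multiset.mem_sum.1 hv
    exact ⟨i, Multiset.eq_of_mem_replicate hi⟩
  constructor
  · have hx : recipProd (∑ i, Multiset.replicate (s i) (L i)) ∈
        pureCone F.toSubmonoid {v : Fin n → ℝ | v ≠ 0 ∧ ∀ j, v j ∈ F} := by
      classical
      refine recipProd_mem_pureCone _ _ (fun v hv => hv.1) ?_ _ ?_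
      · intro S hS hd
        obtain ⟨g, hgF, hg, v₀, hv₀, hgv⟩ :=
          exists_subfield_relation F S (fun v hv => (hS v hv).2) hd
        have hM : ∑ v ∈ S.erase v₀, (if v = v₀ then 1 else -(g v / g v₀)) • v = v₀ := by
          rw [← Finset.add_sum_erase S _ hv₀, add_comm] at hg
          have h1 : ∑ v ∈ S.erase v₀, (if v = v₀ then 1 else -(g v / g v₀)) • v
              = (-(g v₀)⁻¹) • ∑ v ∈ S.erase v₀, g v • v := by
            rw [Finset.smul_sum]
            refine Finset.sum_congr rfl fun v hv => ?_
            rw [if_neg (Finset.ne_of_mem_erase hv), smul_smul]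
            congr 1
            ring
          rw [h1, eq_neg_of_add_eq_zero_left hg, smul_neg, neg_smul, neg_neg, smul_smul,
            inv_mul_cancel₀ hgv, one_smul]
        have hc : ∀ v, (if v = v₀ then 1 else -(g v / g v₀)) ∈ F := by
          intro v
          split_ifs
          · exact F.one_mem
          · exact F.neg_mem (F.div_mem (hgF v) (hgF v₀))
        refine ⟨S.erase v₀, Finset.erase_subset _ _, {v₀}, by simpa using hv₀, by simp,
          fun v => if v = v₀ then 1 else -(g v / g v₀), fun v _ => hc v, fun v _ => hc v, ?_, ?_⟩
        · rw [hM]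
          simp
        · rw [hM]
          exact hS v₀ hv₀
      · intro v hv
        obtain ⟨i, rfl⟩ := hmem v hv
        exact ⟨hL0 i, hF i⟩
    obtain ⟨r, c, mm, M, t, hc, hM, hi, ht, he⟩ := exists_of_mem_pureCone hx
    rw [recipProd_of_family] at he
    exact ⟨r, c, mm, M, t, hc, fun i a => (hM i a).2, hi, ht, he⟩
  · intro hpos
    have hx : recipProd (∑ i, Multiset.replicate (s i) (L i)) ∈
        pureCone (F.toSubmonoid ⊓ Submonoid.pos ℝ)
          {v : Fin n → ℝ | v ≠ 0 ∧ (∀ j, v j ∈ F) ∧ ∀ j, 0 ≤ v j} := by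
      classical
      refine recipProd_mem_pureCone _ _ (fun v hv => hv.1) ?_ _ ?_
      · intro S hS hd
        obtain ⟨g, hgF, hg, v₀, hv₀, hgv⟩ :=
          exists_subfield_relation F S (fun v hv => (hS v hv).2.1) hd
        have habs : ∀ v, |g v| ∈ F := by
          intro v
          rcases abs_choice (g v) with h | h <;> rw [h]
          · exact hgF v
          · exact F.neg_mem (hgF v)
        have hsum : ∑ v ∈ S with 0 < g v, |g v| • v = ∑ v ∈ S with g v < 0, |g v| • v := by
          rw [← sub_eq_zero, ← hg, Finset.sum_filter, Finset.sum_filter, ← Finset.sum_sub_distrib]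
          refine Finset.sum_congr rfl fun v _ => ?_
          rcases lt_trichotomy (g v) 0 with h | h | h
          · simp [h, h.le, abs_of_neg]
          · simp [h]
          · simp [h, h.le, abs_of_pos]
        -- a combination of nonnegative forms with positive coefficients is nonzero as soon as
        -- a form occurs in it
        have hne : ∀ D ⊆ S, v₀ ∈ D → ∑ v ∈ D, |g v| • v ≠ 0 := by
          intro D hD hvD h
          apply (hS v₀ hv₀).1
          ext j
          have h1 := congrFun h j
          simp only [Finset.sum_apply, Pi.smul_apply, smul_eq_mul, Pi.zero_apply] at h1
          rw [Finset.sum_eq_zero_iff_of_nonneg fun v hv =>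
            mul_nonneg (abs_nonneg _) ((hS v (hD hv)).2.2 j)] at h1
          exact (mul_eq_zero.1 (h1 v₀ hvD)).resolve_left (abs_ne_zero.2 hgv)
        refine ⟨S.filter (fun v => 0 < g v), Finset.filter_subset _ _,
          S.filter (fun v => g v < 0), Finset.filter_subset _ _, ?_, fun v => |g v|,
          fun v hv => ⟨habs v, abs_pos.2 (Finset.mem_filter.1 hv).2.ne'⟩,
          fun v hv => ⟨habs v, abs_pos.2 (Finset.mem_filter.1 hv).2.ne⟩, hsum, ?_, ?_, ?_⟩
        · rw [Finset.disjoint_left]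
          intro v h1 h2
          exact lt_asymm (Finset.mem_filter.1 h1).2 (Finset.mem_filter.1 h2).2
        · rcases lt_or_gt_of_ne hgv with h | h
          · rw [hsum]
            exact hne _ (Finset.filter_subset _ _) (Finset.mem_filter.2 ⟨hv₀, h⟩)
          · exact hne _ (Finset.filter_subset _ _) (Finset.mem_filter.2 ⟨hv₀, h⟩)
        · intro j
          rw [Finset.sum_apply]
          exact F.sum_mem fun v hv =>
            F.mul_mem (habs v) ((hS v (Finset.mem_filter.1 hv).1).2.1 j)
        · intro j
          rw [Finset.sum_apply]
          exact Finset.sum_nonneg fun v hv =>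
            mul_nonneg (abs_nonneg _) ((hS v (Finset.mem_filter.1 hv).1).2.2 j)
      · intro v hv
        obtain ⟨i, rfl⟩ := hmem v hv
        exact ⟨hL0 i, hF i, hpos i⟩
    obtain ⟨r, c, mm, M, t, hc, hM, hi, ht, he⟩ := exists_of_mem_pureCone hx
    rw [recipProd_of_family] at he
    exact ⟨r, c, mm, M, t, fun i => (hc i).1, fun i => (hc i).2, fun i a => (hM i a).2.1,
      fun i a => (hM i a).2.2, hi, ht, he⟩
end
end
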